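/- Let T be a scalar Calderón–Zygmund operator on ℝ^d with modulus of continuity ω satisfying the Dini condition, let ρ ∈ (2,∞), let ε ∈ (0,1), and suppose V_ρ(T_*) is bounded on L^q(ℝ^d) for some q ∈ (1,∞). Then for every cube Q₀ ⊂ ℝ^d and every f ∈ L^∞(ℝ^d) supported in Q₀, there exists a family F of pairwise disjoint dyadic subcubes of Q₀ such that: (i) Σ_{Q∈F} |Q| ≤ ε|Q₀|; (ii) for a.e. x ∈ Q₀, |V_ρ(T_* f)(x) − Σ_{Q∈F} V_ρ(T_*(f χ_{3Q}))(x) χ_Q(x)| ≤ C ⟨|f|⟩_{3Q₀}; and (iii) for any collection F̄ of pairwise disjoint dyadic subcubes of Q₀ that covers F, |V_ρ(T_* f)(x) − Σ_{Q∈F̄} V_ρ(T_*(f χ_{3Q}))(x) χ_Q(x)| ≤ C ⟨|f|⟩_{3Q₀} for a.e. x ∈ Q₀. Here C depends only on T, ρ, ε and d. -/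

import Mathlib

open MeasureTheory Set Filter Classical
open scoped ENNReal
noncomputable section

abbrev Rd (d : ℕ) := EuclideanSpace ℝ (Fin d)

/-- An axis-parallel (half-open) cube in `ℝ^d`, given by its center and side length. -/
structure Cube (d : ℕ) where
  c : Fin d → ℝ
  l : ℝ
  hl : 0 < l

/-- The underlying (half-open) set of a cube. -/
def Cube.set {d : ℕ} (Q : Cube d) : Set (Rd d) :=
  {y | ∀ i, Q.c i - Q.l / 2 ≤ y i ∧ y i < Q.c i + Q.l / 2}

/-- The (half-open) set `tQ`, the cube concentric with `Q` of side length `t·ℓ(Q)`. -/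
def Cube.dilate {d : ℕ} (Q : Cube d) (t : ℝ) : Set (Rd d) :=
  {y | ∀ i, Q.c i - t * Q.l / 2 ≤ y i ∧ y i < Q.c i + t * Q.l / 2}

/-- The volume `|Q| = ℓ(Q)^d` of a cube, as an extended nonnegative real. -/
def Cube.vol {d : ℕ} (Q : Cube d) : ℝ≥0∞ := ENNReal.ofReal (Q.l ^ d)

/-- `Q` is one of the dyadic subcubes of `Q₀` obtained by repeated subdivision of `Q₀`
into `2^d` congruent subcubes. -/
def IsDyadicSubcube {d : ℕ} (Q₀ Q : Cube d) : Prop :=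
  ∃ (k : ℕ) (m : Fin d → ℕ), (∀ i, m i < 2 ^ k) ∧ Q.l = Q₀.l / 2 ^ k ∧
    ∀ i, Q.c i = Q₀.c i - Q₀.l / 2 + ((m i : ℝ) + 1 / 2) * (Q₀.l / 2 ^ k)
/-- A scalar Calderón–Zygmund operator on `ℝ^d` with Dini modulus of continuity:
a linear operator `T` bounded on `L²(ℝ^d)` associated with a kernel `K` satisfying the
size condition and the `ω`-smoothness condition, where `ω` is increasing, subadditive,
vanishes at `0`, and satisfies the Dini condition `∫₀¹ ω(t) dt/t < ∞`. -/
structure CZO (d : ℕ) where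
  K : Rd d → Rd d → ℝ
  measK : Measurable (Function.uncurry K)
  ω : ℝ → ℝ
  Cst : ℝ
  hCst : 0 < Cst
  ω_mono : MonotoneOn ω (Set.Ici 0)
  ω_zero : ω 0 = 0
  ω_subadd : ∀ s t : ℝ, 0 ≤ s → 0 ≤ t → ω (s + t) ≤ ω s + ω t
  dini : IntegrableOn (fun t => ω t / t) (Set.Ioo (0 : ℝ) 1)
  size : ∀ x y : Rd d, x ≠ y → |K x y| ≤ Cst / dist x y ^ d
  smooth : ∀ x x' y : Rd d, x ≠ y → dist x x' ≤ dist x y / 2 →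
    |K x y - K x' y| + |K y x - K y x'| ≤ Cst * ω (dist x x' / dist x y) / dist x y ^ d
  T : Lp ℝ 2 (volume : Measure (Rd d)) →L[ℝ] Lp ℝ 2 (volume : Measure (Rd d))
  assoc : ∀ f : Lp ℝ 2 (volume : Measure (Rd d)),
    ∀ᵐ x ∂(volume : Measure (Rd d)), x ∉ tsupport (f : Rd d → ℝ) →
      (T f : Rd d → ℝ) x = ∫ y, K x y * f y

/-- The truncated singular integral `T_ε f(x) = ∫_{|x-y|>ε} K(x,y) f(y) dy`. -/
def CZO.trunc {d : ℕ} (S : CZO d) (ε : ℝ) (f : Rd d → ℝ) (x : Rd d) : ℝ :=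
  ∫ y in {y : Rd d | ε < dist x y}, S.K x y * f y

/-- The variation operator `V_ρ(T_* f)(x)`, with values in `[0,∞]`: the supremum over all
strictly decreasing positive sequences `ε_i → 0` of `(Σ_i |T_{ε_{i+1}}f(x) - T_{ε_i}f(x)|^ρ)^{1/ρ}`. -/
def CZO.var {d : ℕ} (S : CZO d) (ρ : ℝ) (f : Rd d → ℝ) (x : Rd d) : ℝ≥0∞ :=
  ⨆ (ε : ℕ → ℝ) (_ : StrictAnti ε ∧ (∀ i, 0 < ε i) ∧ Tendsto ε atTop (nhds 0)),
    (∑' i : ℕ, ENNReal.ofReal |S.trunc (ε (i + 1)) f x - S.trunc (ε i) f x| ^ ρ) ^ (1 / ρ)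

/-- `V_ρ(T_*)` is bounded on `L^q(ℝ^d)`. -/
def CZO.VarBdd {d : ℕ} (S : CZO d) (ρ q : ℝ) : Prop :=
  ∃ A : ℝ, 0 < A ∧ ∀ f : Rd d → ℝ, Measurable f →
    ∫⁻ x, S.var ρ f x ^ q ∂volume ≤ ENNReal.ofReal A * ∫⁻ x, ENNReal.ofReal |f x| ^ q ∂volume

/-- The weak `(1,1)` operator (quasi-)norm `‖V_ρ(T_*)‖_{L¹ → L^{1,∞}}`. -/
def CZO.weak11Norm {d : ℕ} (S : CZO d) (ρ : ℝ) : ℝ≥0∞ :=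
  sInf {A : ℝ≥0∞ | ∀ f : Rd d → ℝ, Measurable f → ∀ t : ℝ, 0 < t →
    ENNReal.ofReal t * volume {x | ENNReal.ofReal t < S.var ρ f x} ≤
      A * ∫⁻ x, ENNReal.ofReal |f x| ∂volume}

/-- The local grand maximal truncated operator `M_{V_ρ(T_*),Q₀}`. -/
def CZO.grandMaxLoc {d : ℕ} (S : CZO d) (ρ : ℝ) (Q₀ : Cube d) (f : Rd d → ℝ) (x : Rd d) : ℝ≥0∞ :=
  if x ∈ Q₀.set then
    ⨆ (Q : Cube d) (_ : x ∈ Q.set ∧ Q.set ⊆ Q₀.set),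
      essSup (fun ξ => S.var ρ ((Q₀.dilate 3 \ Q.dilate 3).indicator f) ξ)
        (volume.restrict Q.set)
  else 0

/-- The (global) grand maximal truncated operator `M_{V_ρ(T_*)}`. -/
def CZO.grandMax {d : ℕ} (S : CZO d) (ρ : ℝ) (f : Rd d → ℝ) (x : Rd d) : ℝ≥0∞ :=
  ⨆ (Q : Cube d) (_ : x ∈ Q.set),
    essSup (fun ξ => S.var ρ (((Q.dilate 3)ᶜ).indicator f) ξ) (volume.restrict Q.set)

/-- The Hardy–Littlewood maximal operator over cubes, with values in `[0,∞]`. -/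
def maxCube {d : ℕ} (f : Rd d → ℝ) (x : Rd d) : ℝ≥0∞ :=
  ⨆ (Q : Cube d) (_ : x ∈ Q.set), Q.vol⁻¹ * ∫⁻ y in Q.set, ENNReal.ofReal |f y|

/-- The average `⟨|f|⟩_{3Q} = (1/|3Q|) ∫_{3Q} |f|`. -/
def avg3 {d : ℕ} (Q : Cube d) (f : Rd d → ℝ) : ℝ :=
  (∫ y in Q.dilate 3, |f y|) / (3 * Q.l) ^ d
/-- The Euclidean norm of a vector in `ℝ^n`. -/
def enorm' {n : ℕ} (v : Fin n → ℝ) : ℝ := Real.sqrt (∑ i, v i ^ 2)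

/-- The operator norm (with respect to Euclidean norms) of an `n × n` real matrix. -/
def matOpNorm {n : ℕ} (A : Matrix (Fin n) (Fin n) ℝ) : ℝ :=
  sSup ((fun v => enorm' (A.mulVec v)) '' {v | enorm' v ≤ 1})

/-- The spectral power `A^s` of a symmetric matrix `A = U D Uᵗ`, defined as `U D^s Uᵗ`
(junk value `A` if `A` is not symmetric). -/
def Matrix.rpowH {n : ℕ} (A : Matrix (Fin n) (Fin n) ℝ) (s : ℝ) : Matrix (Fin n) (Fin n) ℝ :=
  if h : A.IsHermitian then
    (h.eigenvectorUnitary : Matrix (Fin n) (Fin n) ℝ) *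
      Matrix.diagonal (fun i => h.eigenvalues i ^ s) *
      star (h.eigenvectorUnitary : Matrix (Fin n) (Fin n) ℝ)
  else A

/-- A matrix weight on `ℝ^d`: a measurable function with a.e. symmetric positive definite
values whose operator norm is locally integrable. -/
structure MatrixWeight (d n : ℕ) where
  W : Rd d → Matrix (Fin n) (Fin n) ℝ
  meas : ∀ i j, Measurable fun x => W x i j
  pd : ∀ᵐ x : Rd d, (W x).PosDef
  locInt : LocallyIntegrable (fun x => matOpNorm (W x)) (volume : Measure (Rd d))

/-- The matrix `A_p` characteristic `[W]_{A_p}`. -/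
def MatrixWeight.apConst {d n : ℕ} (W : MatrixWeight d n) (p : ℝ) : ℝ≥0∞ :=
  ⨆ Q : Cube d, Q.vol⁻¹ * ∫⁻ x in Q.set,
    (Q.vol⁻¹ * ∫⁻ t in Q.set,
        ENNReal.ofReal (matOpNorm ((W.W x).rpowH (1 / p) * (W.W t).rpowH (-(1 / p))))
          ^ (p / (p - 1))) ^ (p - 1)

/-- The norm of `f` in `L^p(W)`. -/
def MatrixWeight.wNorm {d n : ℕ} (W : MatrixWeight d n) (p : ℝ)
    (f : Rd d → Fin n → ℝ) : ℝ≥0∞ :=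
  (∫⁻ x, ENNReal.ofReal (enorm' (((W.W x).rpowH (1 / p)).mulVec (f x))) ^ p) ^ (1 / p)

/-- The Euclidean length `|V_ρ(T_{n,*} f⃗)(x)|` of the componentwise variation vector
(with values in `[0,∞]`). -/
def CZO.varVecNorm {d : ℕ} (n : ℕ) (S : CZO d) (ρ : ℝ) (f : Rd d → Fin n → ℝ)
    (x : Rd d) : ℝ≥0∞ :=
  (∑ j : Fin n, S.var ρ (fun y => f y j) x ^ (2 : ℝ)) ^ ((1 : ℝ) / 2)

/-- An `η`-sparse family of cubes. -/
def IsSparse {d : ℕ} (η : ℝ) (F : Set (Cube d)) : Prop :=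
  ∃ E : Cube d → Set (Rd d),
    (∀ Q ∈ F, E Q ⊆ Q.set ∧ MeasurableSet (E Q) ∧ ENNReal.ofReal η * Q.vol ≤ volume (E Q)) ∧
    F.PairwiseDisjoint E

/-- The convex body average `⟨⟨f⃗⟩⟩_{tQ}` of a vector-valued function over the cube `tQ`. -/
def convexBodyAvg {d n : ℕ} (f : Rd d → Fin n → ℝ) (Q : Cube d) (t : ℝ) :
    Set (Fin n → ℝ) :=
  {v | ∃ φ : Rd d → ℝ, Measurable φ ∧ (∀ y, |φ y| ≤ 1) ∧
    ∀ j, v j = (∫ y in Q.dilate t, φ y * f y j) / (t * Q.l) ^ d}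

/-!
Decompose `f = g + b` on `Q₀` at a height comparable to `⟨|f|⟩_{3Q₀}`. Moving a point inside a cube
`R` changes the variation of `g χ_{(3R)ᶜ}` by a multiple of this height: the kernel smoothness is
summable by the Dini condition, and the layers where the annuli around the two points differ are
square summable by Cauchy–Schwarz, which is where `ρ ≥ 2` enters. Far from the Calderón–Zygmund
cubes the cancellation of `b` gives a bound of the same kind. Hence, for every cube `R` that meets
the complement of a small exceptional open set `U`, the variation of `f χ_{(3R)ᶜ}` is at most a
multiple of `⟨|f|⟩_{3Q₀}` everywhere on `R`. The dyadic subcubes of `Q₀` that stop as soon as `U`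
fills a fixed proportion of them cover `U ∩ Q₀`, have small total measure, and neither they nor
larger dyadic cubes lie inside `U`; on such a cube `R`, sublinearity splits `V_ρ(T_* f)` into
`V_ρ(T_*(f χ_{3R}))` and a controlled tail.
-/

/-! ### Radial integrals -/

section Radial

lemma lintegral_fun_norm_addHaar {E : Type*} [NormedAddCommGroup E] [NormedSpace ℝ E]
    [FiniteDimensional ℝ E] [Nontrivial E] [MeasurableSpace E] [BorelSpace E]
    (μ : Measure E) [μ.IsAddHaarMeasure] {F : ℝ → ℝ≥0∞} (hF : Measurable F) :
    ∫⁻ x, F ‖x‖ ∂μ = μ.toSphere univ *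
      ∫⁻ r in Ioi (0 : ℝ), ENNReal.ofReal (r ^ (Module.finrank ℝ E - 1)) * F r := by
  have hF_snd : Measurable fun p : Metric.sphere (0 : E) 1 × Ioi (0 : ℝ) => F p.2 := by fun_prop
  have hF_coe : Measurable fun r : Ioi (0 : ℝ) => F r := by fun_prop
  calc ∫⁻ x, F ‖x‖ ∂μ
      = ∫⁻ x : ({(0 : E)}ᶜ : Set E), F ‖x.1‖ ∂(μ.comap (↑)) := by
        rw [lintegral_subtype_comap (measurableSet_singleton _).compl fun x ↦ F ‖x‖,
          restrict_compl_singleton]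
    _ = ∫⁻ p, F p.2 ∂μ.toSphere.prod (.volumeIoiPow (Module.finrank ℝ E - 1)) := by
        simpa using μ.measurePreserving_homeomorphUnitSphereProd.lintegral_comp hF_snd
    _ = μ.toSphere univ * ∫⁻ r : Ioi (0 : ℝ), F r ∂.volumeIoiPow (Module.finrank ℝ E - 1) := by
        rw [lintegral_prod _ hF_snd.aemeasurable]
        simp only [lintegral_const, mul_comm]
    _ = _ := by
        rw [Measure.volumeIoiPow, lintegral_withDensity_eq_lintegral_mul _ (by fun_prop) hF_coe,
          ← lintegral_subtype_comap measurableSet_Ioi]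
        simp only [Pi.mul_apply]

lemma lintegral_inv_mul_comp_const_div {a : ℝ} (ha : 0 < a) (F : ℝ → ℝ≥0∞) :
    ∫⁻ r in Ioi (0 : ℝ), ENNReal.ofReal r⁻¹ * F (a / r) =
      ∫⁻ s in Ioi (0 : ℝ), ENNReal.ofReal s⁻¹ * F s := by
  have image_Ioi : (fun r : ℝ => a / r) '' Ioi 0 = Ioi 0 := by
    refine Subset.antisymm (image_subset_iff.2 fun r hr => div_pos ha hr) fun s hs => ?_
    exact ⟨a / s, div_pos ha hs, div_div_cancel₀ ha.ne'⟩
  have deriv : ∀ r ∈ Ioi (0 : ℝ), HasDerivWithinAt (fun r => a / r) (-a / r ^ 2) (Ioi 0) r := by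
    intro r hr
    have h := (hasDerivAt_inv (ne_of_gt hr)).const_mul a
    simp only [← div_eq_mul_inv] at h
    exact (h.congr_deriv (by ring)).hasDerivWithinAt
  have inj : InjOn (fun r : ℝ => a / r) (Ioi 0) := fun r _ s _ h =>
    inv_injective (mul_left_cancel₀ ha.ne' (by simpa only [div_eq_mul_inv] using h))
  conv_rhs =>
    rw [← image_Ioi, lintegral_image_eq_lintegral_abs_deriv_mul measurableSet_Ioi deriv inj]
  refine setLIntegral_congr_fun measurableSet_Ioi fun r (hr : 0 < r) => ?_
  rw [← mul_assoc, ← ENNReal.ofReal_mul (abs_nonneg _), abs_div, abs_neg, abs_of_pos ha,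
    abs_of_pos (by positivity : 0 < r ^ 2)]
  congr 2
  field_simp

variable {d : ℕ}

/-- The size majorant `|x - y|⁻ᵈ` of a Calderón–Zygmund kernel, with value `0` at `x = y`. -/
def sizeKernel (x y : Rd d) : ℝ≥0∞ := ENNReal.ofReal (dist x y ^ d)⁻¹

/-- The weight `|x - y|⁻ᵈ φ(a / |x - y|)`; its integral in `y` does not depend on `x` and the
scale `a`. -/
def radialWeight (φ : ℝ → ℝ≥0∞) (a : ℝ) (x y : Rd d) : ℝ≥0∞ :=
  sizeKernel x y * φ (a / dist x y)

lemma measurable_sizeKernel (x : Rd d) : Measurable (sizeKernel x) := by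
  unfold sizeKernel; fun_prop

lemma measurable_radialWeight {φ : ℝ → ℝ≥0∞} (hφ : Measurable φ) (a : ℝ) (x : Rd d) :
    Measurable (radialWeight φ a x) :=
  (measurable_sizeKernel x).mul (hφ.comp (by fun_prop))

lemma lintegral_radialWeight [NeZero d] {φ : ℝ → ℝ≥0∞} (hφ : Measurable φ) {a : ℝ} (ha : 0 < a)
    (x : Rd d) :
    ∫⁻ y, radialWeight φ a x y = (volume : Measure (Rd d)).toSphere univ *
      ∫⁻ s in Ioi (0 : ℝ), ENNReal.ofReal s⁻¹ * φ s := by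
  have translate : ∫⁻ y, radialWeight φ a x y =
      ∫⁻ y : Rd d, ENNReal.ofReal (‖y‖ ^ d)⁻¹ * φ (a / ‖y‖) := by
    simpa [dist_eq_norm, radialWeight, sizeKernel] using
      lintegral_sub_left_eq_self (μ := (volume : Measure (Rd d)))
        (fun y => ENNReal.ofReal (‖y‖ ^ d)⁻¹ * φ (a / ‖y‖)) x
  rw [translate, lintegral_fun_norm_addHaar volume
    (F := fun r => ENNReal.ofReal (r ^ d)⁻¹ * φ (a / r)) (by fun_prop),
    ← lintegral_inv_mul_comp_const_div ha]
  congr 1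
  refine setLIntegral_congr_fun measurableSet_Ioi fun r (hr : 0 < r) => ?_
  rw [← mul_assoc, ← ENNReal.ofReal_mul (by positivity), finrank_euclideanSpace_fin]
  congr 2
  rw [← div_eq_mul_inv, ← Nat.sub_add_cancel (NeZero.one_le (n := d)), pow_succ,
    Nat.add_sub_cancel, ← div_div, div_self (by positivity), one_div]

end Radial

section SphereWeight

variable {d : ℕ}

/-- The profile `|1 - s|^(-1/2)` on `[1/2, 2]`. -/
def sphereProfile : ℝ → ℝ≥0∞ :=
  (Icc (1 / 2 : ℝ) 2).indicator fun s => ENNReal.ofReal |1 - s| ^ (-(1 / 2) : ℝ)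

/-- The weight `|x - y|⁻ᵈ |1 - r / |x - y||^(-1/2)` near the sphere `|x - y| = r`. It controls
the cubes which cross that sphere. -/
def sphereWeight (r : ℝ) (x y : Rd d) : ℝ≥0∞ := radialWeight sphereProfile r x y

/-- The total mass of `sphereWeight r x`, which depends on the dimension only. -/
def sphereMass (d : ℕ) : ℝ≥0∞ :=
  (volume : Measure (Rd d)).toSphere univ *
    ∫⁻ s in Ioi (0 : ℝ), ENNReal.ofReal s⁻¹ * sphereProfile s

lemma measurable_sphereProfile : Measurable sphereProfile :=
  Measurable.indicator (by fun_prop) measurableSet_Icc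

lemma measurable_sphereWeight (r : ℝ) (x : Rd d) : Measurable (sphereWeight r x) :=
  measurable_radialWeight measurable_sphereProfile r x

lemma lintegral_sphereWeight [NeZero d] {r : ℝ} (hr : 0 < r) (x : Rd d) :
    ∫⁻ y, sphereWeight r x y = sphereMass d :=
  lintegral_radialWeight measurable_sphereProfile hr x

lemma integrableOn_abs_one_sub_rpow_neg_half :
    IntegrableOn (fun s : ℝ => |1 - s| ^ (-(1 / 2) : ℝ)) (Ioc 0 2) := by
  have h : IntervalIntegrable (fun s : ℝ => s ^ (-(1 / 2) : ℝ)) volume 0 1 :=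
    intervalIntegral.intervalIntegrable_rpow' (by norm_num)
  have left : IntegrableOn (fun s : ℝ => |1 - s| ^ (-(1 / 2) : ℝ)) (Ioc 0 1) := by
    have := (h.comp_sub_left 1).symm
    rw [sub_self, sub_zero, intervalIntegrable_iff_integrableOn_Ioc_of_le zero_le_one] at this
    exact this.congr_fun (fun s hs => by rw [abs_of_nonneg (by linarith [hs.2])]) measurableSet_Ioc
  have right : IntegrableOn (fun s : ℝ => |1 - s| ^ (-(1 / 2) : ℝ)) (Ioc 1 2) := by
    have := h.comp_sub_right 1
    rw [zero_add, one_add_one_eq_two,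
      intervalIntegrable_iff_integrableOn_Ioc_of_le one_le_two] at this
    refine this.congr_fun (fun s hs => ?_) measurableSet_Ioc
    rw [abs_sub_comm, abs_of_pos (by linarith [hs.1])]
  rw [← Ioc_union_Ioc_eq_Ioc zero_le_one one_le_two]
  exact left.union right

lemma sphereMass_ne_top (d : ℕ) : sphereMass d ≠ ∞ := by
  refine ENNReal.mul_ne_top (measure_ne_top _ _) (ne_of_lt ?_)
  have pointwise : ∀ᵐ s : ℝ, s ∈ Ioi (0 : ℝ) → ENNReal.ofReal s⁻¹ * sphereProfile s ≤
      (Ioc (0 : ℝ) 2).indicator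
        (fun s => 2 * ENNReal.ofReal (|1 - s| ^ (-(1 / 2) : ℝ))) s := by
    filter_upwards [Measure.ae_ne volume (1 : ℝ)] with s hs1 hs0
    by_cases hs : s ∈ Icc (1 / 2 : ℝ) 2
    · have : ENNReal.ofReal s⁻¹ ≤ 2 := by
        rw [← ENNReal.ofReal_ofNat]
        exact ENNReal.ofReal_le_ofReal (inv_le_of_inv_le₀ two_pos (by linarith [hs.1]))
      rw [sphereProfile, indicator_of_mem hs, indicator_of_mem (show s ∈ Ioc 0 2 from ⟨hs0, hs.2⟩),
        ENNReal.ofReal_rpow_of_pos (abs_pos.2 (sub_ne_zero.2 hs1.symm))]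
      gcongr
    · rw [sphereProfile, indicator_of_notMem hs, mul_zero]
      exact zero_le
  calc ∫⁻ s in Ioi (0 : ℝ), ENNReal.ofReal s⁻¹ * sphereProfile s
      ≤ ∫⁻ s in Ioi (0 : ℝ), (Ioc (0 : ℝ) 2).indicator
          (fun s => 2 * ENNReal.ofReal (|1 - s| ^ (-(1 / 2) : ℝ))) s :=
        setLIntegral_mono_ae' measurableSet_Ioi pointwise
    _ ≤ ∫⁻ s in Ioc (0 : ℝ) 2, 2 * ENNReal.ofReal (|1 - s| ^ (-(1 / 2) : ℝ)) := by
        rw [← lintegral_indicator measurableSet_Ioc]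
        exact setLIntegral_le_lintegral _ _
    _ = 2 * ∫⁻ s in Ioc (0 : ℝ) 2, ENNReal.ofReal (|1 - s| ^ (-(1 / 2) : ℝ)) :=
        lintegral_const_mul' _ _ (by norm_num)
    _ < ∞ := ENNReal.mul_lt_top (by norm_num)
        integrableOn_abs_one_sub_rpow_neg_half.lintegral_lt_top

end SphereWeight

namespace CZO

variable {d : ℕ} (S : CZO d)

/-- The modulus `ω(t) + √t`, which still satisfies the Dini condition and dominates both the
smoothness of the kernel and the loss at the spheres of truncation. -/
def modulus (t : ℝ) : ℝ := S.ω (max t 0) + √t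

/-- The Dini weight `|x - y|⁻ᵈ (ω(t) + √t)` with `t = a / |x - y|`, on the region `a < |x - y|`. -/
def tailWeight (a : ℝ) (x y : Rd d) : ℝ≥0∞ :=
  radialWeight ((Iio (1 : ℝ)).indicator fun s => ENNReal.ofReal (S.modulus s)) a x y

/-- The total mass of `S.tailWeight a x`, finite by the Dini condition. -/
def tailMass : ℝ≥0∞ :=
  (volume : Measure (Rd d)).toSphere univ * ∫⁻ s in Ioi (0 : ℝ), ENNReal.ofReal s⁻¹ *
    (Iio (1 : ℝ)).indicator (fun s => ENNReal.ofReal (S.modulus s)) s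

lemma omega_nonneg {t : ℝ} (ht : 0 ≤ t) : 0 ≤ S.ω t :=
  S.ω_zero ▸ S.ω_mono self_mem_Ici ht ht

lemma modulus_mono : Monotone S.modulus := fun _ _ hst =>
  add_le_add (S.ω_mono (mem_Ici.2 (le_max_right _ _)) (mem_Ici.2 (le_max_right _ _))
    (max_le_max_right 0 hst))
    (Real.sqrt_le_sqrt hst)

lemma omega_le_modulus {t : ℝ} (ht : 0 ≤ t) : S.ω t ≤ S.modulus t := by
  rw [modulus, max_eq_left ht]
  exact le_add_of_nonneg_right (Real.sqrt_nonneg t)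

lemma sqrt_le_modulus (t : ℝ) : √t ≤ S.modulus t :=
  le_add_of_nonneg_left (S.omega_nonneg (le_max_right _ _))

lemma measurable_modulus_profile :
    Measurable ((Iio (1 : ℝ)).indicator fun s => ENNReal.ofReal (S.modulus s)) :=
  S.modulus_mono.measurable.ennreal_ofReal.indicator measurableSet_Iio

lemma measurable_tailWeight (a : ℝ) (x : Rd d) : Measurable (S.tailWeight a x) :=
  measurable_radialWeight S.measurable_modulus_profile a x

lemma lintegral_tailWeight [NeZero d] {a : ℝ} (ha : 0 < a) (x : Rd d) :
    ∫⁻ y, S.tailWeight a x y = S.tailMass :=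
  lintegral_radialWeight S.measurable_modulus_profile ha x

lemma integrableOn_inv_mul_modulus : IntegrableOn (fun s : ℝ => s⁻¹ * S.modulus s) (Ioo 0 1) := by
  have h : IntervalIntegrable (fun s : ℝ => s ^ (-(1 / 2) : ℝ)) volume 0 1 :=
    intervalIntegral.intervalIntegrable_rpow' (by norm_num)
  rw [intervalIntegrable_iff_integrableOn_Ioo_of_le zero_le_one] at h
  refine (S.dini.add h).congr_fun (fun s hs => ?_) measurableSet_Ioo
  rw [Pi.add_apply, modulus, max_eq_left hs.1.le, Real.sqrt_eq_rpow, mul_add, div_eq_inv_mul,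
    ← Real.rpow_neg_one s, ← Real.rpow_add hs.1]
  norm_num

lemma tailMass_ne_top : S.tailMass ≠ ∞ := by
  refine ENNReal.mul_ne_top (measure_ne_top _ _) (ne_of_lt ?_)
  calc ∫⁻ s in Ioi (0 : ℝ), ENNReal.ofReal s⁻¹ *
        (Iio (1 : ℝ)).indicator (fun s => ENNReal.ofReal (S.modulus s)) s
      ≤ ∫⁻ s in Ioi (0 : ℝ), (Ioo (0 : ℝ) 1).indicator
          (fun s => ENNReal.ofReal (s⁻¹ * S.modulus s)) s := by
        refine setLIntegral_mono' measurableSet_Ioi fun s (hs0 : 0 < s) => ?_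
        by_cases hs1 : s < 1
        · rw [indicator_of_mem (mem_Iio.2 hs1), indicator_of_mem (mem_Ioo.2 ⟨hs0, hs1⟩),
            ENNReal.ofReal_mul (by positivity)]
        · rw [indicator_of_notMem (notMem_Iio.2 (not_lt.1 hs1)), mul_zero]
          exact zero_le
    _ ≤ ∫⁻ s in Ioo (0 : ℝ) 1, ENNReal.ofReal (s⁻¹ * S.modulus s) := by
        rw [← lintegral_indicator measurableSet_Ioo]
        exact setLIntegral_le_lintegral _ _
    _ < ∞ := S.integrableOn_inv_mul_modulus.lintegral_lt_top

end CZO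

/-! ### Cubes -/

section Coordinates

variable {d : ℕ}

lemma abs_sub_coord_le_dist (x y : Rd d) (i : Fin d) : |x i - y i| ≤ dist x y := by
  simpa [dist_eq_norm] using PiLp.norm_apply_le (x - y) i

lemma dist_le_sqrt_mul_of_forall_coord {x y : Rd d} {a : ℝ} (ha : 0 ≤ a)
    (h : ∀ i, |x i - y i| ≤ a) : dist x y ≤ √d * a := by
  have sum_le : ∑ i, dist (x i) (y i) ^ 2 ≤ d * a ^ 2 := by
    calc ∑ i, dist (x i) (y i) ^ 2 ≤ ∑ _i : Fin d, a ^ 2 := by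
          gcongr with i
          exact h i
      _ = d * a ^ 2 := by simp
  calc dist x y ≤ √(d * a ^ 2) := by rw [EuclideanSpace.dist_eq]; exact Real.sqrt_le_sqrt sum_le
    _ = √d * a := by rw [Real.sqrt_mul (by positivity), Real.sqrt_sq ha]

end Coordinates

namespace Cube

variable {d : ℕ} (Q : Cube d)

lemma ext_iff {P Q : Cube d} : P = Q ↔ (∀ i, P.c i = Q.c i) ∧ P.l = Q.l := by
  cases P; cases Q
  simp only [Cube.mk.injEq, funext_iff]

lemma set_eq_dilate_one : Q.set = Q.dilate 1 := by simp [set, dilate]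

lemma dilate_eq_preimage_pi_Ico (t : ℝ) :
    Q.dilate t = (MeasurableEquiv.toLp 2 (Fin d → ℝ)).symm ⁻¹'
      (Set.pi univ fun i => Ico (Q.c i - t * Q.l / 2) (Q.c i + t * Q.l / 2)) := by
  ext y
  simp [dilate]

lemma measurableSet_dilate (t : ℝ) : MeasurableSet (Q.dilate t) := by
  rw [dilate_eq_preimage_pi_Ico]
  exact measurableSet_preimage (MeasurableEquiv.measurable _)
    (MeasurableSet.univ_pi fun _ => measurableSet_Ico)

lemma measurableSet_set : MeasurableSet Q.set :=
  Q.set_eq_dilate_one ▸ Q.measurableSet_dilate 1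

lemma volume_dilate {t : ℝ} (ht : 0 ≤ t) :
    volume (Q.dilate t) = ENNReal.ofReal (t ^ d) * Q.vol := by
  have side : ∀ i, (Q.c i + t * Q.l / 2) - (Q.c i - t * Q.l / 2) = t * Q.l := fun i => by ring
  rw [dilate_eq_preimage_pi_Ico,
    (EuclideanSpace.volume_preserving_symm_measurableEquiv_toLp (Fin d)).measure_preimage
      (MeasurableSet.univ_pi fun _ => measurableSet_Ico).nullMeasurableSet, Real.volume_pi_Ico]
  simp only [side, Finset.prod_const, Finset.card_univ, Fintype.card_fin, vol]
  rw [← ENNReal.ofReal_pow (mul_nonneg ht Q.hl.le), ← ENNReal.ofReal_mul (by positivity), mul_pow]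

lemma volume_set : volume Q.set = Q.vol := by
  rw [set_eq_dilate_one, volume_dilate _ zero_le_one, one_pow, ENNReal.ofReal_one, one_mul]

lemma vol_pos : 0 < Q.vol := ENNReal.ofReal_pos.2 (pow_pos Q.hl d)

lemma vol_ne_top : Q.vol ≠ ∞ := ENNReal.ofReal_ne_top

lemma vol_eq_two_pow_mul {P P' : Cube d} (h : P'.l = 2 * P.l) : P'.vol = 2 ^ d * P.vol := by
  rw [vol, h, mul_pow, ENNReal.ofReal_mul (by positivity), ENNReal.ofReal_pow zero_le_two,
    ENNReal.ofReal_ofNat, vol]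

lemma l_le_of_set_subset [NeZero d] {P R : Cube d} (h : P.set ⊆ R.set) : P.l ≤ R.l := by
  have vol_le : P.vol ≤ R.vol := by
    rw [← P.volume_set, ← R.volume_set]
    exact measure_mono h
  rw [vol, vol, ENNReal.ofReal_le_ofReal_iff (pow_nonneg R.hl.le d)] at vol_le
  exact le_of_pow_le_pow_left₀ (NeZero.ne d) R.hl.le vol_le

variable {Q}

lemma center_mem : (WithLp.toLp 2 Q.c : Rd d) ∈ Q.set := fun i => by
  have := Q.hl
  constructor <;> simp only <;> linarith

lemma dist_le_of_mem_dilate {s t : ℝ} (hst : 0 ≤ s + t) {x y : Rd d} (hx : x ∈ Q.dilate s)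
    (hy : y ∈ Q.dilate t) : dist x y ≤ √d * ((s + t) / 2 * Q.l) := by
  refine dist_le_sqrt_mul_of_forall_coord (mul_nonneg (by linarith) Q.hl.le) fun i => ?_
  rw [abs_le]
  constructor <;> linarith [(hx i).1, (hx i).2, (hy i).1, (hy i).2]

/-- The Euclidean diameter `√d ℓ(Q)` of a cube. -/
def diam (Q : Cube d) : ℝ := √d * Q.l

lemma l_le_diam [NeZero d] (Q : Cube d) : Q.l ≤ Q.diam :=
  le_mul_of_one_le_left Q.hl.le (Real.one_le_sqrt.2 (by exact_mod_cast NeZero.one_le))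

lemma diam_pos [NeZero d] (Q : Cube d) : 0 < Q.diam := Q.hl.trans_le Q.l_le_diam

lemma dist_le_diam {x y : Rd d} (hx : x ∈ Q.set) (hy : y ∈ Q.set) : dist x y ≤ Q.diam := by
  rw [set_eq_dilate_one] at hx hy
  have h := dist_le_of_mem_dilate (by norm_num) hx hy
  rwa [add_self_div_two, one_mul] at h

lemma dist_le_two_mul_diam {x y : Rd d} (hx : x ∈ Q.set) (hy : y ∈ Q.dilate 3) :
    dist x y ≤ 2 * Q.diam := by
  rw [set_eq_dilate_one] at hx
  have := dist_le_of_mem_dilate (by norm_num) hx hy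
  rw [diam]
  linarith

lemma l_le_dist_of_notMem_dilate {x y : Rd d} (hx : x ∈ Q.set) (hy : y ∉ Q.dilate 3) :
    Q.l ≤ dist x y := by
  contrapose! hy
  intro i
  have := abs_lt.1 ((abs_sub_coord_le_dist x y i).trans_lt hy)
  constructor <;> linarith [(hx i).1, (hx i).2]

lemma dist_le_mul_dist_of_notMem_dilate {x ξ y : Rd d} (hx : x ∈ Q.set) (hξ : ξ ∈ Q.set)
    (hy : y ∉ Q.dilate 3) : dist x y ≤ (1 + √d) * dist ξ y := by
  have hxξ : dist x ξ ≤ √d * dist ξ y := (Q.dist_le_diam hx hξ).trans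
    (mul_le_mul_of_nonneg_left (Q.l_le_dist_of_notMem_dilate hξ hy) (Real.sqrt_nonneg _))
  linarith [dist_triangle x ξ y]

lemma mem_dilate_of_dist_le {x y : Rd d} {L : ℝ} (hy : y ∈ Q.set) (h : dist x y ≤ L * Q.l) :
    x ∈ Q.dilate (2 * L + 2) := fun i => by
  have := abs_le.1 ((abs_sub_coord_le_dist x y i).trans h)
  have := Q.hl
  constructor <;> nlinarith [hy i]

end Cube

/-! ### Dyadic subcubes -/

section Dyadic

variable {d : ℕ} {Q₀ P R : Cube d} {k k' : ℕ} {m m' : Fin d → ℕ} {x y : Rd d}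

/-- The coordinates of `y` in units of `Q₀`, so that `Q₀` becomes `[0, 1)ᵈ`. -/
def Cube.relCoord (Q₀ : Cube d) (y : Rd d) (i : Fin d) : ℝ := (y i - (Q₀.c i - Q₀.l / 2)) / Q₀.l

/-- The dyadic cube of generation `k` and position `m` in the grid of `Q₀`; it lies in `Q₀` if
all `m i < 2 ^ k`. -/
def dyadicCube (Q₀ : Cube d) (k : ℕ) (m : Fin d → ℕ) : Cube d where
  c i := Q₀.c i - Q₀.l / 2 + ((m i : ℝ) + 1 / 2) * (Q₀.l / 2 ^ k)
  l := Q₀.l / 2 ^ k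
  hl := div_pos Q₀.hl (by positivity)

lemma isDyadicSubcube_iff :
    IsDyadicSubcube Q₀ P ↔
      ∃ (k : ℕ) (m : Fin d → ℕ), (∀ i, m i < 2 ^ k) ∧ P = dyadicCube Q₀ k m := by
  simp only [IsDyadicSubcube, Cube.ext_iff, dyadicCube, and_comm]

lemma dyadicCube_zero (Q₀ : Cube d) : dyadicCube Q₀ 0 0 = Q₀ := by
  rw [Cube.ext_iff]
  refine ⟨fun i => ?_, by simp [dyadicCube]⟩
  simp only [dyadicCube, Pi.zero_apply, Nat.cast_zero, pow_zero]
  ring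

lemma mem_dyadicCube :
    y ∈ (dyadicCube Q₀ k m).set ↔
      ∀ i, 0 ≤ Q₀.relCoord y i ∧ ⌊Q₀.relCoord y i * 2 ^ k⌋₊ = m i := by
  refine forall_congr' fun i => ?_
  have hl := Q₀.hl
  have hy : y i = Q₀.c i - Q₀.l / 2 + Q₀.relCoord y i * Q₀.l := by
    rw [Cube.relCoord]; field_simp; ring
  have lower : y i - ((dyadicCube Q₀ k m).c i - (dyadicCube Q₀ k m).l / 2) =
      (Q₀.relCoord y i * 2 ^ k - m i) * (Q₀.l / 2 ^ k) := by
    rw [hy]; simp only [dyadicCube]; field_simp; ring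
  have upper : ((dyadicCube Q₀ k m).c i + (dyadicCube Q₀ k m).l / 2) - y i =
      (m i + 1 - Q₀.relCoord y i * 2 ^ k) * (Q₀.l / 2 ^ k) := by
    rw [hy]; simp only [dyadicCube]; field_simp; ring
  rw [← sub_nonneg, lower, mul_nonneg_iff_of_pos_right (by positivity), sub_nonneg, ← sub_pos,
    upper, mul_pos_iff_of_pos_right (by positivity), sub_pos]
  constructor
  · rintro ⟨h₁, h₂⟩
    have h₀ : 0 ≤ Q₀.relCoord y i * 2 ^ k := (Nat.cast_nonneg _).trans h₁
    exact ⟨nonneg_of_mul_nonneg_left h₀ (by positivity), (Nat.floor_eq_iff h₀).2 ⟨h₁, h₂⟩⟩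
  · rintro ⟨h₀, h⟩
    exact (Nat.floor_eq_iff (by positivity)).1 h

lemma Cube.mem_set_iff_relCoord : y ∈ Q₀.set ↔ ∀ i, 0 ≤ Q₀.relCoord y i ∧ Q₀.relCoord y i < 1 := by
  rw [← dyadicCube_zero Q₀, mem_dyadicCube, dyadicCube_zero]
  simp [Nat.floor_eq_zero]

lemma floor_mul_two_pow (t : ℝ) (k j : ℕ) : ⌊t * 2 ^ k⌋₊ = ⌊t * 2 ^ (k + j)⌋₊ / 2 ^ j := by
  rw [← Nat.floor_div_natCast, pow_add]
  push_cast
  field_simp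

lemma dyadicCube_set_subset_of_le (hk : k ≤ k') (hy : y ∈ (dyadicCube Q₀ k m).set)
    (hy' : y ∈ (dyadicCube Q₀ k' m').set) :
    (dyadicCube Q₀ k' m').set ⊆ (dyadicCube Q₀ k m).set := by
  obtain ⟨j, rfl⟩ := Nat.exists_eq_add_of_le hk
  intro z hz
  rw [mem_dyadicCube] at *
  intro i
  refine ⟨(hz i).1, ?_⟩
  rw [floor_mul_two_pow _ k j, (hz i).2, ← (hy' i).2, ← floor_mul_two_pow, (hy i).2]

lemma IsDyadicSubcube.subset (h : IsDyadicSubcube Q₀ P) : P.set ⊆ Q₀.set := by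
  obtain ⟨k, m, hm, rfl⟩ := isDyadicSubcube_iff.1 h
  intro z hz
  rw [mem_dyadicCube] at hz
  refine Cube.mem_set_iff_relCoord.2 fun i => ⟨(hz i).1, ?_⟩
  have lt_succ : Q₀.relCoord z i * 2 ^ k < (m i : ℝ) + 1 := (hz i).2 ▸ Nat.lt_floor_add_one _
  have succ_le : (m i : ℝ) + 1 ≤ 2 ^ k := by exact_mod_cast hm i
  exact lt_of_mul_lt_mul_right (by linarith) (by positivity : (0 : ℝ) ≤ 2 ^ k)

lemma exists_isDyadicSubcube_mem (k : ℕ) (hx : x ∈ Q₀.set) :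
    ∃ Q, IsDyadicSubcube Q₀ Q ∧ x ∈ Q.set ∧ Q.l = Q₀.l / 2 ^ k := by
  rw [Cube.mem_set_iff_relCoord] at hx
  refine ⟨dyadicCube Q₀ k fun i => ⌊Q₀.relCoord x i * 2 ^ k⌋₊,
    isDyadicSubcube_iff.2 ⟨k, _, fun i => ?_, rfl⟩, mem_dyadicCube.2 fun i => ⟨(hx i).1, rfl⟩, rfl⟩
  rw [Nat.floor_lt (mul_nonneg (hx i).1 (by positivity))]
  push_cast
  exact mul_lt_of_lt_one_left (by positivity) (hx i).2

lemma exists_isDyadicSubcube_l_lt {δ : ℝ} (hδ : 0 < δ) (hx : x ∈ Q₀.set) :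
    ∃ Q, IsDyadicSubcube Q₀ Q ∧ x ∈ Q.set ∧ Q.l < δ := by
  obtain ⟨k, hk⟩ := pow_unbounded_of_one_lt (Q₀.l / δ) one_lt_two
  obtain ⟨Q, hQ, hxQ, hl⟩ := exists_isDyadicSubcube_mem k hx
  refine ⟨Q, hQ, hxQ, ?_⟩
  rw [hl, div_lt_iff₀ (by positivity)]
  rwa [div_lt_iff₀ hδ, mul_comm] at hk

lemma exists_isDyadicSubcube_subset_of_isOpen {U : Set (Rd d)} (hU : IsOpen U) (hxU : x ∈ U)
    (hx : x ∈ Q₀.set) : ∃ Q, IsDyadicSubcube Q₀ Q ∧ x ∈ Q.set ∧ Q.set ⊆ U := by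
  obtain ⟨r, hr, hball⟩ := Metric.isOpen_iff.1 hU x hxU
  obtain ⟨Q, hQ, hxQ, hl⟩ := exists_isDyadicSubcube_l_lt (δ := r / (√d + 1)) (by positivity) hx
  refine ⟨Q, hQ, hxQ, fun y hy => hball (Metric.mem_ball.2 ?_)⟩
  rw [lt_div_iff₀ (by positivity)] at hl
  have := Q.dist_le_diam hy hxQ
  rw [Cube.diam] at this
  linarith [Q.hl]

lemma countable_isDyadicSubcube (Q₀ : Cube d) : {Q | IsDyadicSubcube Q₀ Q}.Countable := by
  refine (countable_range fun p : ℕ × (Fin d → ℕ) => dyadicCube Q₀ p.1 p.2).mono fun Q hQ => ?_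
  obtain ⟨k, m, -, rfl⟩ := isDyadicSubcube_iff.1 hQ
  exact ⟨(k, m), rfl⟩

lemma IsDyadicSubcube.subset_or_subset (hP : IsDyadicSubcube Q₀ P) (hR : IsDyadicSubcube Q₀ R)
    (hyP : y ∈ P.set) (hyR : y ∈ R.set) : P.set ⊆ R.set ∨ R.set ⊆ P.set := by
  obtain ⟨k, m, -, rfl⟩ := isDyadicSubcube_iff.1 hP
  obtain ⟨k', m', -, rfl⟩ := isDyadicSubcube_iff.1 hR
  rcases le_total k k' with hk | hk
  · exact .inr (dyadicCube_set_subset_of_le hk hyP hyR)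
  · exact .inl (dyadicCube_set_subset_of_le hk hyR hyP)

lemma IsDyadicSubcube.eq_of_subset_of_l_eq (hP : IsDyadicSubcube Q₀ P)
    (hR : IsDyadicSubcube Q₀ R) (hl : P.l = R.l) (h : P.set ⊆ R.set) : P = R := by
  obtain ⟨k, m, -, rfl⟩ := isDyadicSubcube_iff.1 hP
  obtain ⟨k', m', -, rfl⟩ := isDyadicSubcube_iff.1 hR
  have hk : k = k' := by
    have : (2 : ℝ) ^ k = 2 ^ k' := inv_injective
      (mul_left_cancel₀ Q₀.hl.ne' (by simpa only [dyadicCube, div_eq_mul_inv] using hl))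
    exact Nat.pow_right_injective le_rfl (by exact_mod_cast this)
  subst hk
  have center_P := mem_dyadicCube.1 (Cube.center_mem (Q := dyadicCube Q₀ k m))
  have center_R := mem_dyadicCube.1 (h Cube.center_mem)
  rw [show m = m' from funext fun i => (center_P i).2.symm.trans (center_R i).2]

lemma IsDyadicSubcube.exists_parent (hP : IsDyadicSubcube Q₀ P) (hne : P ≠ Q₀) :
    ∃ P', IsDyadicSubcube Q₀ P' ∧ P.set ⊆ P'.set ∧ P'.l = 2 * P.l := by
  obtain ⟨k, m, hm, rfl⟩ := isDyadicSubcube_iff.1 hP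
  cases k with
  | zero =>
    have : m = 0 := funext fun i => by simpa using hm i
    exact absurd (this ▸ dyadicCube_zero Q₀) hne
  | succ k =>
    refine ⟨dyadicCube Q₀ k fun i => m i / 2, isDyadicSubcube_iff.2 ⟨k, _, fun i => ?_, rfl⟩,
      fun z hz => ?_, ?_⟩
    · have := hm i
      rw [pow_succ] at this
      omega
    · rw [mem_dyadicCube] at *
      refine fun i => ⟨(hz i).1, ?_⟩
      rw [floor_mul_two_pow _ k 1, (hz i).2, pow_one]
    · simp only [dyadicCube, pow_succ]
      field_simp

/-- The dyadic subcubes of `Q₀` which are maximal with respect to inclusion among those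
satisfying `bad`. -/
def maximalDyadic (Q₀ : Cube d) (bad : Cube d → Prop) : Set (Cube d) :=
  {P | IsDyadicSubcube Q₀ P ∧ bad P ∧
    ∀ P', IsDyadicSubcube Q₀ P' → bad P' → P.set ⊆ P'.set → P' = P}

variable {bad : Cube d → Prop}

lemma exists_mem_maximalDyadic_of_bad [NeZero d] (hR : IsDyadicSubcube Q₀ R) (hbad : bad R) :
    ∃ P ∈ maximalDyadic Q₀ bad, R.set ⊆ P.set := by
  have exists_generation :
      ∃ k : ℕ, ∃ P, IsDyadicSubcube Q₀ P ∧ bad P ∧ R.set ⊆ P.set ∧ P.l = Q₀.l / 2 ^ k := by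
    obtain ⟨k, m, -, rfl⟩ := isDyadicSubcube_iff.1 hR
    exact ⟨k, _, hR, hbad, Subset.rfl, rfl⟩
  obtain ⟨P, hP, hPbad, hRP, hPl⟩ := Nat.find_spec exists_generation
  refine ⟨P, ⟨hP, hPbad, fun P' hP' hbad' hPP' => ?_⟩, hRP⟩
  obtain ⟨k, m, -, rfl⟩ := isDyadicSubcube_iff.1 hP'
  have generation_le : Nat.find exists_generation ≤ k :=
    Nat.find_min' exists_generation ⟨_, hP', hbad', hRP.trans hPP', rfl⟩
  have l_le : (dyadicCube Q₀ k m).l ≤ P.l := by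
    rw [hPl]
    exact div_le_div_of_nonneg_left Q₀.hl.le (by positivity)
      (pow_le_pow_right₀ one_le_two generation_le)
  exact (hP.eq_of_subset_of_l_eq hP' ((Cube.l_le_of_set_subset hPP').antisymm l_le) hPP').symm

lemma pairwiseDisjoint_maximalDyadic : (maximalDyadic Q₀ bad).PairwiseDisjoint Cube.set := by
  intro P hP R hR hne
  refine Set.disjoint_left.2 fun y hyP hyR => hne ?_
  rcases hP.1.subset_or_subset hR.1 hyP hyR with h | h
  · exact (hP.2.2 R hR.1 hR.2.1 h).symm
  · exact hR.2.2 P hP.1 hP.2.1 h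

lemma countable_maximalDyadic : (maximalDyadic Q₀ bad).Countable :=
  (countable_isDyadicSubcube Q₀).mono fun _ h => h.1

lemma exists_parent_of_mem_maximalDyadic (hQ₀ : ¬ bad Q₀) (hP : P ∈ maximalDyadic Q₀ bad) :
    ∃ P', IsDyadicSubcube Q₀ P' ∧ ¬ bad P' ∧ P.set ⊆ P'.set ∧ P'.vol = 2 ^ d * P.vol := by
  obtain ⟨P', hP', hsub, hl⟩ := hP.1.exists_parent fun h => hQ₀ (h ▸ hP.2.1)
  refine ⟨P', hP', fun hbad => ?_, hsub, Cube.vol_eq_two_pow_mul hl⟩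
  have := hP.2.2 P' hP' hbad hsub ▸ hl
  linarith [P.hl]

end Dyadic

/-! ### Finite sums of powers -/

section PowerSums

variable {ι : Type*} (s : Finset ι)

lemma sum_rpow_rpow_inv_anti {σ ρ : ℝ} (hσ : 0 < σ) (hσρ : σ ≤ ρ) (a : ι → ℝ≥0∞) :
    (∑ i ∈ s, a i ^ ρ) ^ (1 / ρ) ≤ (∑ i ∈ s, a i ^ σ) ^ (1 / σ) := by
  set B := (∑ i ∈ s, a i ^ σ) ^ (1 / σ) with hB
  have hBσ : B ^ σ = ∑ i ∈ s, a i ^ σ := by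
    rw [hB, ← ENNReal.rpow_mul, one_div, inv_mul_cancel₀ hσ.ne', ENNReal.rpow_one]
  have le_B : ∀ i ∈ s, a i ≤ B := fun i hi => by
    rw [← ENNReal.rpow_le_rpow_iff hσ, hBσ]
    exact Finset.single_le_sum (f := fun i => a i ^ σ) (fun _ _ => zero_le) hi
  have rpow_split : ∀ c : ℝ≥0∞, c ^ ρ = c ^ σ * c ^ (ρ - σ) := fun c => by
    rw [← ENNReal.rpow_add_of_nonneg _ _ hσ.le (by linarith), add_sub_cancel]
  rw [one_div, ENNReal.rpow_inv_le_iff (hσ.trans_le hσρ)]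
  calc ∑ i ∈ s, a i ^ ρ ≤ ∑ i ∈ s, a i ^ σ * B ^ (ρ - σ) := by
        refine Finset.sum_le_sum fun i hi => ?_
        rw [rpow_split]
        gcongr
        exact le_B i hi
    _ = B ^ ρ := by rw [← Finset.sum_mul, ← hBσ, ← rpow_split]

lemma sum_rpow_rpow_inv_le_add_add {ρ : ℝ} (hρ : 2 ≤ ρ) {a b₁ b₂ b : ι → ℝ≥0∞}
    (h : ∀ i ∈ s, a i ≤ b₁ i + b₂ i + b i) :
    (∑ i ∈ s, a i ^ ρ) ^ (1 / ρ) ≤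
      ∑ i ∈ s, b₁ i + (∑ i ∈ s, b₂ i ^ (2 : ℝ)) ^ (1 / 2 : ℝ) + (∑ i ∈ s, b i ^ ρ) ^ (1 / ρ) := by
  have hρ1 : 1 ≤ ρ := one_le_two.trans hρ
  calc (∑ i ∈ s, a i ^ ρ) ^ (1 / ρ) ≤ (∑ i ∈ s, (b₁ i + b₂ i + b i) ^ ρ) ^ (1 / ρ) := by
        gcongr with i hi
        exact h i hi
    _ ≤ (∑ i ∈ s, b₁ i ^ ρ) ^ (1 / ρ) + (∑ i ∈ s, b₂ i ^ ρ) ^ (1 / ρ) +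
          (∑ i ∈ s, b i ^ ρ) ^ (1 / ρ) :=
        (ENNReal.Lp_add_le s _ _ hρ1).trans (by gcongr; exact ENNReal.Lp_add_le s _ _ hρ1)
    _ ≤ (∑ i ∈ s, b₁ i ^ (1 : ℝ)) ^ (1 / 1 : ℝ) + (∑ i ∈ s, b₂ i ^ (2 : ℝ)) ^ (1 / 2 : ℝ) +
          (∑ i ∈ s, b i ^ ρ) ^ (1 / ρ) := by
        gcongr
        · exact sum_rpow_rpow_inv_anti s one_pos hρ1 b₁
        · exact sum_rpow_rpow_inv_anti s two_pos hρ b₂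
    _ = _ := by simp only [ENNReal.rpow_one, div_one]

variable {α : Type*} [MeasurableSpace α] {μ : Measure α} {φ w : α → ℝ≥0∞}

lemma setLIntegral_sq_le_mul {A : Set α} (hA : MeasurableSet A) (hφ : Measurable φ)
    (hw : Measurable w) (hw0 : ∀ y ∈ A, w y ≠ 0) (hwtop : ∀ y ∈ A, w y ≠ ∞) :
    (∫⁻ y in A, φ y ∂μ) ^ (2 : ℝ) ≤
      (∫⁻ y in A, φ y * (w y)⁻¹ ∂μ) * ∫⁻ y in A, φ y * w y ∂μ := by
  have holder := ENNReal.lintegral_mul_le_Lp_mul_Lq (μ.restrict A) Real.HolderConjugate.two_two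
    (f := fun y => (φ y * (w y)⁻¹) ^ (1 / 2 : ℝ)) (g := fun y => (φ y * w y) ^ (1 / 2 : ℝ))
    (by fun_prop) (by fun_prop)
  have factor : ∀ y ∈ A, ((fun y => (φ y * (w y)⁻¹) ^ (1 / 2 : ℝ)) *
      fun y => (φ y * w y) ^ (1 / 2 : ℝ)) y = φ y := fun y hy => by
    rw [Pi.mul_apply, ← ENNReal.mul_rpow_of_nonneg _ _ (by norm_num), mul_mul_mul_comm,
      ENNReal.inv_mul_cancel (hw0 y hy) (hwtop y hy), mul_one, ← sq, ← ENNReal.rpow_two,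
      ← ENNReal.rpow_mul]
    norm_num
  rw [setLIntegral_congr_fun hA factor] at holder
  refine (ENNReal.rpow_le_rpow holder zero_le_two).trans_eq ?_
  rw [ENNReal.mul_rpow_of_nonneg _ _ zero_le_two]
  simp only [← ENNReal.rpow_mul]
  norm_num

lemma sum_setLIntegral_sq_le {B : ι → Set α} (hB : ∀ i ∈ s, MeasurableSet (B i))
    (hdisj : (s : Set ι).PairwiseDisjoint B) (hφ : Measurable φ) (hw : Measurable w)
    (hw0 : ∀ i ∈ s, ∀ y ∈ B i, w y ≠ 0) (hwtop : ∀ i ∈ s, ∀ y ∈ B i, w y ≠ ∞) {F : ℝ≥0∞}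
    (hF : ∀ i ∈ s, ∫⁻ y in B i, φ y * (w y)⁻¹ ∂μ ≤ F) :
    ∑ i ∈ s, (∫⁻ y in B i, φ y ∂μ) ^ (2 : ℝ) ≤ F * ∫⁻ y in ⋃ i ∈ s, B i, φ y * w y ∂μ := by
  rw [lintegral_biUnion_finset hdisj hB, Finset.mul_sum]
  refine Finset.sum_le_sum fun i hi => ?_
  refine (setLIntegral_sq_le_mul (hB i hi) hφ hw (hw0 i hi) (hwtop i hi)).trans ?_
  gcongr
  exact hF i hi

end PowerSums

/-! ### Variation over annuli -/

section Annulus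

variable {X : Type*} [PseudoMetricSpace X] {x x' y y' : X} {r R δ : ℝ}

/-- The half-open annulus `r < |x - y| ≤ R` between two consecutive truncation radii. -/
def annulus (x : X) (r R : ℝ) : Set X := dist x ⁻¹' Ioc r R

lemma mem_annulus : y ∈ annulus x r R ↔ r < dist x y ∧ dist x y ≤ R := Iff.rfl

lemma measurableSet_annulus [MeasurableSpace X] [OpensMeasurableSpace X] (x : X) (r R : ℝ) :
    MeasurableSet (annulus x r R) :=
  (continuous_const.dist continuous_id).measurable measurableSet_Ioc

lemma pairwise_disjoint_annulus (x : X) {e : ℕ → ℝ} (he : Antitone e) :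
    Pairwise (Function.onFun Disjoint fun i => annulus x (e (i + 1)) (e i)) :=
  fun _ _ hij => (he.pairwise_disjoint_on_Ioc_succ hij).preimage _

lemma abs_dist_sub_le_of_not_mem_annulus_iff (h : |dist x y - dist x' y'| ≤ δ)
    (hy : ¬(y ∈ annulus x r R ↔ y' ∈ annulus x' r R)) :
    |dist x y - r| ≤ δ ∨ |dist x y - R| ≤ δ := by
  have near := abs_le.1 h
  contrapose! hy
  rw [mem_annulus, mem_annulus]
  rcases lt_abs.1 hy.1 with hr | hr <;> rcases lt_abs.1 hy.2 with hR | hR <;>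
    constructor <;> rintro ⟨_, _⟩ <;> constructor <;> linarith

lemma annulus_max_subset (x : X) (r R s : ℝ) :
    annulus x (max r s) (max R s) ⊆ annulus x r R := fun _ hy =>
  ⟨(le_max_left r s).trans_lt hy.1,
    (le_max_iff.1 hy.2).resolve_right (not_le.2 ((le_max_right r s).trans_lt hy.1))⟩

lemma dist_le_of_mem_annulus_sdiff_max {s : ℝ}
    (hy : y ∈ annulus x r R \ annulus x (max r s) (max R s)) : dist x y ≤ s :=
  not_lt.1 fun h => hy.2 ⟨max_lt hy.1.1 h, hy.1.2.trans (le_max_left R s)⟩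

end Annulus

namespace CZO

variable {d : ℕ} (S : CZO d) {ρ : ℝ} {f g : Rd d → ℝ} {x y : Rd d} {N : ℕ} {e e' : ℕ → ℝ}

lemma measurable_K_right (x : Rd d) : Measurable fun y => S.K x y :=
  S.measK.comp (measurable_const.prodMk measurable_id)

lemma enorm_K_le (h : 0 < dist x y) : ‖S.K x y‖ₑ ≤ ENNReal.ofReal S.Cst * sizeKernel x y := by
  rw [sizeKernel, ← ENNReal.ofReal_mul S.hCst.le, Real.enorm_eq_ofReal_abs, ← div_eq_mul_inv]
  exact ENNReal.ofReal_le_ofReal (S.size x y (dist_pos.1 h))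

lemma integrableOn_K_mul (hf : Integrable f) (x : Rd d) {r : ℝ} (hr : 0 < r) :
    IntegrableOn (fun y => S.K x y * f y) {y | r < dist x y} := by
  refine Integrable.mono' (hf.norm.const_mul (S.Cst / r ^ d)).integrableOn
    ((S.measurable_K_right x).aestronglyMeasurable.mul hf.1).restrict ?_
  filter_upwards [ae_restrict_mem (measurableSet_lt measurable_const (by fun_prop))]
    with y (hy : r < dist x y)
  have := S.hCst
  rw [norm_mul]
  gcongr
  exact (S.size x y (dist_pos.1 (hr.trans hy))).trans (by gcongr)

lemma integrableOn_annulus_K_mul (hf : Integrable f) (x : Rd d) {r : ℝ} (hr : 0 < r) (R : ℝ) :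
    IntegrableOn (fun y => S.K x y * f y) (annulus x r R) :=
  (S.integrableOn_K_mul hf x hr).mono_set fun _ hy => hy.1

lemma trunc_sub_trunc (hf : Integrable f) (x : Rd d) {r R : ℝ} (hr : 0 < r) (hrR : r ≤ R) :
    S.trunc r f x - S.trunc R f x = ∫ y in annulus x r R, S.K x y * f y := by
  have union : {y : Rd d | r < dist x y} = annulus x r R ∪ {y | R < dist x y} := by
    change dist x ⁻¹' Ioi r = dist x ⁻¹' Ioc r R ∪ dist x ⁻¹' Ioi R
    rw [← preimage_union, Ioc_union_Ioi_eq_Ioi hrR]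
  have disj : Disjoint (annulus x r R) {y | R < dist x y} :=
    Set.disjoint_left.2 fun _ hy => not_lt.2 hy.2
  rw [trunc, union, setIntegral_union disj (measurableSet_lt measurable_const (by fun_prop))
    (S.integrableOn_annulus_K_mul hf x hr R) (S.integrableOn_K_mul hf x (hr.trans_le hrR)),
    trunc, add_sub_cancel_right]

/-- The `ℓ^ρ` sum of the increments of `r ↦ T_r f(x)` along the radii `e 0 ≥ ⋯ ≥ e N`, written
as integrals over annuli. -/
def partialVar (ρ : ℝ) (N : ℕ) (e : ℕ → ℝ) (f : Rd d → ℝ) (x : Rd d) : ℝ≥0∞ :=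
  (∑ i ∈ Finset.range N, ‖∫ y in annulus x (e (i + 1)) (e i), S.K x y * f y‖ₑ ^ ρ) ^ (1 / ρ)

lemma partialVar_congr (h : ∀ i ≤ N, e i = e' i) :
    S.partialVar ρ N e f x = S.partialVar ρ N e' f x := by
  unfold partialVar
  congr 1
  refine Finset.sum_congr rfl fun i hi => ?_
  rw [h i (Finset.mem_range.1 hi).le, h (i + 1) (Finset.mem_range.1 hi)]

lemma var_le_of_forall_partialVar_le (hρ : 0 < ρ) (hf : Integrable f) {c : ℝ≥0∞}
    (h : ∀ (N : ℕ) (e : ℕ → ℝ), StrictAnti e → (∀ i, 0 < e i) → Tendsto e atTop (nhds 0) →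
      S.partialVar ρ N e f x ≤ c) : S.var ρ f x ≤ c := by
  refine iSup₂_le fun e he => ?_
  rw [one_div, ENNReal.rpow_inv_le_iff hρ]
  refine ENNReal.tsum_le_of_sum_range_le fun N => ?_
  have hN := h N e he.1 he.2.1 he.2.2
  rw [partialVar, one_div, ENNReal.rpow_inv_le_iff hρ] at hN
  convert hN using 3 with i
  rw [S.trunc_sub_trunc hf x (he.2.1 _) (he.1.antitone i.le_succ), Real.enorm_eq_ofReal_abs]

lemma partialVar_le_var (hρ : 0 < ρ) (hf : Integrable f) (N : ℕ) (hanti : StrictAnti e)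
    (hpos : ∀ i, 0 < e i) (hlim : Tendsto e atTop (nhds 0)) :
    S.partialVar ρ N e f x ≤ S.var ρ f x := by
  refine le_iSup₂_of_le e ⟨hanti, hpos, hlim⟩ ?_
  refine ENNReal.rpow_le_rpow ?_ (by positivity)
  refine le_of_eq_of_le (Finset.sum_congr rfl fun i _ => ?_) (ENNReal.sum_le_tsum (Finset.range N))
  rw [S.trunc_sub_trunc hf x (hpos _) (hanti.antitone i.le_succ), Real.enorm_eq_ofReal_abs]

lemma var_indicator_eq_zero_of_ae_eq_zero (hρ : 0 < ρ) (hf : f =ᵐ[volume] 0) (A : Set (Rd d)) :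
    S.var ρ (A.indicator f) x = 0 := by
  have trunc_eq_zero : ∀ r, S.trunc r (A.indicator f) x = 0 := fun r =>
    integral_eq_zero_of_ae (ae_restrict_of_ae (hf.mono fun y hy => by simp [indicator, hy]))
  simp [var, trunc_eq_zero, hρ]

lemma var_add_le (hρ : 1 ≤ ρ) (hf : Integrable f) (hg : Integrable g) :
    S.var ρ (f + g) x ≤ S.var ρ f x + S.var ρ g x := by
  have hρ0 : 0 < ρ := one_pos.trans_le hρ
  refine S.var_le_of_forall_partialVar_le hρ0 (hf.add hg) fun N e hanti hpos hlim => ?_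
  refine le_trans ?_ (add_le_add (S.partialVar_le_var hρ0 hf N hanti hpos hlim)
    (S.partialVar_le_var hρ0 hg N hanti hpos hlim))
  refine le_trans ?_ (ENNReal.Lp_add_le _ _ _ hρ)
  unfold partialVar
  gcongr with i
  simp only [Pi.add_apply, mul_add]
  rw [integral_add (S.integrableOn_annulus_K_mul hf x (hpos _) _)
    (S.integrableOn_annulus_K_mul hg x (hpos _) _)]
  exact enorm_add_le _ _

lemma var_neg (f : Rd d → ℝ) (x : Rd d) : S.var ρ (-f) x = S.var ρ f x := by
  simp only [var, trunc, Pi.neg_apply, mul_neg, integral_neg, neg_sub_neg, abs_sub_comm]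

lemma var_sub_le (hρ : 1 ≤ ρ) (hf : Integrable f) (hg : Integrable g) :
    S.var ρ (f - g) x ≤ S.var ρ f x + S.var ρ g x := by
  rw [sub_eq_add_neg, ← S.var_neg g]
  exact S.var_add_le hρ hf hg.neg

end CZO

/-! ### Rational radii -/

section GeometricTail

variable {N : ℕ} {e : ℕ → ℝ}

/-- The sequence `e 0, …, e N, e N / 2, e N / 4, …`. -/
def geometricTail (N : ℕ) (e : ℕ → ℝ) (i : ℕ) : ℝ := e (min i N) / 2 ^ (i - N)

lemma geometricTail_of_le {i : ℕ} (hi : i ≤ N) : geometricTail N e i = e i := by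
  rw [geometricTail, min_eq_left hi, Nat.sub_eq_zero_of_le hi, pow_zero, div_one]

lemma geometricTail_succ_of_le {i : ℕ} (hi : N ≤ i) :
    geometricTail N e (i + 1) = geometricTail N e i / 2 := by
  rw [geometricTail, geometricTail, min_eq_right hi, min_eq_right (hi.trans i.le_succ),
    Nat.succ_sub hi, pow_succ, div_div]

lemma geometricTail_pos (he : ∀ i ≤ N, 0 < e i) (i : ℕ) : 0 < geometricTail N e i :=
  div_pos (he _ (min_le_right i N)) (by positivity)

lemma strictAnti_geometricTail (hanti : StrictAntiOn e (Iic N)) (he : ∀ i ≤ N, 0 < e i) :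
    StrictAnti (geometricTail N e) := by
  refine strictAnti_nat_of_succ_lt fun i => ?_
  rcases lt_or_ge i N with hi | hi
  · rw [geometricTail_of_le hi, geometricTail_of_le hi.le]
    exact hanti hi.le hi i.lt_succ_self
  · rw [geometricTail_succ_of_le hi]
    exact half_lt_self (geometricTail_pos he i)

lemma tendsto_geometricTail (N : ℕ) (e : ℕ → ℝ) :
    Tendsto (geometricTail N e) atTop (nhds 0) := by
  rw [← tendsto_add_atTop_iff_nat N]
  have h := (tendsto_pow_atTop_nhds_zero_of_lt_one (r := (2⁻¹ : ℝ)) (by norm_num)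
    (by norm_num)).const_mul (e N)
  simpa [geometricTail, div_eq_mul_inv] using h

lemma exists_rat_seq_tendsto (he : Antitone e) (N : ℕ) :
    ∃ r : ℕ → ℕ →₀ ℚ, (∀ n, StrictAntiOn (r n) (Iic N)) ∧ (∀ n, ∀ i ≤ N, e i < r n i) ∧
      ∀ i ≤ N, Tendsto (fun n => (r n i : ℝ)) atTop (nhds (e i)) := by
  have between : ∀ n i : ℕ, ∃ q : ℚ,
      e i + ((N : ℝ) - i) / (n + 1) < q ∧ q < e i + ((N : ℝ) - i + 1) / (n + 1) := fun n i =>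
    exists_rat_btwn (by gcongr; linarith)
  choose q lower upper using between
  have lt_q : ∀ n, ∀ i ≤ N, e i < q n i := fun n i hi => by
    have : (0 : ℝ) ≤ ((N : ℝ) - i) / (n + 1) :=
      div_nonneg (sub_nonneg.2 (Nat.cast_le.2 hi)) (by positivity)
    linarith [lower n i]
  have q_anti : ∀ n, StrictAnti (q n) := fun n i j hij => by
    have step : ((N : ℝ) - j + 1) / (n + 1) ≤ ((N : ℝ) - i) / (n + 1) := by
      have : (i : ℝ) + 1 ≤ j := by exact_mod_cast hij
      gcongr
      linarith
    have : (q n j : ℝ) < q n i := by linarith [lower n i, upper n j, he hij.le]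
    exact_mod_cast this
  let r : ℕ → ℕ →₀ ℚ := fun n => Finsupp.indicator (Finset.range (N + 1)) fun i _ => q n i
  have r_eq : ∀ n, ∀ i ≤ N, r n i = q n i := fun n i hi =>
    Finsupp.indicator_of_mem (Finset.mem_range_succ_iff.2 hi) _
  refine ⟨r, fun n i hi j hj hij => ?_, fun n i hi => ?_, fun i hi => ?_⟩
  · rw [r_eq n i hi, r_eq n j hj]
    exact q_anti n hij
  · rw [r_eq n i hi]
    exact lt_q n i hi
  · simp only [r_eq _ i hi]
    have upper_lim :=
      (tendsto_const_div_atTop_nhds_zero_nat ((N : ℝ) - i + 1)).comp (tendsto_add_atTop_nat 1)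
    have upper_lim := upper_lim.const_add (e i)
    rw [add_zero] at upper_lim
    refine tendsto_of_tendsto_of_tendsto_of_le_of_le tendsto_const_nhds upper_lim
      (fun n => (lt_q n i hi).le) fun n => ?_
    simpa using (upper n i).le

end GeometricTail

namespace CZO

variable {d : ℕ} (S : CZO d) {ρ : ℝ} {f : Rd d → ℝ} {x : Rd d} {e : ℕ → ℝ}

/-- The variation restricted to finitely many rational radii. Being a countable supremum it is
measurable, which is not clear for `S.var`. -/
def ratVar (ρ : ℝ) (f : Rd d → ℝ) (x : Rd d) : ℝ≥0∞ :=
  ⨆ (N : ℕ) (r : ℕ →₀ ℚ) (_ : StrictAntiOn r (Iic N) ∧ ∀ i ≤ N, 0 < r i),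
    S.partialVar ρ N (fun i => r i) f x

lemma ratVar_le_var (hρ : 0 < ρ) (hf : Integrable f) (x : Rd d) :
    S.ratVar ρ f x ≤ S.var ρ f x := by
  refine iSup_le fun N => iSup₂_le fun r hr => ?_
  have hpos : ∀ i ≤ N, (0 : ℝ) < r i := fun i hi => by exact_mod_cast hr.2 i hi
  have hanti : StrictAntiOn (fun i => (r i : ℝ)) (Iic N) := fun i hi j hj hij =>
    Rat.cast_lt.2 (hr.1 hi hj hij)
  rw [← S.partialVar_congr fun i hi => geometricTail_of_le (e := fun i => (r i : ℝ)) hi]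
  exact S.partialVar_le_var hρ hf N (strictAnti_geometricTail hanti hpos)
    (geometricTail_pos hpos) (tendsto_geometricTail N _)

lemma measurable_integral_annulus (hf : Measurable f) (r R : ℝ) :
    Measurable fun x => ∫ y in annulus x r R, S.K x y * f y := by
  let A : Set (Rd d × Rd d) := (fun p => dist p.1 p.2) ⁻¹' Ioc r R
  have hA : MeasurableSet A := measurableSet_preimage (by fun_prop) measurableSet_Ioc
  have hm : Measurable (A.indicator fun p => S.K p.1 p.2 * f p.2) :=
    (S.measK.mul (hf.comp measurable_snd)).indicator hA
  simp only [← integral_indicator (measurableSet_annulus _ _ _)]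
  exact hm.stronglyMeasurable.integral_prod_right'.measurable

lemma measurable_ratVar (hf : Measurable f) : Measurable (S.ratVar ρ f) := by
  refine .iSup fun N => .iSup fun r => .iSup fun _ => .pow_const ?_ _
  exact Finset.measurable_sum _ fun i _ => (S.measurable_integral_annulus hf _ _).enorm.pow_const _

lemma tendsto_trunc_nhdsGT (hf : Integrable f) (x : Rd d) {r : ℝ} (hr : 0 < r) :
    Tendsto (fun s => S.trunc s f x) (nhdsWithin r (Ioi r)) (nhds (S.trunc r f x)) := by
  have hm : ∀ s : ℝ, MeasurableSet {y : Rd d | s < dist x y} := fun s =>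
    measurableSet_lt measurable_const (by fun_prop)
  simp only [trunc, ← integral_indicator (hm _)]
  refine tendsto_integral_filter_of_dominated_convergence
    (fun y => ‖{y : Rd d | r < dist x y}.indicator (fun y => S.K x y * f y) y‖)
    (.of_forall fun s => ((S.measurable_K_right x).aestronglyMeasurable.mul hf.1).indicator (hm s))
    ?_ ((integrable_indicator_iff (hm r)).2 (S.integrableOn_K_mul hf x hr)).norm
    (.of_forall fun y => ?_)
  · filter_upwards [self_mem_nhdsWithin] with s (hs : r < s)
    exact .of_forall fun y => norm_indicator_le_of_subset (fun z hz => hs.trans hz) _ y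
  · refine tendsto_const_nhds.congr' ?_
    by_cases hy : r < dist x y
    · filter_upwards [nhdsWithin_le_nhds (Iio_mem_nhds hy)] with s hs
      rw [indicator_of_mem (by exact hy), indicator_of_mem (by exact hs)]
    · filter_upwards [self_mem_nhdsWithin] with s (hs : r < s)
      rw [indicator_of_notMem (by exact hy),
        indicator_of_notMem (by exact fun h => hy (hs.trans h))]

lemma partialVar_le_ratVar (hf : Integrable f) (N : ℕ) (hanti : Antitone e)
    (hpos : ∀ i, 0 < e i) : S.partialVar ρ N e f x ≤ S.ratVar ρ f x := by
  obtain ⟨r, r_anti, lt_r, r_lim⟩ := exists_rat_seq_tendsto hanti N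
  have r_pos : ∀ n, ∀ i ≤ N, 0 < r n i := fun n i hi => by
    exact_mod_cast (hpos i).trans (lt_r n i hi)
  have trunc_lim : ∀ i ≤ N, Tendsto (fun n => S.trunc (r n i) f x) atTop
      (nhds (S.trunc (e i) f x)) := fun i hi =>
    (S.tendsto_trunc_nhdsGT hf x (hpos i)).comp
      (tendsto_nhdsWithin_iff.2 ⟨r_lim i hi, .of_forall fun n => lt_r n i hi⟩)
  have integral_lim : ∀ i < N,
      Tendsto (fun n => ∫ y in annulus x (r n (i + 1)) (r n i), S.K x y * f y) atTop
        (nhds (∫ y in annulus x (e (i + 1)) (e i), S.K x y * f y)) := fun i hi => by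
    rw [← S.trunc_sub_trunc hf x (hpos _) (hanti i.le_succ)]
    refine ((trunc_lim (i + 1) hi).sub (trunc_lim i hi.le)).congr fun n => ?_
    refine S.trunc_sub_trunc hf x (by exact_mod_cast r_pos n _ hi) ?_
    exact_mod_cast (r_anti n (mem_Iic.2 hi.le) (mem_Iic.2 hi) i.lt_succ_self).le
  have partialVar_lim : Tendsto (fun n => S.partialVar ρ N (fun i => r n i) f x) atTop
      (nhds (S.partialVar ρ N e f x)) := by
    refine (tendsto_finsetSum _ fun i hi => ?_).ennrpow_const _
    exact (integral_lim i (Finset.mem_range.1 hi)).enorm.ennrpow_const _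
  exact le_of_tendsto' partialVar_lim fun n =>
    le_iSup_of_le N (le_iSup₂_of_le (r n) ⟨r_anti n, r_pos n⟩ le_rfl)

end CZO

/-! ### Kernel estimates -/

section SizeKernel

variable {d : ℕ} {x x' y y' z : Rd d} {c r δ : ℝ}

lemma sizeKernel_le_mul_sizeKernel (hc : 0 ≤ c) (h : dist x' y' ≤ c * dist x y)
    (hpos : 0 < dist x' y') : sizeKernel x y ≤ ENNReal.ofReal (c ^ d) * sizeKernel x' y' := by
  have hxy : 0 < dist x y := pos_of_mul_pos_right (hpos.trans_le h) hc
  rw [sizeKernel, sizeKernel, ← ENNReal.ofReal_mul (by positivity)]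
  refine ENNReal.ofReal_le_ofReal ?_
  rw [← div_eq_mul_inv, le_div_iff₀ (by positivity), inv_mul_le_iff₀ (by positivity), mul_comm,
    ← mul_pow]
  gcongr

/-- The weight `(δ / |x - y|)^{1/2}` used in the Cauchy–Schwarz inequality on layers of width `δ`
around spheres centred at `x`. -/
def layerWeight (δ : ℝ) (x y : Rd d) : ℝ≥0∞ := ENNReal.ofReal (δ / dist x y) ^ (1 / 2 : ℝ)

lemma layerWeight_ne_zero (hδ : 0 < δ) (h : 0 < dist x y) : layerWeight δ x y ≠ 0 := by
  simp [layerWeight, ENNReal.rpow_eq_zero_iff, div_pos hδ h]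

lemma layerWeight_ne_top (δ : ℝ) (x y : Rd d) : layerWeight δ x y ≠ ∞ :=
  ENNReal.rpow_ne_top_of_nonneg (by norm_num) ENNReal.ofReal_ne_top

lemma sizeKernel_mul_inv_layerWeight_le_sphereWeight (hδ : 2 * δ ≤ dist x y) (hpos : 0 < dist x y)
    (h : |dist x y - r| ≤ δ) :
    sizeKernel x y * (layerWeight δ x y)⁻¹ ≤ sphereWeight r x y := by
  have hr := abs_le.1 h
  have ratio_mem : r / dist x y ∈ Icc (1 / 2 : ℝ) 2 :=
    ⟨by rw [le_div_iff₀ hpos]; linarith, by rw [div_le_iff₀ hpos]; linarith⟩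
  have ratio_near : |1 - r / dist x y| ≤ δ / dist x y := by
    rw [one_sub_div hpos.ne', abs_div, abs_of_pos hpos]
    gcongr
  rw [sphereWeight, radialWeight, sphereProfile, indicator_of_mem ratio_mem, ENNReal.rpow_neg,
    layerWeight]
  gcongr

lemma measurable_layerWeight {u : Rd d → ℝ} (hu : Measurable u) (x : Rd d) :
    Measurable fun y => layerWeight (u y) x y := by
  unfold layerWeight
  fun_prop

lemma layerWeight_le_two_mul_layerWeight (hδ : 0 ≤ δ) (hpos : 0 < dist x y)
    (h : dist x y ≤ 2 * dist x z) : layerWeight δ x z ≤ 2 * layerWeight δ x y := by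
  have ratio_le : δ / dist x z ≤ 2 * (δ / dist x y) := by
    rw [← mul_div_assoc, div_le_div_iff₀ (by linarith) hpos]
    nlinarith
  calc layerWeight δ x z ≤ ENNReal.ofReal (2 * (δ / dist x y)) ^ (1 / 2 : ℝ) :=
        ENNReal.rpow_le_rpow (ENNReal.ofReal_le_ofReal ratio_le) (by norm_num)
    _ = 2 ^ (1 / 2 : ℝ) * layerWeight δ x y := by
        rw [ENNReal.ofReal_mul zero_le_two, ENNReal.mul_rpow_of_nonneg _ _ (by norm_num),
          ENNReal.ofReal_ofNat, layerWeight]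
    _ ≤ 2 * layerWeight δ x y := by
        gcongr
        exact (ENNReal.rpow_le_rpow_of_exponent_le one_le_two
          (by norm_num : (1 / 2 : ℝ) ≤ 1)).trans_eq (ENNReal.rpow_one 2)

lemma sizeKernel_mul_inv_layerWeight_le_mul (hδ : 0 ≤ δ) (hpos : 0 < dist x z)
    (hzy : dist x z ≤ 2 * dist x y) (hyz : dist x y ≤ 2 * dist x z) :
    sizeKernel x y * (layerWeight δ x y)⁻¹ ≤
      2 ^ (d + 1) * (sizeKernel x z * (layerWeight δ x z)⁻¹) := by
  have inv_le : (layerWeight δ x y)⁻¹ ≤ 2 * (layerWeight δ x z)⁻¹ := by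
    have h := ENNReal.inv_le_inv.2 (layerWeight_le_two_mul_layerWeight hδ (by linarith) hyz)
    rw [ENNReal.mul_inv (by simp) (by simp)] at h
    exact (ENNReal.inv_mul_le_iff two_ne_zero ENNReal.ofNat_ne_top).1 h
  calc _ ≤ (ENNReal.ofReal (2 ^ d) * sizeKernel x z) * (2 * (layerWeight δ x z)⁻¹) :=
        mul_le_mul' (sizeKernel_le_mul_sizeKernel zero_le_two hzy hpos) inv_le
    _ = _ := by
        rw [ENNReal.ofReal_pow zero_le_two, ENNReal.ofReal_ofNat]
        ring

end SizeKernel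

namespace CZO

variable {d : ℕ} (S : CZO d) {x x' y : Rd d} {a c r δ : ℝ}

lemma tailWeight_eq (h : a / dist x y < 1) :
    S.tailWeight a x y = sizeKernel x y * ENNReal.ofReal (S.modulus (a / dist x y)) := by
  rw [tailWeight, radialWeight, indicator_of_mem (mem_Iio.2 h)]

lemma sizeKernel_mul_layerWeight_le_tailWeight (hδ : 0 < δ) (h : δ < dist x y) :
    sizeKernel x y * layerWeight δ x y ≤ S.tailWeight δ x y := by
  have hpos : 0 < dist x y := hδ.trans h
  rw [S.tailWeight_eq ((div_lt_one hpos).2 h), layerWeight,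
    ENNReal.ofReal_rpow_of_nonneg (by positivity) (by norm_num), ← Real.sqrt_eq_rpow]
  gcongr
  exact S.sqrt_le_modulus _

lemma sizeKernel_le_mul_tailWeight (hr : 0 < r) (hle : r ≤ dist x y) (hge : dist x y ≤ c * r) :
    sizeKernel x y ≤ ENNReal.ofReal (√(2 * c)) * S.tailWeight (r / 2) x y := by
  have hpos : 0 < dist x y := hr.trans_le hle
  have hc : 0 < c := pos_of_mul_pos_left (hpos.trans_le hge) hr.le
  have one_le : 1 ≤ √(2 * c) * S.modulus (r / 2 / dist x y) := calc
    1 ≤ √(2 * c * (r / 2 / dist x y)) := by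
      rw [Real.one_le_sqrt, ← mul_div_assoc, one_le_div hpos]
      linarith
    _ = √(2 * c) * √(r / 2 / dist x y) := Real.sqrt_mul (by positivity) _
    _ ≤ √(2 * c) * S.modulus (r / 2 / dist x y) := by gcongr; exact S.sqrt_le_modulus _
  rw [S.tailWeight_eq (by rw [div_lt_one hpos]; linarith), mul_left_comm,
    ← ENNReal.ofReal_mul (by positivity)]
  exact le_mul_of_one_le_right' (ENNReal.one_le_ofReal.2 one_le)

lemma ofReal_abs_K_sub_add_le (hx : dist x x' ≤ δ) (hy : 2 * δ < dist x y) :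
    ENNReal.ofReal (|S.K x y - S.K x' y| + |S.K y x - S.K y x'|) ≤
      ENNReal.ofReal S.Cst * S.tailWeight δ x y := by
  have hδ : 0 ≤ δ := dist_nonneg.trans hx
  have hpos : 0 < dist x y := by linarith
  have := S.hCst
  rw [S.tailWeight_eq (by rw [div_lt_one hpos]; linarith), sizeKernel,
    ← ENNReal.ofReal_mul (by positivity), ← ENNReal.ofReal_mul (by positivity)]
  refine ENNReal.ofReal_le_ofReal ((S.smooth x x' y (dist_pos.1 hpos) (by linarith)).trans ?_)
  rw [div_eq_mul_inv, mul_assoc, mul_comm (S.ω _)]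
  gcongr
  exact (S.omega_le_modulus (by positivity)).trans (S.modulus_mono (by gcongr))

lemma enorm_K_sub_left_le (hx : dist x x' ≤ δ) (hy : 2 * δ < dist x y) :
    ‖S.K x y - S.K x' y‖ₑ ≤ ENNReal.ofReal S.Cst * S.tailWeight δ x y := by
  refine le_trans ?_ (S.ofReal_abs_K_sub_add_le hx hy)
  rw [Real.enorm_eq_ofReal_abs]
  exact ENNReal.ofReal_le_ofReal (le_add_of_nonneg_right (abs_nonneg _))

lemma enorm_K_sub_right_le (hx : dist x x' ≤ δ) (hy : 2 * δ < dist x y) :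
    ‖S.K y x - S.K y x'‖ₑ ≤ ENNReal.ofReal S.Cst * S.tailWeight δ x y := by
  refine le_trans ?_ (S.ofReal_abs_K_sub_add_le hx hy)
  rw [Real.enorm_eq_ofReal_abs]
  exact ENNReal.ofReal_le_ofReal (le_add_of_nonneg_left (abs_nonneg _))

/- Cauchy–Schwarz against `layerWeight δ x`: the inverse of this weight is integrable over the
boundary layers of width `δ`, uniformly in their radii, and the weight itself over their union. -/
lemma sum_setLIntegral_boundaryLayer_sq_le [NeZero d] {ι : Type*} (s : Finset ι) (x : Rd d)
    (hδ : 0 < δ) {B : ι → Set (Rd d)} (hB : ∀ i ∈ s, MeasurableSet (B i))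
    (hdisj : (s : Set ι).PairwiseDisjoint B) {r R : ι → ℝ} (hr : ∀ i ∈ s, 3 * δ ≤ r i)
    (hR : ∀ i ∈ s, 3 * δ ≤ R i)
    (hlayer : ∀ i ∈ s, ∀ y ∈ B i, |dist x y - r i| ≤ δ ∨ |dist x y - R i| ≤ δ) :
    ∑ i ∈ s, (∫⁻ y in B i, sizeKernel x y) ^ (2 : ℝ) ≤ 2 * sphereMass d * S.tailMass := by
  have far : ∀ i ∈ s, ∀ y ∈ B i, 2 * δ ≤ dist x y := fun i hi y hy => by
    have := hr i hi
    have := hR i hi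
    rcases hlayer i hi y hy with h | h <;> linarith [(abs_le.1 h).1]
  refine (sum_setLIntegral_sq_le s hB hdisj (measurable_sizeKernel x)
    (measurable_layerWeight measurable_const x)
    (fun i hi y hy => layerWeight_ne_zero hδ (by linarith [far i hi y hy]))
    (fun i _ y _ => layerWeight_ne_top δ x y) ?_).trans (mul_le_mul_right ?_ _)
  · intro i hi
    calc ∫⁻ y in B i, sizeKernel x y * (layerWeight δ x y)⁻¹
        ≤ ∫⁻ y in B i, sphereWeight (r i) x y + sphereWeight (R i) x y := by
          refine setLIntegral_mono' (hB i hi) fun y hy => ?_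
          have hy2 := far i hi y hy
          have hpos : 0 < dist x y := by linarith
          rcases hlayer i hi y hy with h | h
          · exact (sizeKernel_mul_inv_layerWeight_le_sphereWeight hy2 hpos h).trans le_self_add
          · exact (sizeKernel_mul_inv_layerWeight_le_sphereWeight hy2 hpos h).trans le_add_self
      _ ≤ ∫⁻ y, sphereWeight (r i) x y + sphereWeight (R i) x y := setLIntegral_le_lintegral _ _
      _ = 2 * sphereMass d := by
          rw [lintegral_add_left (measurable_sphereWeight _ x),
            lintegral_sphereWeight (by linarith [hr i hi]),
            lintegral_sphereWeight (by linarith [hR i hi]), two_mul]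
  · rw [← S.lintegral_tailWeight hδ x]
    refine (setLIntegral_mono' (s.measurableSet_biUnion hB) fun y hy => ?_).trans
      (setLIntegral_le_lintegral _ _)
    obtain ⟨i, hi, hy⟩ := mem_iUnion₂.1 hy
    exact S.sizeKernel_mul_layerWeight_le_tailWeight hδ (by linarith [far i hi y hy])

end CZO

/-! ### The bounded part -/

lemma enorm_setIntegral_le_add_enorm_setIntegral {α : Type*} [MeasurableSpace α] {μ : Measure α}
    {A A' B : Set α} (hA' : MeasurableSet A') (hB : MeasurableSet B) (hA'A : A' ⊆ A)
    {F G : α → ℝ} (hF : IntegrableOn F A μ) (hGA' : IntegrableOn G A' μ)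
    (hGB : IntegrableOn G B μ) :
    ‖∫ y in A, F y ∂μ‖ₑ ≤ ((∫⁻ y in A \ A', ‖F y‖ₑ ∂μ) + ∫⁻ y in A', ‖F y - G y‖ₑ ∂μ) +
      ((∫⁻ y in A' \ B, ‖G y‖ₑ ∂μ) + ∫⁻ y in B \ A', ‖G y‖ₑ ∂μ) + ‖∫ y in B, G y ∂μ‖ₑ := by
  have split_A : ∫ y in A, F y ∂μ =
      (∫ y in A \ A', F y ∂μ) + ((∫ y in A', F y - G y ∂μ) + ∫ y in A', G y ∂μ) := by
    rw [integral_sub (hF.mono_set hA'A) hGA', sub_add_cancel, add_comm,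
      ← integral_inter_add_sdiff hA' hF, inter_eq_self_of_subset_right hA'A]
  have split_A' := integral_inter_add_sdiff hB hGA'
  have split_B := integral_inter_add_sdiff hA' hGB
  rw [inter_comm] at split_B
  have total : ∫ y in A, F y ∂μ = (∫ y in A \ A', F y ∂μ) + (∫ y in A', F y - G y ∂μ) +
      ((∫ y in A' \ B, G y ∂μ) - ∫ y in B \ A', G y ∂μ) + ∫ y in B, G y ∂μ := by
    linarith
  rw [total]
  refine (enorm_add_le _ _).trans (add_le_add_left ((enorm_add_le _ _).trans (add_le_add ?_ ?_)) _)
  · exact (enorm_add_le _ _).trans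
      (add_le_add (enorm_integral_le_lintegral_enorm _) (enorm_integral_le_lintegral_enorm _))
  · exact enorm_sub_le.trans
      (add_le_add (enorm_integral_le_lintegral_enorm _) (enorm_integral_le_lintegral_enorm _))

lemma setLIntegral_enorm_mul_le {α : Type*} [MeasurableSpace α] {μ : Measure α} {E : Set α}
    (hE : MeasurableSet E) {k g : α → ℝ} {Φ : α → ℝ≥0∞} {c M : ℝ≥0∞} (hM : ∀ᵐ y ∂μ, ‖g y‖ₑ ≤ M)
    (hΦ : Measurable Φ) (hk : ∀ y ∈ E, ‖k y‖ₑ ≤ c * Φ y) :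
    ∫⁻ y in E, ‖k y * g y‖ₑ ∂μ ≤ c * M * ∫⁻ y in E, Φ y ∂μ := by
  rw [← lintegral_const_mul _ hΦ]
  refine lintegral_mono_ae ?_
  filter_upwards [ae_restrict_mem hE, ae_restrict_of_ae hM] with y hy hyM
  rw [enorm_mul, mul_right_comm]
  exact mul_le_mul' (hk y hy) hyM

lemma sum_mul_rpow_rpow_inv {ι : Type*} (s : Finset ι) {p : ℝ} (hp : 0 < p) (c : ℝ≥0∞)
    (a : ι → ℝ≥0∞) :
    (∑ i ∈ s, (c * a i) ^ p) ^ (1 / p) = c * (∑ i ∈ s, a i ^ p) ^ (1 / p) := by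
  simp only [ENNReal.mul_rpow_of_nonneg _ _ hp.le, ← Finset.mul_sum]
  rw [ENNReal.mul_rpow_of_nonneg _ _ (by positivity), ← ENNReal.rpow_mul, mul_one_div_cancel hp.ne',
    ENNReal.rpow_one]

namespace CZO

variable {d : ℕ} (S : CZO d) {ρ : ℝ} {g : Rd d → ℝ} {M : ℝ≥0∞} {R : Cube d} {x ξ y : Rd d}

/-- The weight bounding the local part and the kernel differences in the comparison of two points
of the cube `R`. -/
def cubeWeight (R : Cube d) (ξ y : Rd d) : ℝ≥0∞ :=
  ENNReal.ofReal √(8 * √d) * S.tailWeight (R.l / 2) ξ y + S.tailWeight (R.diam) ξ y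

lemma measurable_cubeWeight (R : Cube d) (ξ : Rd d) : Measurable (S.cubeWeight R ξ) :=
  ((S.measurable_tailWeight _ ξ).const_mul _).add (S.measurable_tailWeight _ ξ)

lemma lintegral_cubeWeight [NeZero d] (R : Cube d) (ξ : Rd d) :
    ∫⁻ y, S.cubeWeight R ξ y = (ENNReal.ofReal √(8 * √d) + 1) * S.tailMass := by
  have hl := R.hl
  have hδ := R.diam_pos
  unfold cubeWeight
  rw [lintegral_add_left ((S.measurable_tailWeight _ ξ).const_mul _),
    lintegral_const_mul _ (S.measurable_tailWeight _ ξ), S.lintegral_tailWeight (by positivity),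
    S.lintegral_tailWeight (by positivity), add_mul, one_mul]

lemma enorm_K_le_cubeWeight (hξ : ξ ∈ R.set) (hy : y ∉ R.dilate 3)
    (hnear : dist ξ y ≤ 4 * R.diam) :
    ‖S.K ξ y‖ₑ ≤ ENNReal.ofReal S.Cst * S.cubeWeight R ξ y := by
  have hle := R.l_le_dist_of_notMem_dilate hξ hy
  refine (S.enorm_K_le (R.hl.trans_le hle)).trans ?_
  gcongr
  rw [Cube.diam, ← mul_assoc] at hnear
  refine (S.sizeKernel_le_mul_tailWeight R.hl hle hnear).trans ?_
  rw [← mul_assoc, show (2 : ℝ) * 4 = 8 by norm_num]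
  exact le_self_add

lemma setLIntegral_enorm_K_mul_indicator_le (hM : ∀ᵐ y, ‖g y‖ₑ ≤ M) (hξ : ξ ∈ R.set)
    {E : Set (Rd d)} (mE : MeasurableSet E) (hE : ∀ y ∈ E, dist ξ y ≤ 4 * R.diam) :
    ∫⁻ y in E, ‖S.K ξ y * (R.dilate 3)ᶜ.indicator g y‖ₑ ≤
      ENNReal.ofReal S.Cst * M * ∫⁻ y in E, S.cubeWeight R ξ y := by
  have move : ∀ y, S.K ξ y * (R.dilate 3)ᶜ.indicator g y =
      (R.dilate 3)ᶜ.indicator (S.K ξ) y * g y := fun y => by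
    rw [← indicator_mul_left, ← indicator_mul_right]
  simp only [move]
  refine setLIntegral_enorm_mul_le mE hM (S.measurable_cubeWeight R ξ) fun y hy => ?_
  by_cases h : y ∈ R.dilate 3
  · simp [h]
  · rw [indicator_of_mem h]
    exact S.enorm_K_le_cubeWeight hξ h (hE y hy)

lemma setLIntegral_enorm_K_sub_mul_le [NeZero d] (hM : ∀ᵐ y, ‖g y‖ₑ ≤ M) (hx : x ∈ R.set)
    (hξ : ξ ∈ R.set) {E : Set (Rd d)} (mE : MeasurableSet E)
    (hE : ∀ y ∈ E, 4 * R.diam < dist ξ y) :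
    ∫⁻ y in E, ‖S.K ξ y * (R.dilate 3)ᶜ.indicator g y - S.K x y * g y‖ₑ ≤
      ENNReal.ofReal S.Cst * M * ∫⁻ y in E, S.cubeWeight R ξ y := by
  have hδ := R.diam_pos
  have eqOn : EqOn (fun y => ‖S.K ξ y * (R.dilate 3)ᶜ.indicator g y - S.K x y * g y‖ₑ)
      (fun y => ‖(S.K ξ y - S.K x y) * g y‖ₑ) E := fun y hy => by
    have hy3 : y ∉ R.dilate 3 := fun h => by
      linarith [hE y hy, Cube.dist_le_two_mul_diam hξ h]
    simp only [indicator_of_mem (mem_compl hy3), sub_mul]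
  rw [setLIntegral_congr_fun mE eqOn]
  refine setLIntegral_enorm_mul_le mE hM (S.measurable_cubeWeight R ξ) fun y hy => ?_
  refine (S.enorm_K_sub_left_le (R.dist_le_diam hξ hx) (by linarith [hE y hy])).trans ?_
  gcongr
  exact le_add_self

lemma enorm_setIntegral_annulus_le [NeZero d] (hg : Integrable g) (hM : ∀ᵐ y, ‖g y‖ₑ ≤ M)
    (hx : x ∈ R.set) (hξ : ξ ∈ R.set) {s : ℝ} (hs : 0 < s) (t : ℝ) :
    letI A' := annulus ξ (max s (4 * R.diam)) (max t (4 * R.diam))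
    letI B := annulus x (max s (4 * R.diam)) (max t (4 * R.diam))
    ‖∫ y in annulus ξ s t, S.K ξ y * (R.dilate 3)ᶜ.indicator g y‖ₑ ≤
      ENNReal.ofReal S.Cst * M * (∫⁻ y in annulus ξ s t, S.cubeWeight R ξ y) +
        ENNReal.ofReal S.Cst * M *
          ((∫⁻ y in A' \ B, sizeKernel x y) + ∫⁻ y in B \ A', sizeKernel x y) +
        ‖∫ y in B, S.K x y * g y‖ₑ := by
  set A' := annulus ξ (max s (4 * R.diam)) (max t (4 * R.diam))
  set B := annulus x (max s (4 * R.diam)) (max t (4 * R.diam))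
  have hδ := R.diam_pos
  have mA' : MeasurableSet A' := measurableSet_annulus _ _ _
  have mB : MeasurableSet B := measurableSet_annulus _ _ _
  have A'_sub : A' ⊆ annulus ξ s t := annulus_max_subset ξ s t _
  have far_ξ : ∀ y ∈ A', 4 * R.diam < dist ξ y := fun y hy => (le_max_right _ _).trans_lt hy.1
  have far_x : ∀ y ∈ A' ∪ B, 3 * R.diam < dist x y := by
    rintro y (hy | hy)
    · linarith [far_ξ y hy, dist_triangle ξ x y, R.dist_le_diam hξ hx]
    · linarith [(le_max_right s (4 * R.diam)).trans_lt hy.1]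
  have hG : IntegrableOn (fun y => S.K x y * g y) (A' ∪ B) :=
    (S.integrableOn_K_mul hg x (by positivity)).mono_set far_x
  have size_bound : ∀ E, MeasurableSet E → E ⊆ A' ∪ B → ∫⁻ y in E, ‖S.K x y * g y‖ₑ ≤
      ENNReal.ofReal S.Cst * M * ∫⁻ y in E, sizeKernel x y := fun E mE hE =>
    setLIntegral_enorm_mul_le mE hM (measurable_sizeKernel x) fun y hy =>
      S.enorm_K_le (by linarith [far_x y (hE hy)])
  refine (enorm_setIntegral_le_add_enorm_setIntegral mA' mB A'_sub
    (S.integrableOn_annulus_K_mul (hg.indicator (R.measurableSet_dilate 3).compl) ξ hs t)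
    (hG.mono_set subset_union_left) (hG.mono_set subset_union_right)).trans ?_
  gcongr
  · rw [← lintegral_inter_add_sdiff (S.cubeWeight R ξ) (annulus ξ s t) mA',
      inter_eq_self_of_subset_right A'_sub, add_comm, mul_add]
    exact add_le_add (S.setLIntegral_enorm_K_sub_mul_le hM hx hξ mA' far_ξ)
      (S.setLIntegral_enorm_K_mul_indicator_le hM hξ ((measurableSet_annulus _ _ _).diff mA')
        fun y hy => dist_le_of_mem_annulus_sdiff_max hy)
  · rw [mul_add]
    exact add_le_add (size_bound _ (mA'.diff mB) (sdiff_subset.trans subset_union_left))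
      (size_bound _ (mB.diff mA') (sdiff_subset.trans subset_union_right))

lemma sum_setLIntegral_sq_le_of_not_mem_annulus_iff [NeZero d] (hx : x ∈ R.set) (hξ : ξ ∈ R.set)
    (N : ℕ) {e : ℕ → ℝ} (hfar : ∀ i, 4 * R.diam ≤ e i) {B : ℕ → Set (Rd d)}
    (hB : ∀ i, MeasurableSet (B i)) (hdisj : Pairwise (Function.onFun Disjoint B))
    (hiff : ∀ i, ∀ y ∈ B i,
      ¬(y ∈ annulus x (e (i + 1)) (e i) ↔ y ∈ annulus ξ (e (i + 1)) (e i))) :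
    ∑ i ∈ Finset.range N, (∫⁻ y in B i, sizeKernel x y) ^ (2 : ℝ) ≤
      2 * sphereMass d * S.tailMass := by
  have hδ := R.diam_pos
  exact S.sum_setLIntegral_boundaryLayer_sq_le _ x hδ (fun i _ => hB i)
    (fun i _ j _ hij => hdisj hij) (fun i _ => by linarith [hfar (i + 1)])
    (fun i _ => by linarith [hfar i]) fun i _ y hy =>
      abs_dist_sub_le_of_not_mem_annulus_iff
        ((abs_dist_sub_le x ξ y).trans (R.dist_le_diam hx hξ)) (hiff i y hy)

lemma sum_setLIntegral_symmDiff_annulus_le [NeZero d] (hx : x ∈ R.set) (hξ : ξ ∈ R.set)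
    (N : ℕ) {e : ℕ → ℝ} (he : Antitone e) (hfar : ∀ i, 4 * R.diam ≤ e i) :
    letI A i := annulus ξ (e (i + 1)) (e i)
    letI B i := annulus x (e (i + 1)) (e i)
    (∑ i ∈ Finset.range N, ((∫⁻ y in A i \ B i, sizeKernel x y) +
      ∫⁻ y in B i \ A i, sizeKernel x y) ^ (2 : ℝ)) ^ (1 / 2 : ℝ) ≤
      2 * (2 * sphereMass d * S.tailMass) ^ (1 / 2 : ℝ) := by
  have mA : ∀ (z : Rd d) (i : ℕ), MeasurableSet (annulus z (e (i + 1)) (e i)) := fun z i =>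
    measurableSet_annulus _ _ _
  have outside_x := S.sum_setLIntegral_sq_le_of_not_mem_annulus_iff hx hξ N hfar
    (fun i => (mA ξ i).diff (mA x i))
    (fun i j hij => (pairwise_disjoint_annulus ξ he hij).mono sdiff_subset sdiff_subset)
    fun i y hy h => hy.2 (h.2 hy.1)
  have outside_ξ := S.sum_setLIntegral_sq_le_of_not_mem_annulus_iff hx hξ N hfar
    (fun i => (mA x i).diff (mA ξ i))
    (fun i j hij => (pairwise_disjoint_annulus x he hij).mono sdiff_subset sdiff_subset)
    fun i y hy h => hy.2 (h.1 hy.1)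
  rw [two_mul ((2 * sphereMass d * S.tailMass) ^ (1 / 2 : ℝ))]
  exact (ENNReal.Lp_add_le _ _ _ one_le_two).trans (add_le_add
    (ENNReal.rpow_le_rpow outside_x (by norm_num)) (ENNReal.rpow_le_rpow outside_ξ (by norm_num)))

lemma sum_setLIntegral_cubeWeight_le [NeZero d] (N : ℕ) {e : ℕ → ℝ} (he : Antitone e) :
    ∑ i ∈ Finset.range N, ∫⁻ y in annulus ξ (e (i + 1)) (e i), S.cubeWeight R ξ y ≤
      (ENNReal.ofReal √(8 * √d) + 1) * S.tailMass := by
  rw [← S.lintegral_cubeWeight R ξ, ← lintegral_biUnion_finset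
    (fun i _ j _ hij => pairwise_disjoint_annulus ξ he hij)
    fun i _ => measurableSet_annulus _ _ _]
  exact setLIntegral_le_lintegral _ _

theorem exists_var_indicator_compl_dilate_le_ratVar_add [NeZero d] (hρ : 2 ≤ ρ) :
    ∃ C : ℝ≥0∞, C ≠ ∞ ∧ ∀ (g : Rd d → ℝ) (M : ℝ≥0∞), Integrable g → (∀ᵐ y, ‖g y‖ₑ ≤ M) →
      ∀ (R : Cube d), ∀ x ∈ R.set, ∀ ξ ∈ R.set,
        S.var ρ ((R.dilate 3)ᶜ.indicator g) ξ ≤ S.ratVar ρ g x + C * M := by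
  have tailMass_ne_top := S.tailMass_ne_top
  have sphereMass_ne_top := sphereMass_ne_top d
  refine ⟨ENNReal.ofReal S.Cst * ((ENNReal.ofReal √(8 * √d) + 1) * S.tailMass +
    2 * (2 * sphereMass d * S.tailMass) ^ (1 / 2 : ℝ)), by finiteness,
    fun g M hg hM R x hx ξ hξ => ?_⟩
  refine S.var_le_of_forall_partialVar_le (by linarith)
    (hg.indicator (R.measurableSet_dilate 3).compl) fun N e he hpos _ => ?_
  have far_anti : Antitone fun i => max (e i) (4 * R.diam) := fun i j hij =>
    max_le_max_right _ (he.antitone hij)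
  have main_term := S.partialVar_le_ratVar (ρ := ρ) (x := x) hg N far_anti fun i =>
    lt_max_of_lt_left (hpos i)
  have layer_term := S.sum_setLIntegral_symmDiff_annulus_le hx hξ N far_anti fun i =>
    le_max_right _ _
  refine (sum_rpow_rpow_inv_le_add_add _ hρ fun i _ =>
    S.enorm_setIntegral_annulus_le hg hM hx hξ (hpos (i + 1)) (e i)).trans ?_
  rw [← Finset.mul_sum, sum_mul_rpow_rpow_inv _ two_pos, ← mul_add, add_comm, mul_right_comm]
  gcongr ?_ + _ * (?_ + ?_) * _
  · exact main_term
  · exact S.sum_setLIntegral_cubeWeight_le N he.antitone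

end CZO

/-! ### The bad part -/

lemma tsum_indicator_eq_of_mem {α ι M : Type*} [AddCommMonoid M] [TopologicalSpace M] {P : Set ι}
    {s : ι → Set α} (hP : P.PairwiseDisjoint s) (F : ι → α → M) {i : ι} (hi : i ∈ P) {y : α}
    (hy : y ∈ s i) : ∑' j : P, (s j).indicator (F j) y = F i y := by
  rw [tsum_eq_single (⟨i, hi⟩ : P), indicator_of_mem hy]
  intro j hne
  refine indicator_of_notMem (fun hyj => ?_) _
  exact (hP j.2 hi fun h => hne (Subtype.ext h)).ne_of_mem hyj hy rfl

section Integrals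

variable {α : Type*} [MeasurableSpace α] {μ : Measure α}

lemma enorm_setIntegral_le_of_forall_inter {ι : Type*} [Countable ι] {s : ι → Set α}
    (hs : ∀ i, MeasurableSet (s i)) (hdisj : Pairwise (Function.onFun Disjoint s)) {A : Set α}
    (hA : MeasurableSet A) {F : α → ℝ} (hF : IntegrableOn F A μ)
    (hF0 : ∀ y ∉ ⋃ i, s i, F y = 0) {G : α → ℝ≥0∞}
    (h : ∀ i, ‖∫ y in s i ∩ A, F y ∂μ‖ₑ ≤ ∫⁻ y in s i ∩ A, G y ∂μ) :
    ‖∫ y in A, F y ∂μ‖ₑ ≤ ∫⁻ y in A, G y ∂μ := by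
  have disj : Pairwise (Function.onFun Disjoint fun i => s i ∩ A) := fun i j hij =>
    (hdisj hij).mono inter_subset_left inter_subset_left
  have meas : ∀ i, MeasurableSet (s i ∩ A) := fun i => (hs i).inter hA
  have subset : ⋃ i, s i ∩ A ⊆ A := iUnion_subset fun i => inter_subset_right
  have eq : ∫ y in A, F y ∂μ = ∫ y in ⋃ i, s i ∩ A, F y ∂μ := by
    refine setIntegral_eq_of_subset_of_forall_sdiff_eq_zero hA subset fun y hy => hF0 y fun hs => ?_
    exact hy.2 (iUnion_inter A s ▸ ⟨hs, hy.1⟩)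
  calc ‖∫ y in A, F y ∂μ‖ₑ ≤ ∑' i, ‖∫ y in s i ∩ A, F y ∂μ‖ₑ := by
        rw [eq, integral_iUnion meas disj (hF.mono_set subset)]
        exact enorm_tsum_le_tsum_enorm
    _ ≤ ∑' i, ∫⁻ y in s i ∩ A, G y ∂μ := ENNReal.tsum_le_tsum h
    _ = ∫⁻ y in ⋃ i, s i ∩ A, G y ∂μ := (lintegral_iUnion meas disj _).symm
    _ ≤ ∫⁻ y in A, G y ∂μ := lintegral_mono_set subset

/- The function `k` is within a factor `c` of a constant on `E`, so `φ` may be replaced there by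
its average. -/
lemma setLIntegral_mul_le_of_forall_le_mul {E : Set α} (hE : MeasurableSet E) {φ k : α → ℝ≥0∞}
    (hφ : Measurable φ) {c κ : ℝ≥0∞} (hc : c ≠ ∞) (hk : ∀ y ∈ E, ∀ z ∈ E, k y ≤ c * k z)
    (hκ : ∫⁻ y in E, φ y ∂μ ≤ κ * μ E) :
    ∫⁻ y in E, φ y * k y ∂μ ≤ c ^ 2 * κ * ∫⁻ y in E, k y ∂μ := by
  rcases E.eq_empty_or_nonempty with rfl | ⟨z, hz⟩
  · simp
  calc ∫⁻ y in E, φ y * k y ∂μ ≤ ∫⁻ y in E, φ y * (c * k z) ∂μ :=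
        setLIntegral_mono' hE fun y hy => mul_le_mul_right (hk y hy z hz) _
    _ = (∫⁻ y in E, φ y ∂μ) * (c * k z) := lintegral_mul_const _ hφ
    _ ≤ κ * μ E * (c * k z) := by gcongr
    _ = c * κ * ∫⁻ _ in E, k z ∂μ := by rw [setLIntegral_const]; ring
    _ ≤ c * κ * ∫⁻ y in E, c * k y ∂μ := by
        gcongr c * κ * ?_
        exact setLIntegral_mono' hE fun y hy => hk z hz y hy
    _ = c ^ 2 * κ * ∫⁻ y in E, k y ∂μ := by rw [lintegral_const_mul' _ _ hc]; ring

lemma mul_rpow_half_le_add (p q : ℝ≥0∞) : (p * q) ^ (1 / 2 : ℝ) ≤ p + q := by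
  calc (p * q) ^ (1 / 2 : ℝ) ≤ ((p + q) ^ (2 : ℝ)) ^ (1 / 2 : ℝ) := by
        rw [ENNReal.rpow_two, sq]
        gcongr
        exacts [le_self_add, le_add_self]
    _ = p + q := by rw [one_div, ENNReal.rpow_rpow_inv two_ne_zero]

end Integrals

section BadPart

variable {d : ℕ} {P : Set (Cube d)} {b : Rd d → ℝ} {κ : ℝ≥0∞} {Q R : Cube d} {x ξ y : Rd d}
  {r s : ℝ}

/-- The bad part of a Calderón–Zygmund decomposition: a function supported on a countable union
of disjoint cubes, with mean zero and mean absolute value at most `κ` on each of them. -/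
structure IsBadPart (P : Set (Cube d)) (b : Rd d → ℝ) (κ : ℝ≥0∞) : Prop where
  countable : P.Countable
  pairwiseDisjoint : P.PairwiseDisjoint Cube.set
  measurable : Measurable b
  integrable : Integrable b
  eq_zero_of_notMem : ∀ y ∉ ⋃ Q ∈ P, Q.set, b y = 0
  setIntegral_eq_zero : ∀ Q ∈ P, ∫ y in Q.set, b y = 0
  setLIntegral_le : ∀ Q ∈ P, ∫⁻ y in Q.set, ‖b y‖ₑ ≤ κ * Q.vol

/-- The diameter of the cube of the disjoint family `P` that contains `y`, and `0` if there is
none. The sum has at most one nonzero term; it makes measurability immediate. -/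
def cubeScale (P : Set (Cube d)) (y : Rd d) : ℝ :=
  (∑' Q : P, (Q : Cube d).set.indicator (fun _ => ENNReal.ofReal (Q : Cube d).diam) y).toReal

/-- Every cube of `P` is far from `x` relative to its size. -/
def IsFarFrom (P : Set (Cube d)) (x : Rd d) : Prop :=
  ∀ Q ∈ P, ∀ y ∈ Q.set, 8 * ((1 + √d) * Q.diam) < dist x y

/-- The cubes of `P` in the ball of radius `3 diam R` around `ξ`. -/
def nearCubes (P : Set (Cube d)) (R : Cube d) (ξ : Rd d) : Set (Cube d) :=
  {Q ∈ P | Q.set ⊆ Metric.closedBall ξ (3 * R.diam)}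

/-- The cubes of `P` outside `3R` which meet `A` without being contained in it. -/
def crossingCubes (P : Set (Cube d)) (R : Cube d) (A : Set (Rd d)) : Set (Cube d) :=
  {Q ∈ P | Disjoint Q.set (R.dilate 3) ∧ ¬Disjoint Q.set A ∧ ¬Q.set ⊆ A}

lemma measurable_cubeScale (hP : P.Countable) : Measurable (cubeScale P) := by
  have := hP.to_subtype
  exact (Measurable.tsum fun Q : P =>
    measurable_const.indicator (Q : Cube d).measurableSet_set).ennreal_toReal

lemma cubeScale_eq [NeZero d] (hP : P.PairwiseDisjoint Cube.set) (hQ : Q ∈ P) (hy : y ∈ Q.set) :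
    cubeScale P y = Q.diam := by
  rw [cubeScale, tsum_indicator_eq_of_mem hP (fun Q _ => ENNReal.ofReal Q.diam) hQ hy,
    ENNReal.toReal_ofReal Q.diam_pos.le]

namespace IsBadPart

lemma measurableSet_biUnion (hb : IsBadPart P b κ) {s : Set (Cube d)} (hs : s ⊆ P) :
    MeasurableSet (⋃ Q ∈ s, Q.set) :=
  .biUnion (hb.countable.mono hs) fun Q _ => Q.measurableSet_set

lemma setLIntegral_biUnion_le (hb : IsBadPart P b κ) {s : Set (Cube d)} (hs : s ⊆ P) :
    ∫⁻ y in ⋃ Q ∈ s, Q.set, ‖b y‖ₑ ≤ κ * volume (⋃ Q ∈ s, Q.set) := by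
  have disj := hb.pairwiseDisjoint.subset hs
  have cnt := hb.countable.mono hs
  have meas : ∀ Q ∈ s, MeasurableSet Q.set := fun Q _ => Q.measurableSet_set
  rw [lintegral_biUnion cnt meas disj, measure_biUnion cnt disj meas, ← ENNReal.tsum_mul_left]
  refine ENNReal.tsum_le_tsum fun Q => ?_
  rw [Cube.volume_set]
  exact hb.setLIntegral_le Q (hs Q.2)

lemma lintegral_indicator_nearCubes_le (hb : IsBadPart P b κ) (R : Cube d) (ξ : Rd d) :
    ∫⁻ y, (⋃ Q ∈ nearCubes P R ξ, Q.set).indicator (fun y => R.vol⁻¹ * ‖b y‖ₑ) y ≤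
      ENNReal.ofReal ((3 * √d) ^ d) * volume (Metric.ball (0 : Rd d) 1) * κ := by
  have near_sub : nearCubes P R ξ ⊆ P := fun Q hQ => hQ.1
  have volume_le : volume (⋃ Q ∈ nearCubes P R ξ, Q.set) ≤
      R.vol * (ENNReal.ofReal ((3 * √d) ^ d) * volume (Metric.ball (0 : Rd d) 1)) := by
    have := R.hl
    calc _ ≤ volume (Metric.closedBall ξ (3 * R.diam)) :=
          measure_mono (iUnion₂_subset fun Q hQ => hQ.2)
      _ = _ := by
          rw [Cube.diam, Measure.addHaar_closedBall _ _ (by positivity), finrank_euclideanSpace_fin,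
            Cube.vol, ← mul_assoc, ← mul_assoc, ← ENNReal.ofReal_mul (by positivity), ← mul_pow]
          congr 3
          ring
  rw [lintegral_indicator (hb.measurableSet_biUnion near_sub),
    lintegral_const_mul _ hb.measurable.enorm]
  calc _ ≤ R.vol⁻¹ * (κ * (R.vol *
          (ENNReal.ofReal ((3 * √d) ^ d) * volume (Metric.ball (0 : Rd d) 1)))) := by
        gcongr
        exact (hb.setLIntegral_biUnion_le near_sub).trans (by gcongr)
    _ = (R.vol⁻¹ * R.vol) *
          (ENNReal.ofReal ((3 * √d) ^ d) * volume (Metric.ball (0 : Rd d) 1) * κ) := by ring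
    _ = _ := by rw [ENNReal.inv_mul_cancel R.vol_pos.ne' R.vol_ne_top, one_mul]

end IsBadPart

lemma IsFarFrom.lt_dist (hfar : IsFarFrom P x) (hx : x ∈ R.set) (hξ : ξ ∈ R.set) (hQ : Q ∈ P)
    (hy : y ∈ Q.set) (hyR : y ∉ R.dilate 3) : 8 * Q.diam < dist ξ y := by
  have h : (1 + √d) * (8 * Q.diam) < (1 + √d) * dist ξ y := by
    linarith [hfar Q hQ y hy, R.dist_le_mul_dist_of_notMem_dilate hx hξ hyR]
  exact lt_of_mul_lt_mul_left h (by positivity)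

lemma mem_nearCubes (hξ : ξ ∈ R.set) (hQ : Q ∈ P) (hQR : ¬Disjoint Q.set (R.dilate 3))
    (hy : y ∈ Q.set) (hfar : 8 * Q.diam < dist ξ y) : Q ∈ nearCubes P R ξ := by
  obtain ⟨z, hzQ, hzR⟩ := not_disjoint_iff.1 hQR
  refine ⟨hQ, fun v hv => ?_⟩
  rw [Metric.mem_closedBall, dist_comm]
  have := dist_nonneg.trans (R.dist_le_diam hξ hξ)
  linarith [R.dist_le_two_mul_diam hξ hzR, Q.dist_le_diam hzQ hy, Q.dist_le_diam hzQ hv,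
    dist_triangle ξ z y, dist_triangle ξ z v]

lemma sizeKernel_le_inv_vol (hξ : ξ ∈ R.set) (hy : y ∉ R.dilate 3) :
    sizeKernel ξ y ≤ R.vol⁻¹ := by
  have := R.hl
  rw [sizeKernel, Cube.vol, ← ENNReal.ofReal_inv_of_pos (by positivity)]
  gcongr
  exact R.l_le_dist_of_notMem_dilate hξ hy

lemma abs_dist_sub_le_of_mem_crossingCubes (hQ : Q ∈ crossingCubes P R (annulus ξ r s))
    (hy : y ∈ Q.set) : |dist ξ y - r| ≤ Q.diam ∨ |dist ξ y - s| ≤ Q.diam := by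
  obtain ⟨-, -, hmeet, hsub⟩ := hQ
  obtain ⟨z, hzQ, hzA⟩ := not_disjoint_iff.1 hmeet
  obtain ⟨w, hwQ, hwA⟩ := not_subset.1 hsub
  have close : ∀ v ∈ Q.set, |dist ξ y - dist ξ v| ≤ Q.diam := fun v hv => by
    rw [dist_comm ξ, dist_comm ξ]
    exact (abs_dist_sub_le y v ξ).trans (Q.dist_le_diam hy hv)
  by_cases hyA : y ∈ annulus ξ r s
  · exact abs_dist_sub_le_of_not_mem_annulus_iff (close w hwQ) fun h => hwA (h.1 hyA)
  · exact abs_dist_sub_le_of_not_mem_annulus_iff (close z hzQ) fun h => hyA (h.2 hzA)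

lemma IsBadPart.setLIntegral_le_of_mem_crossingCubes [NeZero d] (hb : IsBadPart P b κ)
    (hfar : IsFarFrom P x) (hx : x ∈ R.set) (hξ : ξ ∈ R.set)
    (hQ : Q ∈ crossingCubes P R (annulus ξ r s)) :
    ∫⁻ y in Q.set, ‖b y‖ₑ * sizeKernel ξ y * (layerWeight (cubeScale P y) ξ y)⁻¹ ≤
      (2 ^ (d + 1)) ^ 2 * κ * ∫⁻ y in Q.set, sphereWeight r ξ y + sphereWeight s ξ y := by
  have hδ := Q.diam_pos
  have far : ∀ y ∈ Q.set, 8 * Q.diam < dist ξ y := fun y hy =>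
    hfar.lt_dist hx hξ hQ.1 hy (disjoint_left.1 hQ.2.1 hy)
  have comparable : ∀ y ∈ Q.set, ∀ z ∈ Q.set, dist ξ y ≤ 2 * dist ξ z := fun y hy z hz => by
    linarith [dist_triangle ξ z y, Q.dist_le_diam hz hy, far z hz]
  calc _ = ∫⁻ y in Q.set, ‖b y‖ₑ * (sizeKernel ξ y * (layerWeight Q.diam ξ y)⁻¹) := by
        refine setLIntegral_congr_fun Q.measurableSet_set fun y hy => ?_
        simp only [cubeScale_eq hb.pairwiseDisjoint hQ.1 hy, mul_assoc]
    _ ≤ (2 ^ (d + 1)) ^ 2 * κ * ∫⁻ y in Q.set, sizeKernel ξ y * (layerWeight Q.diam ξ y)⁻¹ := by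
        refine setLIntegral_mul_le_of_forall_le_mul Q.measurableSet_set hb.measurable.enorm
          (by finiteness) (fun y hy z hz => ?_) (Q.volume_set ▸ hb.setLIntegral_le Q hQ.1)
        exact sizeKernel_mul_inv_layerWeight_le_mul hδ.le (by linarith [far z hz])
          (comparable z hz y hy) (comparable y hy z hz)
    _ ≤ _ := by
        gcongr (2 ^ (d + 1)) ^ 2 * κ * ?_
        refine setLIntegral_mono' Q.measurableSet_set fun y hy => ?_
        have hy8 := far y hy
        rcases abs_dist_sub_le_of_mem_crossingCubes hQ hy with h | h
        · exact (sizeKernel_mul_inv_layerWeight_le_sphereWeight (by linarith) (by linarith) h).trans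
            le_self_add
        · exact (sizeKernel_mul_inv_layerWeight_le_sphereWeight (by linarith) (by linarith) h).trans
            le_add_self

lemma IsBadPart.setLIntegral_biUnion_crossingCubes_le [NeZero d] (hb : IsBadPart P b κ)
    (hfar : IsFarFrom P x) (hx : x ∈ R.set) (hξ : ξ ∈ R.set) (hr : 0 < r) (hs : 0 < s) :
    ∫⁻ y in ⋃ Q ∈ crossingCubes P R (annulus ξ r s), Q.set,
        ‖b y‖ₑ * sizeKernel ξ y * (layerWeight (cubeScale P y) ξ y)⁻¹ ≤
      (2 ^ (d + 1)) ^ 2 * (2 * sphereMass d) * κ := by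
  have sub : crossingCubes P R (annulus ξ r s) ⊆ P := fun Q hQ => hQ.1
  have cnt := hb.countable.mono sub
  have disj := hb.pairwiseDisjoint.subset sub
  have meas : ∀ Q ∈ crossingCubes P R (annulus ξ r s), MeasurableSet Q.set := fun Q _ =>
    Q.measurableSet_set
  rw [lintegral_biUnion cnt meas disj]
  refine (ENNReal.tsum_le_tsum fun Q =>
    hb.setLIntegral_le_of_mem_crossingCubes hfar hx hξ Q.2).trans ?_
  rw [ENNReal.tsum_mul_left, ← lintegral_biUnion cnt meas disj, mul_right_comm]
  gcongr
  refine (setLIntegral_le_lintegral _ _).trans_eq ?_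
  rw [lintegral_add_left (measurable_sphereWeight _ ξ), lintegral_sphereWeight hr,
    lintegral_sphereWeight hs, two_mul]

end BadPart

namespace CZO

variable {d : ℕ} (S : CZO d) {P : Set (Cube d)} {b : Rd d → ℝ} {κ : ℝ≥0∞} {Q R : Cube d}
  {A : Set (Rd d)} {x ξ y : Rd d} {r s ρ : ℝ}

lemma tailWeight_comm (a : ℝ) (x y : Rd d) : S.tailWeight a x y = S.tailWeight a y x := by
  simp only [tailWeight, radialWeight, sizeKernel, dist_comm]

lemma tailWeight_le_mul_tailWeight {a c : ℝ} (hc : 0 < c) (ha : 0 ≤ a)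
    (h : dist x y ≤ c * dist ξ y) (hlt : c * a < dist x y) :
    S.tailWeight a ξ y ≤ ENNReal.ofReal (c ^ d) * S.tailWeight (c * a) x y := by
  have hx : 0 < dist x y := (by positivity : 0 ≤ c * a).trans_lt hlt
  have hξ : 0 < dist ξ y := pos_of_mul_pos_right (hx.trans_le h) hc.le
  have ratio_le : a / dist ξ y ≤ c * a / dist x y := by
    rw [div_le_div_iff₀ hξ hx]
    nlinarith
  have ratio_lt : c * a / dist x y < 1 := (div_lt_one hx).2 hlt
  rw [S.tailWeight_eq (ratio_le.trans_lt ratio_lt), S.tailWeight_eq ratio_lt, ← mul_assoc]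
  gcongr
  · exact sizeKernel_le_mul_sizeKernel hc.le h hx
  · exact S.modulus_mono ratio_le

/-- The tails of the kernel smoothness against `|b|`, at the scale of the cubes of `P`. The
dilation factor `1 + √d` allows the base point to move within a cube. -/
def badTail (P : Set (Cube d)) (b : Rd d → ℝ) (x : Rd d) : ℝ≥0∞ :=
  ∫⁻ y, ‖b y‖ₑ * S.tailWeight ((1 + √d) * cubeScale P y) x y

/-- The part of the pointwise bound for `K(ξ, ·) b` off `3R` which is integrable, uniformly in the
truncation radii. -/
def badMajorant (P : Set (Cube d)) (b : Rd d → ℝ) (R : Cube d) (x ξ y : Rd d) : ℝ≥0∞ :=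
  (⋃ Q ∈ nearCubes P R ξ, Q.set).indicator (fun y => R.vol⁻¹ * ‖b y‖ₑ) y +
    ENNReal.ofReal ((1 + √d) ^ d) * (‖b y‖ₑ * S.tailWeight ((1 + √d) * cubeScale P y) x y)

lemma lintegral_badMajorant_le (hb : IsBadPart P b κ) (R : Cube d) (x ξ : Rd d) :
    ∫⁻ y, S.badMajorant P b R x ξ y ≤
      ENNReal.ofReal ((3 * √d) ^ d) * volume (Metric.ball (0 : Rd d) 1) * κ +
        ENNReal.ofReal ((1 + √d) ^ d) * S.badTail P b x := by
  have near_sub : nearCubes P R ξ ⊆ P := fun Q hQ => hQ.1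
  unfold badMajorant
  rw [lintegral_add_left ((hb.measurable.enorm.const_mul _).indicator
    (hb.measurableSet_biUnion near_sub)), lintegral_const_mul' _ _ ENNReal.ofReal_ne_top]
  exact add_le_add_left (hb.lintegral_indicator_nearCubes_le R ξ) _

lemma tailWeight_diam_le [NeZero d] (hb : IsBadPart P b κ) (hfar : IsFarFrom P x)
    (hx : x ∈ R.set) (hξ : ξ ∈ R.set) (hQ : Q ∈ P) (hy : y ∈ Q.set) (hyR : y ∉ R.dilate 3) :
    S.tailWeight Q.diam ξ y ≤
      ENNReal.ofReal ((1 + √d) ^ d) * S.tailWeight ((1 + √d) * cubeScale P y) x y := by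
  have hδ := Q.diam_pos
  have hpos : 0 < (1 + √d) * Q.diam := by positivity
  rw [cubeScale_eq hb.pairwiseDisjoint hQ hy]
  exact S.tailWeight_le_mul_tailWeight (by positivity) hδ.le
    (R.dist_le_mul_dist_of_notMem_dilate hx hξ hyR) (by linarith [hfar Q hQ y hy])

lemma sizeKernel_mul_layerWeight_cubeScale_le [NeZero d] (hb : IsBadPart P b κ)
    (hfar : IsFarFrom P x) (hx : x ∈ R.set) (hξ : ξ ∈ R.set) (hQ : Q ∈ P) (hy : y ∈ Q.set)
    (hyR : y ∉ R.dilate 3) :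
    sizeKernel ξ y * layerWeight (cubeScale P y) ξ y ≤
      ENNReal.ofReal ((1 + √d) ^ d) * S.tailWeight ((1 + √d) * cubeScale P y) x y := by
  refine le_trans ?_ (S.tailWeight_diam_le hb hfar hx hξ hQ hy hyR)
  rw [cubeScale_eq hb.pairwiseDisjoint hQ hy]
  exact S.sizeKernel_mul_layerWeight_le_tailWeight Q.diam_pos
    (by linarith [Q.diam_pos, hfar.lt_dist hx hξ hQ hy hyR])

lemma enorm_setIntegral_K_mul_le_of_setIntegral_eq_zero [NeZero d] (hb : Integrable b)
    (hb0 : ∫ y in Q.set, b y = 0) (hfar : ∀ y ∈ Q.set, 2 * Q.diam < dist ξ y) :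
    ‖∫ y in Q.set, S.K ξ y * b y‖ₑ ≤
      ∫⁻ y in Q.set, ENNReal.ofReal S.Cst * (‖b y‖ₑ * S.tailWeight Q.diam ξ y) := by
  have hδ := Q.diam_pos
  have subtract_center : ∫ y in Q.set, S.K ξ y * b y =
      ∫ y in Q.set, (S.K ξ y - S.K ξ (WithLp.toLp 2 Q.c)) * b y := by
    simp only [sub_mul]
    rw [integral_sub ((S.integrableOn_K_mul hb ξ (by positivity)).mono_set hfar)
      (hb.integrableOn.const_mul _), integral_const_mul, hb0, mul_zero, sub_zero]
  rw [subtract_center]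
  refine (enorm_integral_le_lintegral_enorm _).trans
    (setLIntegral_mono' Q.measurableSet_set fun y hy => ?_)
  rw [enorm_mul, mul_comm ‖b y‖ₑ, ← mul_assoc, S.tailWeight_comm]
  gcongr
  exact S.enorm_K_sub_right_le (Q.dist_le_diam hy Q.center_mem) (dist_comm ξ y ▸ hfar y hy)

lemma enorm_setIntegral_inter_le_of_not_disjoint (hfar : IsFarFrom P x) (hx : x ∈ R.set)
    (hξ : ξ ∈ R.set) (hA : MeasurableSet A) (hQ : Q ∈ P) (hQR : ¬Disjoint Q.set (R.dilate 3)) :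
    ‖∫ y in Q.set ∩ A, S.K ξ y * (R.dilate 3)ᶜ.indicator b y‖ₑ ≤
      ∫⁻ y in Q.set ∩ A, ENNReal.ofReal S.Cst * S.badMajorant P b R x ξ y := by
  refine (enorm_integral_le_lintegral_enorm _).trans
    (setLIntegral_mono' (Q.measurableSet_set.inter hA) fun y hy => ?_)
  by_cases hyR : y ∈ R.dilate 3
  · simp [hyR]
  have mem_near : y ∈ ⋃ Q ∈ nearCubes P R ξ, Q.set :=
    mem_biUnion (mem_nearCubes hξ hQ hQR hy.1 (hfar.lt_dist hx hξ hQ hy.1 hyR)) hy.1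
  rw [indicator_of_mem (mem_compl hyR), enorm_mul, badMajorant, indicator_of_mem mem_near]
  calc ‖S.K ξ y‖ₑ * ‖b y‖ₑ ≤ ENNReal.ofReal S.Cst * R.vol⁻¹ * ‖b y‖ₑ := by
        gcongr
        refine (S.enorm_K_le (R.hl.trans_le (R.l_le_dist_of_notMem_dilate hξ hyR))).trans ?_
        gcongr
        exact sizeKernel_le_inv_vol hξ hyR
    _ ≤ _ := by
        rw [mul_assoc]
        gcongr
        exact le_self_add

lemma enorm_setIntegral_le_of_disjoint [NeZero d] (hb : IsBadPart P b κ) (hfar : IsFarFrom P x)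
    (hx : x ∈ R.set) (hξ : ξ ∈ R.set) (hQ : Q ∈ P) (hQR : Disjoint Q.set (R.dilate 3)) :
    ‖∫ y in Q.set, S.K ξ y * b y‖ₑ ≤
      ∫⁻ y in Q.set, ENNReal.ofReal S.Cst * S.badMajorant P b R x ξ y := by
  have hδ := Q.diam_pos
  have off : ∀ y ∈ Q.set, y ∉ R.dilate 3 := fun y hy => disjoint_left.1 hQR hy
  refine (S.enorm_setIntegral_K_mul_le_of_setIntegral_eq_zero hb.integrable
    (hb.setIntegral_eq_zero Q hQ) fun y hy => ?_).trans
      (setLIntegral_mono' Q.measurableSet_set fun y hy => ?_)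
  · linarith [hfar.lt_dist hx hξ hQ hy (off y hy)]
  · rw [badMajorant, mul_left_comm (ENNReal.ofReal ((1 + √d) ^ d))]
    gcongr
    refine le_trans ?_ le_add_self
    gcongr
    exact S.tailWeight_diam_le hb hfar hx hξ hQ hy (off y hy)

lemma enorm_setIntegral_inter_le [NeZero d] (hb : IsBadPart P b κ) (hfar : IsFarFrom P x)
    (hx : x ∈ R.set) (hξ : ξ ∈ R.set) (hA : MeasurableSet A) (hQ : Q ∈ P) :
    ‖∫ y in Q.set ∩ A, S.K ξ y * (R.dilate 3)ᶜ.indicator b y‖ₑ ≤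
      ∫⁻ y in Q.set ∩ A, ENNReal.ofReal S.Cst * (S.badMajorant P b R x ξ y +
        (⋃ Q ∈ crossingCubes P R A, Q.set).indicator (fun y => ‖b y‖ₑ * sizeKernel ξ y) y) := by
  by_cases hQR : Disjoint Q.set (R.dilate 3)
  swap
  · refine (S.enorm_setIntegral_inter_le_of_not_disjoint hfar hx hξ hA hQ hQR).trans ?_
    gcongr
    exact le_self_add
  have off : ∀ y ∈ Q.set, y ∈ (R.dilate 3)ᶜ := fun y hy => disjoint_left.1 hQR hy
  have mQA := Q.measurableSet_set.inter hA
  rw [setIntegral_congr_fun mQA fun y hy => by rw [indicator_of_mem (off y hy.1)]]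
  by_cases hsub : Q.set ⊆ A
  · rw [inter_eq_left.2 hsub]
    refine (S.enorm_setIntegral_le_of_disjoint hb hfar hx hξ hQ hQR).trans ?_
    gcongr
    exact le_self_add
  refine (enorm_integral_le_lintegral_enorm _).trans (setLIntegral_mono' mQA fun y hy => ?_)
  have crossing : Q ∈ crossingCubes P R A := ⟨hQ, hQR, not_disjoint_iff.2 ⟨y, hy⟩, hsub⟩
  have hpos := R.hl.trans_le (R.l_le_dist_of_notMem_dilate hξ (off y hy.1))
  rw [indicator_of_mem (mem_biUnion crossing hy.1), enorm_mul, mul_comm ‖b y‖ₑ]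
  calc ‖S.K ξ y‖ₑ * ‖b y‖ₑ ≤ ENNReal.ofReal S.Cst * sizeKernel ξ y * ‖b y‖ₑ := by
        gcongr
        exact S.enorm_K_le hpos
    _ ≤ _ := by
        rw [mul_assoc]
        gcongr
        exact le_add_self

lemma enorm_setIntegral_annulus_bad_le [NeZero d] (hb : IsBadPart P b κ) (hfar : IsFarFrom P x)
    (hx : x ∈ R.set) (hξ : ξ ∈ R.set) (hr : 0 < r) :
    letI A := annulus ξ r s
    ‖∫ y in A, S.K ξ y * (R.dilate 3)ᶜ.indicator b y‖ₑ ≤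
      ENNReal.ofReal S.Cst * (∫⁻ y in A, S.badMajorant P b R x ξ y) +
        ENNReal.ofReal S.Cst *
          ∫⁻ y in (⋃ Q ∈ crossingCubes P R A, Q.set) ∩ A, ‖b y‖ₑ * sizeKernel ξ y := by
  have := hb.countable.to_subtype
  have mA : MeasurableSet (annulus ξ r s) := measurableSet_annulus _ _ _
  have mZ := hb.measurableSet_biUnion (s := crossingCubes P R (annulus ξ r s)) fun Q hQ => hQ.1
  have meas : Measurable fun y => ‖b y‖ₑ * sizeKernel ξ y :=
    hb.measurable.enorm.mul (measurable_sizeKernel ξ)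
  rw [← mul_add, ← setLIntegral_indicator mZ, ← lintegral_add_right _ (meas.indicator mZ),
    ← lintegral_const_mul' _ _ ENNReal.ofReal_ne_top]
  refine enorm_setIntegral_le_of_forall_inter (s := fun Q : P => (Q : Cube d).set)
    (fun Q => (Q : Cube d).measurableSet_set)
    (fun Q Q' hne => hb.pairwiseDisjoint Q.2 Q'.2 fun h => hne (Subtype.ext h)) mA
    (S.integrableOn_annulus_K_mul (hb.integrable.indicator (R.measurableSet_dilate 3).compl) ξ hr s)
    (fun y hy => ?_) fun Q => S.enorm_setIntegral_inter_le hb hfar hx hξ mA Q.2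
  rw [← biUnion_eq_iUnion P fun Q _ => Q.set] at hy
  rw [indicator_apply_eq_zero.2 fun _ => hb.eq_zero_of_notMem y hy, mul_zero]

lemma sum_setLIntegral_crossingCubes_sq_le [NeZero d] (hb : IsBadPart P b κ)
    (hfar : IsFarFrom P x) (hx : x ∈ R.set) (hξ : ξ ∈ R.set) (N : ℕ) {e : ℕ → ℝ}
    (he : Antitone e) (hpos : ∀ i, 0 < e i) :
    letI A i := annulus ξ (e (i + 1)) (e i)
    ∑ i ∈ Finset.range N, (∫⁻ y in (⋃ Q ∈ crossingCubes P R (A i), Q.set) ∩ A i,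
        ‖b y‖ₑ * sizeKernel ξ y) ^ (2 : ℝ) ≤
      (2 ^ (d + 1)) ^ 2 * (2 * sphereMass d) * κ *
        (ENNReal.ofReal ((1 + √d) ^ d) * S.badTail P b x) := by
  set A : ℕ → Set (Rd d) := fun i => annulus ξ (e (i + 1)) (e i)
  set Z : ℕ → Set (Rd d) := fun i => (⋃ Q ∈ crossingCubes P R (A i), Q.set) ∩ A i
  have mZ : ∀ i, MeasurableSet (Z i) := fun i =>
    (hb.measurableSet_biUnion fun Q hQ => hQ.1).inter (measurableSet_annulus _ _ _)
  have exists_cube : ∀ i, ∀ y ∈ Z i, ∃ Q ∈ P, y ∈ Q.set ∧ y ∉ R.dilate 3 := by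
    rintro i y ⟨hy, -⟩
    obtain ⟨Q, hQ, hyQ⟩ := mem_iUnion₂.1 hy
    exact ⟨Q, hQ.1, hyQ, disjoint_left.1 hQ.2.1 hyQ⟩
  have meas : Measurable fun y => ‖b y‖ₑ * sizeKernel ξ y :=
    hb.measurable.enorm.mul (measurable_sizeKernel ξ)
  refine (sum_setLIntegral_sq_le _ (fun i _ => mZ i)
    (fun i _ j _ hij => (pairwise_disjoint_annulus ξ he hij).mono inter_subset_right
      inter_subset_right) meas
    (measurable_layerWeight (measurable_cubeScale hb.countable) ξ) (fun i _ y hy => ?_)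
    (fun i _ y _ => layerWeight_ne_top _ ξ y) fun i _ =>
      (lintegral_mono_set inter_subset_left).trans
        (hb.setLIntegral_biUnion_crossingCubes_le hfar hx hξ (hpos _) (hpos _))).trans ?_
  · obtain ⟨Q, hQ, hyQ, hyR⟩ := exists_cube i y hy
    rw [cubeScale_eq hb.pairwiseDisjoint hQ hyQ]
    exact layerWeight_ne_zero Q.diam_pos
      (R.hl.trans_le (R.l_le_dist_of_notMem_dilate hξ hyR))
  gcongr
  rw [badTail, ← lintegral_const_mul' _ _ ENNReal.ofReal_ne_top]
  refine (setLIntegral_mono' (Finset.measurableSet_biUnion _ fun i _ => mZ i) fun y hy => ?_).trans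
    (setLIntegral_le_lintegral _ _)
  obtain ⟨i, -, hy⟩ := mem_iUnion₂.1 hy
  obtain ⟨Q, hQ, hyQ, hyR⟩ := exists_cube i y hy
  rw [mul_assoc, mul_left_comm (ENNReal.ofReal _)]
  gcongr ‖b y‖ₑ * ?_
  exact S.sizeKernel_mul_layerWeight_cubeScale_le hb hfar hx hξ hQ hyQ hyR

theorem exists_var_indicator_compl_dilate_le_badTail [NeZero d] (hρ : 2 ≤ ρ) :
    ∃ C : ℝ≥0∞, C ≠ ∞ ∧ ∀ (P : Set (Cube d)) (b : Rd d → ℝ) (κ : ℝ≥0∞), IsBadPart P b κ →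
      ∀ (R : Cube d), ∀ x ∈ R.set, ∀ ξ ∈ R.set, IsFarFrom P x →
        S.var ρ ((R.dilate 3)ᶜ.indicator b) ξ ≤ C * (κ + S.badTail P b x) := by
  have sphereMass_ne_top := sphereMass_ne_top d
  set c₁ := ENNReal.ofReal ((3 * √d) ^ d) * volume (Metric.ball (0 : Rd d) 1)
  set c₂ := ENNReal.ofReal ((1 + √d) ^ d)
  set c₃ : ℝ≥0∞ := (2 ^ (d + 1)) ^ 2 * (2 * sphereMass d)
  have hc₁ : c₁ ≠ ∞ := ENNReal.mul_ne_top ENNReal.ofReal_ne_top measure_ball_lt_top.ne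
  refine ⟨ENNReal.ofReal S.Cst * (c₁ + c₂ + (c₃ + c₂)), by finiteness,
    fun P b κ hb R x hx ξ hξ hfar => ?_⟩
  refine S.var_le_of_forall_partialVar_le (by linarith)
    (hb.integrable.indicator (R.measurableSet_dilate 3).compl) fun N e he hpos _ => ?_
  have sum_majorant : ∑ i ∈ Finset.range N, ∫⁻ y in annulus ξ (e (i + 1)) (e i),
      S.badMajorant P b R x ξ y ≤ c₁ * κ + c₂ * S.badTail P b x := by
    rw [← lintegral_biUnion_finset (fun i _ j _ hij => pairwise_disjoint_annulus ξ he.antitone hij)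
      fun i _ => measurableSet_annulus _ _ _]
    exact (setLIntegral_le_lintegral _ _).trans (S.lintegral_badMajorant_le hb R x ξ)
  have sum_crossing := (ENNReal.rpow_le_rpow (S.sum_setLIntegral_crossingCubes_sq_le hb hfar hx hξ N
    he.antitone hpos) (by norm_num : (0 : ℝ) ≤ 1 / 2)).trans (mul_rpow_half_le_add _ _)
  refine (sum_rpow_rpow_inv_le_add_add _ hρ fun i _ =>
    (S.enorm_setIntegral_annulus_bad_le hb hfar hx hξ (hpos (i + 1))).trans_eq
      (add_zero _).symm).trans ?_
  rw [← Finset.mul_sum, sum_mul_rpow_rpow_inv _ two_pos, ← mul_add,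
    ENNReal.zero_rpow_of_pos (by linarith), Finset.sum_const_zero,
    ENNReal.zero_rpow_of_pos (by positivity), add_zero, mul_assoc]
  gcongr ENNReal.ofReal S.Cst * ?_
  calc _ ≤ c₁ * κ + c₂ * S.badTail P b x + (c₃ * κ + c₂ * S.badTail P b x) :=
        add_le_add sum_majorant sum_crossing
    _ ≤ c₁ * (κ + S.badTail P b x) + c₂ * (κ + S.badTail P b x) +
          (c₃ * (κ + S.badTail P b x) + c₂ * (κ + S.badTail P b x)) := by
        gcongr <;> first | exact le_self_add | exact le_add_self
    _ = _ := by ring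

end CZO

/-! ### The Calderón–Zygmund decomposition -/

section Decomposition

variable {d : ℕ} {P : Set (Cube d)} {Q₀ Q : Cube d} {f : Rd d → ℝ} {κ : ℝ≥0∞} {y : Rd d}

lemma setLIntegral_le_mul_volume_of_isOpen [NeZero d] {φ : Rd d → ℝ≥0∞} {A U : Set (Rd d)}
    (hA : A ⊆ Q₀.set) (hU : IsOpen U) (hAU : A ⊆ U)
    (h : ∀ R, IsDyadicSubcube Q₀ R → (R.set ∩ A).Nonempty → ∫⁻ y in R.set, φ y ≤ κ * R.vol) :
    ∫⁻ y in A, φ y ≤ κ * volume U := by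
  set V : Set (Cube d) := {R ∈ maximalDyadic Q₀ fun R => R.set ⊆ U | (R.set ∩ A).Nonempty}
  have countable : V.Countable := countable_maximalDyadic.mono fun _ hR => hR.1
  have disjoint : V.PairwiseDisjoint Cube.set :=
    pairwiseDisjoint_maximalDyadic.subset fun _ hR => hR.1
  have covers : A ⊆ ⋃ R ∈ V, R.set := by
    intro y hy
    obtain ⟨R, hR, hyR, hRU⟩ := exists_isDyadicSubcube_subset_of_isOpen hU (hAU hy) (hA hy)
    obtain ⟨P, hP, hRP⟩ := exists_mem_maximalDyadic_of_bad (bad := fun R => R.set ⊆ U) hR hRU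
    exact mem_biUnion ⟨hP, y, hRP hyR, hy⟩ (hRP hyR)
  calc ∫⁻ y in A, φ y ≤ ∫⁻ y in ⋃ R ∈ V, R.set, φ y := lintegral_mono_set covers
    _ = ∑' R : V, ∫⁻ y in (R : Cube d).set, φ y :=
        lintegral_biUnion countable (fun R _ => R.measurableSet_set) disjoint _
    _ ≤ ∑' R : V, κ * volume (R : Cube d).set := ENNReal.tsum_le_tsum fun R => by
        rw [Cube.volume_set]
        exact h R R.2.1.1 R.2.2
    _ = κ * volume (⋃ R ∈ V, R.set) := by
        rw [ENNReal.tsum_mul_left,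
          measure_biUnion countable disjoint fun R _ => R.measurableSet_set]
    _ ≤ κ * volume U := by
        gcongr
        exact iUnion₂_subset fun R hR => hR.1.2.1

lemma ae_le_of_forall_setLIntegral_le [NeZero d] {φ : Rd d → ℝ≥0∞} (hφ : Measurable φ)
    (hκ : κ ≠ 0) (hκ' : κ ≠ ∞) {A : Set (Rd d)} (hA : MeasurableSet A) (hAQ : A ⊆ Q₀.set)
    (h : ∀ R, IsDyadicSubcube Q₀ R → (R.set ∩ A).Nonempty → ∫⁻ y in R.set, φ y ≤ κ * R.vol) :
    ∀ᵐ y, y ∈ A → φ y ≤ κ := by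
  set B := A ∩ {y | κ < φ y}
  suffices volume B = 0 by
    filter_upwards [measure_eq_zero_iff_ae_notMem.1 this] with y hy hyA
    exact not_lt.1 fun hlt => hy ⟨hyA, hlt⟩
  by_contra pos
  have finite : volume B ≠ ∞ :=
    measure_ne_top_of_subset (inter_subset_left.trans hAQ) (Q₀.volume_set ▸ Q₀.vol_ne_top)
  have lt_setLIntegral : κ * volume B < ∫⁻ y in B, φ y := by
    rw [← setLIntegral_const]
    exact setLIntegral_strict_mono (hA.inter (measurableSet_lt measurable_const hφ)) pos hφ
      (by rw [setLIntegral_const]; finiteness) (.of_forall fun y hy => hy.2)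
  obtain ⟨U, hBU, hU, lt⟩ := B.exists_isOpen_lt_of_lt _
    ((ENNReal.lt_div_iff_mul_lt (.inl hκ) (.inl hκ')).2 (mul_comm κ _ ▸ lt_setLIntegral))
  rw [ENNReal.lt_div_iff_mul_lt (.inl hκ) (.inl hκ'), mul_comm] at lt
  exact lt.not_ge (setLIntegral_le_mul_volume_of_isOpen (inter_subset_left.trans hAQ) hU hBU
    fun R hR hRB => h R hR (hRB.mono (inter_subset_inter_right _ inter_subset_left)))

/-- The part of `f` on the disjoint cubes `P` that is left when its average is subtracted on each
of them. The sum has at most one nonzero term. -/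
def badPart (P : Set (Cube d)) (f : Rd d → ℝ) (y : Rd d) : ℝ :=
  ∑' Q : P, (Q : Cube d).set.indicator (fun z => f z - ⨍ w in (Q : Cube d).set, f w) y

lemma badPart_eq_sub_average (hP : P.PairwiseDisjoint Cube.set) (hQ : Q ∈ P) (hy : y ∈ Q.set) :
    badPart P f y = f y - ⨍ w in Q.set, f w :=
  tsum_indicator_eq_of_mem hP (fun Q z => f z - ⨍ w in Q.set, f w) hQ hy

lemma badPart_eq_zero (hy : y ∉ ⋃ Q ∈ P, Q.set) : badPart P f y = 0 := by
  rw [badPart, tsum_congr fun Q : P => indicator_of_notMem (fun h => hy (mem_biUnion Q.2 h)) _,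
    tsum_zero]

lemma measurable_badPart (hP : P.Countable) (hf : Measurable f) : Measurable (badPart P f) := by
  have := hP.to_subtype
  exact Measurable.tsum fun Q : P => (hf.sub_const _).indicator (Q : Cube d).measurableSet_set

lemma enorm_average_mul_vol_le (Q : Cube d) (f : Rd d → ℝ) :
    ‖⨍ y in Q.set, f y‖ₑ * Q.vol ≤ ∫⁻ y in Q.set, ‖f y‖ₑ := by
  have vol_ne_top : volume Q.set ≠ ∞ := Q.volume_set ▸ Q.vol_ne_top
  calc ‖⨍ y in Q.set, f y‖ₑ * Q.vol = ‖volume.real Q.set • ⨍ y in Q.set, f y‖ₑ := by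
        rw [enorm_smul, Real.enorm_eq_ofReal measureReal_nonneg,
          ofReal_measureReal vol_ne_top, Q.volume_set, mul_comm]
    _ = ‖∫ y in Q.set, f y‖ₑ := by rw [measure_smul_setAverage f vol_ne_top]
    _ ≤ ∫⁻ y in Q.set, ‖f y‖ₑ := enorm_integral_le_lintegral_enorm _

lemma setLIntegral_badPart_le (hP : P.PairwiseDisjoint Cube.set) (hQ : Q ∈ P) :
    ∫⁻ y in Q.set, ‖badPart P f y‖ₑ ≤ 2 * ∫⁻ y in Q.set, ‖f y‖ₑ := by
  calc ∫⁻ y in Q.set, ‖badPart P f y‖ₑ ≤ ∫⁻ y in Q.set, (‖f y‖ₑ + ‖⨍ w in Q.set, f w‖ₑ) :=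
        setLIntegral_mono' Q.measurableSet_set fun y hy => by
          rw [badPart_eq_sub_average hP hQ hy]
          exact enorm_sub_le
    _ = (∫⁻ y in Q.set, ‖f y‖ₑ) + ‖⨍ w in Q.set, f w‖ₑ * Q.vol := by
        rw [lintegral_add_right _ measurable_const, setLIntegral_const, Q.volume_set]
    _ ≤ 2 * ∫⁻ y in Q.set, ‖f y‖ₑ := by
        rw [two_mul]
        gcongr
        exact enorm_average_mul_vol_le Q f

lemma tsum_setLIntegral_le (hc : P.Countable) (hP : P.PairwiseDisjoint Cube.set)
    (φ : Rd d → ℝ≥0∞) : ∑' Q : P, ∫⁻ y in (Q : Cube d).set, φ y ≤ ∫⁻ y, φ y := by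
  rw [← lintegral_biUnion hc (fun Q _ => Q.measurableSet_set) hP]
  exact setLIntegral_le_lintegral _ _

lemma lintegral_badPart_le (hc : P.Countable) (hP : P.PairwiseDisjoint Cube.set) :
    ∫⁻ y, ‖badPart P f y‖ₑ ≤ 2 * ∫⁻ y, ‖f y‖ₑ := by
  calc ∫⁻ y, ‖badPart P f y‖ₑ = ∫⁻ y in ⋃ Q ∈ P, Q.set, ‖badPart P f y‖ₑ :=
        (setLIntegral_eq_of_support_subset fun y hy => by
          by_contra hmem
          exact hy (by simp only [badPart_eq_zero hmem, enorm_zero])).symm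
    _ = ∑' Q : P, ∫⁻ y in (Q : Cube d).set, ‖badPart P f y‖ₑ :=
        lintegral_biUnion hc (fun Q _ => Q.measurableSet_set) hP _
    _ ≤ ∑' Q : P, 2 * ∫⁻ y in (Q : Cube d).set, ‖f y‖ₑ :=
        ENNReal.tsum_le_tsum fun Q => setLIntegral_badPart_le hP Q.2
    _ ≤ 2 * ∫⁻ y, ‖f y‖ₑ := by
        rw [ENNReal.tsum_mul_left]
        gcongr
        exact tsum_setLIntegral_le hc hP _

lemma integrable_badPart (hc : P.Countable) (hP : P.PairwiseDisjoint Cube.set) (hf : Measurable f)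
    (hfi : Integrable f) : Integrable (badPart P f) :=
  ⟨(measurable_badPart hc hf).aestronglyMeasurable, (lintegral_badPart_le hc hP).trans_lt
    (ENNReal.mul_lt_top (by finiteness) hfi.2)⟩

lemma isBadPart_badPart (hc : P.Countable) (hP : P.PairwiseDisjoint Cube.set) (hf : Measurable f)
    (hfi : Integrable f) (h : ∀ Q ∈ P, ∫⁻ y in Q.set, ‖f y‖ₑ ≤ κ * Q.vol) :
    IsBadPart P (badPart P f) (2 * κ) where
  countable := hc
  pairwiseDisjoint := hP
  measurable := measurable_badPart hc hf
  integrable := integrable_badPart hc hP hf hfi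
  eq_zero_of_notMem _ hy := badPart_eq_zero hy
  setIntegral_eq_zero Q hQ := by
    rw [setIntegral_congr_fun Q.measurableSet_set fun y hy => badPart_eq_sub_average hP hQ hy]
    exact setAverage_sub_setAverage (Q.volume_set ▸ Q.vol_ne_top) f
  setLIntegral_le Q hQ := by
    rw [mul_assoc]
    exact (setLIntegral_badPart_le hP hQ).trans (by gcongr; exact h Q hQ)

/-- The Calderón–Zygmund cubes of `f` in `Q₀` at height `κ`: the maximal dyadic subcubes on which
the average of `|f|` exceeds `κ`. -/
def czCubes (Q₀ : Cube d) (f : Rd d → ℝ) (κ : ℝ≥0∞) : Set (Cube d) :=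
  maximalDyadic Q₀ fun Q => κ * Q.vol < ∫⁻ y in Q.set, ‖f y‖ₑ

lemma countable_czCubes : (czCubes Q₀ f κ).Countable := countable_maximalDyadic

lemma pairwiseDisjoint_czCubes : (czCubes Q₀ f κ).PairwiseDisjoint Cube.set :=
  pairwiseDisjoint_maximalDyadic

lemma mul_tsum_vol_czCubes_le : κ * ∑' Q : czCubes Q₀ f κ, (Q : Cube d).vol ≤ ∫⁻ y, ‖f y‖ₑ := by
  rw [← ENNReal.tsum_mul_left]
  exact (ENNReal.tsum_le_tsum fun Q => Q.2.2.1.le).trans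
    (tsum_setLIntegral_le countable_czCubes pairwiseDisjoint_czCubes _)

lemma setLIntegral_le_of_mem_czCubes (h : ∫⁻ y, ‖f y‖ₑ ≤ κ * Q₀.vol) (hQ : Q ∈ czCubes Q₀ f κ) :
    ∫⁻ y in Q.set, ‖f y‖ₑ ≤ 2 ^ d * κ * Q.vol := by
  obtain ⟨P', -, hP', hQP', vol_eq⟩ :=
    exists_parent_of_mem_maximalDyadic (bad := fun Q => κ * Q.vol < ∫⁻ y in Q.set, ‖f y‖ₑ)
      (not_lt.2 ((setLIntegral_le_lintegral _ _).trans h)) hQ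
  calc ∫⁻ y in Q.set, ‖f y‖ₑ ≤ ∫⁻ y in P'.set, ‖f y‖ₑ := lintegral_mono_set hQP'
    _ ≤ κ * P'.vol := not_lt.1 hP'
    _ = 2 ^ d * κ * Q.vol := by rw [vol_eq]; ring

lemma isBadPart_badPart_czCubes (hf : Measurable f) (hfi : Integrable f)
    (h : ∫⁻ y, ‖f y‖ₑ ≤ κ * Q₀.vol) :
    IsBadPart (czCubes Q₀ f κ) (badPart (czCubes Q₀ f κ) f) (2 * (2 ^ d * κ)) :=
  isBadPart_badPart countable_czCubes pairwiseDisjoint_czCubes hf hfi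
    fun _ hQ => setLIntegral_le_of_mem_czCubes h hQ

lemma ae_enorm_le_of_notMem_czCubes [NeZero d] (hf : Measurable f) (hκ : κ ≠ 0) (hκ' : κ ≠ ∞) :
    ∀ᵐ y, y ∈ Q₀.set \ ⋃ Q ∈ czCubes Q₀ f κ, Q.set → ‖f y‖ₑ ≤ κ := by
  refine ae_le_of_forall_setLIntegral_le hf.enorm hκ hκ' (Q₀.measurableSet_set.diff
    (.biUnion countable_czCubes fun Q _ => Q.measurableSet_set)) sdiff_subset ?_
  rintro R hR ⟨y, hyR, -, hy⟩
  by_contra hbad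
  obtain ⟨Q, hQ, hRQ⟩ := exists_mem_maximalDyadic_of_bad
    (bad := fun Q => κ * Q.vol < ∫⁻ y in Q.set, ‖f y‖ₑ) hR (not_le.1 hbad)
  exact hy (mem_biUnion hQ (hRQ hyR))

lemma ae_enorm_sub_badPart_le [NeZero d] (hf : Measurable f) (hf0 : ∀ y ∉ Q₀.set, f y = 0)
    (hκ : κ ≠ 0) (hκ' : κ ≠ ∞) (h : ∫⁻ y, ‖f y‖ₑ ≤ κ * Q₀.vol) :
    ∀ᵐ y, ‖f y - badPart (czCubes Q₀ f κ) f y‖ₑ ≤ 2 ^ d * κ := by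
  filter_upwards [ae_enorm_le_of_notMem_czCubes (Q₀ := Q₀) hf hκ hκ'] with y hy
  by_cases hmem : y ∈ ⋃ Q ∈ czCubes Q₀ f κ, Q.set
  · obtain ⟨Q, hQ, hyQ⟩ := mem_iUnion₂.1 hmem
    rw [badPart_eq_sub_average pairwiseDisjoint_czCubes hQ hyQ, sub_sub_cancel,
      ← ENNReal.mul_le_mul_iff_left Q.vol_pos.ne' Q.vol_ne_top]
    exact (enorm_average_mul_vol_le Q f).trans (setLIntegral_le_of_mem_czCubes h hQ)
  rw [badPart_eq_zero hmem, sub_zero]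
  by_cases hyQ₀ : y ∈ Q₀.set
  · exact (hy ⟨hyQ₀, hmem⟩).trans (le_mul_of_one_le_left' (one_le_pow₀ one_le_two))
  · simp [hf0 y hyQ₀]

end Decomposition

/-! ### The exceptional set -/

lemma exists_volume_not_isFarFrom_le (d : ℕ) : ∃ c : ℝ≥0∞, c ≠ ∞ ∧
    ∀ P : Set (Cube d), P.Countable →
      volume {x | ¬IsFarFrom P x} ≤ c * ∑' Q : P, (Q : Cube d).vol := by
  set L : ℝ := 8 * ((1 + √d) * √d)
  refine ⟨ENNReal.ofReal ((2 * L + 2) ^ d), ENNReal.ofReal_ne_top, fun P hP => ?_⟩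
  have := hP.to_subtype
  have subset_dilate : {x | ¬IsFarFrom P x} ⊆ ⋃ Q : P, (Q : Cube d).dilate (2 * L + 2) := by
    intro x hx
    obtain ⟨Q, hQ, y, hy, hdist⟩ : ∃ Q ∈ P, ∃ y ∈ Q.set, dist x y ≤ 8 * ((1 + √d) * Q.diam) := by
      simpa [IsFarFrom] using hx
    refine mem_iUnion.2 ⟨⟨Q, hQ⟩, Q.mem_dilate_of_dist_le hy (hdist.trans_eq ?_)⟩
    simp only [L, Cube.diam]
    ring
  calc volume {x | ¬IsFarFrom P x} ≤ ∑' Q : P, volume ((Q : Cube d).dilate (2 * L + 2)) :=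
        (measure_mono subset_dilate).trans (measure_iUnion_le _)
    _ = ENNReal.ofReal ((2 * L + 2) ^ d) * ∑' Q : P, (Q : Cube d).vol := by
        simp_rw [Cube.volume_dilate _ (show 0 ≤ 2 * L + 2 by positivity), ENNReal.tsum_mul_left]

namespace CZO

variable {d : ℕ} (S : CZO d) {ρ q : ℝ} {P : Set (Cube d)} {b g : Rd d → ℝ} {κ : ℝ≥0∞}
  {Q₀ : Cube d} {x : Rd d}

lemma measurable_mul_tailWeight_cubeScale (hb : IsBadPart P b κ) :
    Measurable fun p : Rd d × Rd d =>
      ‖b p.2‖ₑ * S.tailWeight ((1 + √d) * cubeScale P p.2) p.1 p.2 := by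
  have := hb.measurable
  have := measurable_cubeScale hb.countable
  unfold tailWeight radialWeight sizeKernel
  exact .mul (by fun_prop) (.mul (by fun_prop) (S.measurable_modulus_profile.comp (by fun_prop)))

lemma measurable_badTail (hb : IsBadPart P b κ) : Measurable (S.badTail P b) :=
  (S.measurable_mul_tailWeight_cubeScale hb).lintegral_prod_right'

lemma lintegral_badTail [NeZero d] (hb : IsBadPart P b κ) :
    ∫⁻ x, S.badTail P b x = S.tailMass * ∫⁻ y, ‖b y‖ₑ := by
  unfold badTail
  rw [lintegral_lintegral_swap (S.measurable_mul_tailWeight_cubeScale hb).aemeasurable,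
    ← lintegral_const_mul _ hb.measurable.enorm]
  refine lintegral_congr fun y => ?_
  rw [lintegral_const_mul' _ _ enorm_ne_top, mul_comm]
  by_cases hy : y ∈ ⋃ Q ∈ P, Q.set
  · obtain ⟨Q, hQ, hyQ⟩ := mem_iUnion₂.1 hy
    have := Q.diam_pos
    simp_rw [cubeScale_eq hb.pairwiseDisjoint hQ hyQ, S.tailWeight_comm _ _ y]
    rw [S.lintegral_tailWeight (by positivity)]
  · simp only [hb.eq_zero_of_notMem y hy, enorm_zero, mul_zero]

/-- The points where the bad part of the Calderón–Zygmund decomposition of `f` at height `κ` is not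
under control. -/
def badSet (Q₀ : Cube d) (f : Rd d → ℝ) (κ : ℝ≥0∞) : Set (Rd d) :=
  {x | ¬IsFarFrom (czCubes Q₀ f κ) x} ∪
    {x | κ ≤ S.badTail (czCubes Q₀ f κ) (badPart (czCubes Q₀ f κ) f) x}

theorem exists_mul_volume_badSet_le [NeZero d] : ∃ c : ℝ≥0∞, c ≠ ∞ ∧
    ∀ (Q₀ : Cube d) (f : Rd d → ℝ) (κ : ℝ≥0∞), Measurable f → Integrable f →
      ∫⁻ y, ‖f y‖ₑ ≤ κ * Q₀.vol → κ * volume (S.badSet Q₀ f κ) ≤ c * ∫⁻ y, ‖f y‖ₑ := by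
  obtain ⟨c, hc, volume_le⟩ := exists_volume_not_isFarFrom_le d
  have := S.tailMass_ne_top
  refine ⟨c + S.tailMass * 2, by finiteness, fun Q₀ f κ hf hfi h => ?_⟩
  have isBadPart := isBadPart_badPart_czCubes hf hfi h
  have far : κ * volume {x | ¬IsFarFrom (czCubes Q₀ f κ) x} ≤ c * ∫⁻ y, ‖f y‖ₑ := calc
    _ ≤ κ * (c * ∑' Q : czCubes Q₀ f κ, (Q : Cube d).vol) := by
      gcongr
      exact volume_le _ countable_czCubes
    _ = c * (κ * ∑' Q : czCubes Q₀ f κ, (Q : Cube d).vol) := by ring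
    _ ≤ c * ∫⁻ y, ‖f y‖ₑ := by
      gcongr
      exact mul_tsum_vol_czCubes_le
  have tail : κ * volume {x | κ ≤ S.badTail (czCubes Q₀ f κ) (badPart (czCubes Q₀ f κ) f) x} ≤
      S.tailMass * 2 * ∫⁻ y, ‖f y‖ₑ := calc
    _ ≤ ∫⁻ x, S.badTail (czCubes Q₀ f κ) (badPart (czCubes Q₀ f κ) f) x :=
      mul_meas_ge_le_lintegral (S.measurable_badTail isBadPart) _
    _ ≤ S.tailMass * (2 * ∫⁻ y, ‖f y‖ₑ) := by
      rw [S.lintegral_badTail isBadPart]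
      gcongr
      exact lintegral_badPart_le countable_czCubes pairwiseDisjoint_czCubes
    _ = _ := (mul_assoc _ _ _).symm
  rw [add_mul]
  exact (mul_le_mul_right (measure_union_le _ _) κ).trans
    ((mul_add _ _ _).trans_le (add_le_add far tail))

lemma mul_volume_lt_ratVar_le (hρ : 0 < ρ) (hq : 0 < q) {A : ℝ≥0∞}
    (hA : ∫⁻ x, S.var ρ g x ^ q ≤ A * ∫⁻ x, ENNReal.ofReal |g x| ^ q) (hg : Measurable g)
    (hgi : Integrable g) {M : ℝ≥0∞} (hgM : ∀ᵐ y, ‖g y‖ₑ ≤ M) (hg0 : ∀ y ∉ Q₀.set, g y = 0)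
    (t : ℝ≥0∞) :
    t ^ q * volume {x | t < S.ratVar ρ g x} ≤ A * (M ^ q * Q₀.vol) := by
  have lintegral_le : ∫⁻ x, ENNReal.ofReal |g x| ^ q ≤ M ^ q * Q₀.vol := by
    rw [← Q₀.volume_set, ← setLIntegral_const, ← lintegral_indicator Q₀.measurableSet_set]
    refine lintegral_mono_ae (hgM.mono fun y hy => ?_)
    by_cases hyQ : y ∈ Q₀.set
    · rw [indicator_of_mem hyQ, ← Real.enorm_eq_ofReal_abs]
      gcongr
    · simp [hg0 y hyQ, hq]
  calc t ^ q * volume {x | t < S.ratVar ρ g x}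
      ≤ t ^ q * volume {x | t ^ q ≤ S.ratVar ρ g x ^ q} := by
        gcongr with x
        exact fun hlt => ENNReal.rpow_le_rpow hlt.le hq.le
    _ ≤ ∫⁻ x, S.ratVar ρ g x ^ q :=
        mul_meas_ge_le_lintegral ((S.measurable_ratVar hg).pow_const q) _
    _ ≤ ∫⁻ x, S.var ρ g x ^ q := lintegral_mono fun x =>
        ENNReal.rpow_le_rpow (S.ratVar_le_var hρ hgi x) hq.le
    _ ≤ A * (M ^ q * Q₀.vol) := hA.trans (by gcongr)

theorem exists_volume_lt_ratVar_le (hρ : 0 < ρ) (hq : 0 < q) (hbdd : S.VarBdd ρ q) {η : ℝ≥0∞}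
    (hη : η ≠ 0) (hη' : η ≠ ∞) : ∃ B : ℝ≥0∞, B ≠ ∞ ∧ ∀ (Q₀ : Cube d) (g : Rd d → ℝ) (M : ℝ≥0∞),
      Measurable g → Integrable g → (∀ᵐ y, ‖g y‖ₑ ≤ M) → (∀ y ∉ Q₀.set, g y = 0) →
      M ≠ 0 → M ≠ ∞ → volume {x | B * M < S.ratVar ρ g x} ≤ η * Q₀.vol := by
  obtain ⟨A, hA, hbdd⟩ := hbdd
  have hA₀ : ENNReal.ofReal A ≠ 0 := (ENNReal.ofReal_pos.2 hA).ne'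
  refine ⟨(ENNReal.ofReal A / η) ^ (1 / q),
    ENNReal.rpow_ne_top_of_nonneg (by positivity) (ENNReal.div_ne_top ENNReal.ofReal_ne_top hη),
    fun Q₀ g M hg hgi hgM hg0 hM hM' => ?_⟩
  have rpow_eq : ((ENNReal.ofReal A / η) ^ (1 / q) * M) ^ q = ENNReal.ofReal A / η * M ^ q := by
    rw [ENNReal.mul_rpow_of_nonneg _ _ hq.le, ← ENNReal.rpow_mul, one_div_mul_cancel hq.ne',
      ENNReal.rpow_one]
  have chebyshev := S.mul_volume_lt_ratVar_le hρ hq (hbdd g hg) hg hgi hgM hg0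
    ((ENNReal.ofReal A / η) ^ (1 / q) * M)
  have scale_ne_zero : ENNReal.ofReal A / η * M ^ q ≠ 0 :=
    mul_ne_zero (ENNReal.div_ne_zero.2 ⟨hA₀, hη'⟩) (by simp [hM, hM'])
  have scale_ne_top : ENNReal.ofReal A / η * M ^ q ≠ ∞ :=
    ENNReal.mul_ne_top (ENNReal.div_ne_top ENNReal.ofReal_ne_top hη) (by simp [hM, hM'])
  rw [rpow_eq] at chebyshev
  rw [← ENNReal.mul_le_mul_iff_right scale_ne_zero scale_ne_top]
  calc _ ≤ ENNReal.ofReal A * (M ^ q * Q₀.vol) := chebyshev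
    _ = ENNReal.ofReal A / η * η * (M ^ q * Q₀.vol) := by rw [ENNReal.div_mul_cancel hη hη']
    _ = ENNReal.ofReal A / η * M ^ q * (η * Q₀.vol) := by ring

theorem exists_var_indicator_compl_dilate_le_ratVar_sub_badPart_add [NeZero d] (hρ : 2 ≤ ρ) :
    ∃ C : ℝ≥0∞, C ≠ ∞ ∧ ∀ (Q₀ : Cube d) (f : Rd d → ℝ) (κ : ℝ≥0∞), Measurable f → Integrable f →
      (∀ y ∉ Q₀.set, f y = 0) → κ ≠ 0 → κ ≠ ∞ → ∫⁻ y, ‖f y‖ₑ ≤ κ * Q₀.vol →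
      ∀ (R : Cube d), ∀ x ∈ R.set, x ∉ S.badSet Q₀ f κ → ∀ ξ ∈ R.set,
        S.var ρ ((R.dilate 3)ᶜ.indicator f) ξ ≤
          S.ratVar ρ (f - badPart (czCubes Q₀ f κ) f) x + C * κ := by
  obtain ⟨Cg, hCg, good_le⟩ := S.exists_var_indicator_compl_dilate_le_ratVar_add hρ
  obtain ⟨Cb, hCb, bad_le⟩ := S.exists_var_indicator_compl_dilate_le_badTail hρ
  refine ⟨Cg * 2 ^ d + Cb * (2 * 2 ^ d + 1), by finiteness, ?_⟩
  intro Q₀ f κ hf hfi hf0 hκ hκ' h R x hx hxbad ξ hξ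
  set b := badPart (czCubes Q₀ f κ) f
  have isBadPart := isBadPart_badPart_czCubes hf hfi h
  obtain ⟨far, tail⟩ : IsFarFrom (czCubes Q₀ f κ) x ∧ S.badTail (czCubes Q₀ f κ) b x < κ := by
    simpa [badSet] using hxbad
  have good : Integrable (f - b) := hfi.sub isBadPart.integrable
  have measurable_compl := (R.measurableSet_dilate 3).compl
  calc S.var ρ ((R.dilate 3)ᶜ.indicator f) ξ
      = S.var ρ ((R.dilate 3)ᶜ.indicator (f - b) + (R.dilate 3)ᶜ.indicator b) ξ := by
        rw [← indicator_add', sub_add_cancel]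
    _ ≤ S.var ρ ((R.dilate 3)ᶜ.indicator (f - b)) ξ + S.var ρ ((R.dilate 3)ᶜ.indicator b) ξ :=
        S.var_add_le (one_le_two.trans hρ) (good.indicator measurable_compl)
          (isBadPart.integrable.indicator measurable_compl)
    _ ≤ S.ratVar ρ (f - b) x + Cg * (2 ^ d * κ) + Cb * (2 * (2 ^ d * κ) + κ) := by
        gcongr
        · exact good_le _ _ good (ae_enorm_sub_badPart_le hf hf0 hκ hκ' h) R x hx ξ hξ
        · exact (bad_le _ _ _ isBadPart R x hx ξ hξ far).trans (by gcongr)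
    _ = S.ratVar ρ (f - b) x + (Cg * 2 ^ d + Cb * (2 * 2 ^ d + 1)) * κ := by ring

lemma exists_volume_badSet_union_le [NeZero d] (hρ : 2 ≤ ρ) (hq : 0 < q) (hbdd : S.VarBdd ρ q)
    {η : ℝ≥0∞} (hη : η ≠ 0) (hη' : η ≠ ∞) :
    ∃ A B : ℝ≥0∞, 1 ≤ A ∧ A ≠ ∞ ∧ B ≠ ∞ ∧ ∀ (Q₀ : Cube d) (f : Rd d → ℝ) (κ : ℝ≥0∞),
      Measurable f → Integrable f → (∀ y ∉ Q₀.set, f y = 0) → κ ≠ 0 → κ ≠ ∞ →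
      A * ∫⁻ y, ‖f y‖ₑ ≤ κ * Q₀.vol →
      volume (S.badSet Q₀ f κ ∪ {x | B * κ < S.ratVar ρ (f - badPart (czCubes Q₀ f κ) f) x}) ≤
        η * Q₀.vol + η * Q₀.vol := by
  obtain ⟨c, hc, badSet_le⟩ := S.exists_mul_volume_badSet_le
  obtain ⟨B, hB, ratVar_le⟩ := S.exists_volume_lt_ratVar_le (two_pos.trans_le hρ) hq hbdd hη hη'
  refine ⟨1 + c / η, B * 2 ^ d, le_self_add, ?_, by finiteness, ?_⟩
  · exact ENNReal.add_ne_top.2 ⟨ENNReal.one_ne_top, ENNReal.div_ne_top hc hη⟩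
  intro Q₀ f κ hf hfi hf0 hκ hκ' height
  have h : ∫⁻ y, ‖f y‖ₑ ≤ κ * Q₀.vol := (le_mul_of_one_le_left' le_self_add).trans height
  have isBadPart := isBadPart_badPart_czCubes hf hfi h
  refine (measure_union_le _ _).trans (add_le_add ?_ ?_)
  · rw [← ENNReal.mul_le_mul_iff_right hκ hκ']
    calc κ * volume (S.badSet Q₀ f κ) ≤ c * ∫⁻ y, ‖f y‖ₑ := badSet_le Q₀ f κ hf hfi h
      _ = η * (c / η * ∫⁻ y, ‖f y‖ₑ) := by rw [← mul_assoc, ENNReal.mul_div_cancel hη hη']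
      _ ≤ η * ((1 + c / η) * ∫⁻ y, ‖f y‖ₑ) := by
          gcongr
          exact le_add_self
      _ ≤ η * (κ * Q₀.vol) := mul_le_mul_right height η
      _ = κ * (η * Q₀.vol) := mul_left_comm _ _ _
  · rw [mul_assoc]
    refine ratVar_le Q₀ _ _ (hf.sub isBadPart.measurable) (hfi.sub isBadPart.integrable)
      (ae_enorm_sub_badPart_le hf hf0 hκ hκ' h) (fun y hy => ?_)
      (mul_ne_zero (by positivity) hκ) (by finiteness)
    have notMem : y ∉ ⋃ Q ∈ czCubes Q₀ f κ, Q.set := fun hmem =>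
      have ⟨_, hQ, hyQ⟩ := mem_iUnion₂.1 hmem
      hy (hQ.1.subset hyQ)
    rw [Pi.sub_apply, hf0 y hy, badPart_eq_zero notMem, sub_zero]

theorem exists_isOpen_forall_var_indicator_compl_dilate_le [NeZero d] (hρ : 2 ≤ ρ) (hq : 0 < q)
    (hbdd : S.VarBdd ρ q) {δ : ℝ≥0∞} (hδ : δ ≠ 0) (hδ' : δ ≠ ∞) :
    ∃ C : ℝ≥0∞, C ≠ ∞ ∧ ∀ (Q₀ : Cube d) (f : Rd d → ℝ) (lam : ℝ≥0∞), Measurable f →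
      Integrable f → (∀ y ∉ Q₀.set, f y = 0) → lam ≠ ∞ → ∫⁻ y, ‖f y‖ₑ ≤ lam * Q₀.vol →
      ∃ U, IsOpen U ∧ volume U ≤ δ * Q₀.vol ∧ ∀ (R : Cube d), ∀ x ∈ R.set, x ∉ U →
        ∀ ξ ∈ R.set, S.var ρ ((R.dilate 3)ᶜ.indicator f) ξ ≤ C * lam := by
  have hη : δ / 3 ≠ 0 := ENNReal.div_ne_zero.2 ⟨hδ, by finiteness⟩
  have hη' : δ / 3 ≠ ∞ := ENNReal.div_ne_top hδ' (by norm_num)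
  obtain ⟨A, B, one_le_A, hA, hB, volume_le⟩ := S.exists_volume_badSet_union_le hρ hq hbdd hη hη'
  obtain ⟨C, hC, var_le⟩ := S.exists_var_indicator_compl_dilate_le_ratVar_sub_badPart_add hρ
  refine ⟨(B + C) * A, by finiteness, fun Q₀ f lam hf hfi hf0 hlam h => ?_⟩
  rcases eq_or_ne lam 0 with rfl | lam_ne_zero
  · have ae_eq_zero : f =ᵐ[volume] 0 :=
      ((lintegral_eq_zero_iff hf.enorm).1 (by simpa using h)).mono fun y hy => by simpa using hy
    refine ⟨∅, isOpen_empty, by simp, fun R x _ _ ξ _ => ?_⟩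
    rw [S.var_indicator_eq_zero_of_ae_eq_zero (two_pos.trans_le hρ) ae_eq_zero]
    exact zero_le
  have hκ : A * lam ≠ 0 := mul_ne_zero (one_pos.trans_le one_le_A).ne' lam_ne_zero
  have hκ' : A * lam ≠ ∞ := by finiteness
  have height : A * ∫⁻ y, ‖f y‖ₑ ≤ A * lam * Q₀.vol := by rw [mul_assoc]; gcongr
  set E := S.badSet Q₀ f (A * lam) ∪
    {x | B * (A * lam) < S.ratVar ρ (f - badPart (czCubes Q₀ f (A * lam)) f) x}
  obtain ⟨U, hEU, hU, volume_U⟩ := E.exists_isOpen_le_add volume (mul_ne_zero hη Q₀.vol_pos.ne')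
  refine ⟨U, hU, ?_, fun R x hx hxU ξ hξ => ?_⟩
  · calc volume U ≤ δ / 3 * Q₀.vol + δ / 3 * Q₀.vol + δ / 3 * Q₀.vol :=
          volume_U.trans (by gcongr; exact volume_le Q₀ f _ hf hfi hf0 hκ hκ' height)
      _ = δ * Q₀.vol := by rw [← add_mul, ← add_mul, ENNReal.add_thirds]
  · obtain ⟨notMem_badSet, ratVar_le⟩ := not_or.1 fun hxE => hxU (hEU hxE)
    refine (var_le Q₀ f _ hf hfi hf0 hκ hκ' ((le_mul_of_one_le_left' one_le_A).trans height)
      R x hx notMem_badSet ξ hξ).trans ?_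
    rw [mul_assoc, add_mul]
    gcongr
    exact not_lt.1 ratVar_le

end CZO

/-! ### Localization -/

namespace CZO

variable {d : ℕ} (S : CZO d) {ρ : ℝ} {f : Rd d → ℝ} {c : ℝ≥0∞} {x : Rd d} {G : Set (Cube d)}
  {R : Cube d}

-- A variation sum over finitely many radii does not see `f` near `x`.
lemma var_le_of_forall_var_indicator_compl_dilate_le (hρ : 0 < ρ) (hf : Integrable f)
    (h : ∀ R : Cube d, x ∈ R.set → S.var ρ ((R.dilate 3)ᶜ.indicator f) x ≤ c) :
    S.var ρ f x ≤ c := by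
  refine S.var_le_of_forall_partialVar_le hρ hf fun N e hanti hpos hlim => ?_
  have eN_pos := hpos N
  set R : Cube d := ⟨x, e N / (2 * (√d + 1)), by positivity⟩
  have two_diam_le : 2 * R.diam ≤ e N := by
    rw [Cube.diam, ← mul_assoc, ← mul_div_assoc, div_le_iff₀ (by positivity)]
    nlinarith
  have partialVar_eq : S.partialVar ρ N e ((R.dilate 3)ᶜ.indicator f) x =
      S.partialVar ρ N e f x := by
    unfold partialVar
    congr 1
    refine Finset.sum_congr rfl fun i hi => ?_
    congr 2
    refine setIntegral_congr_fun (measurableSet_annulus _ _ _) fun y hy => ?_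
    have le_radius : e N ≤ e (i + 1) := hanti.antitone (Finset.mem_range.1 hi)
    have hyR : y ∈ (R.dilate 3)ᶜ := fun hy3 =>
      (two_diam_le.trans le_radius).not_gt (hy.1.trans_le (R.dist_le_two_mul_diam R.center_mem hy3))
    simp only [indicator_of_mem hyR]
  rw [← partialVar_eq]
  exact (S.partialVar_le_var hρ (hf.indicator (R.measurableSet_dilate 3).compl) N hanti hpos
    hlim).trans (h R R.center_mem)

/-- The sum `Σ_{R ∈ G} V_ρ(T_*(f χ_{3R})) χ_R` of the variations of `f` localized to the cubes
of `G`. -/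
def localVar (ρ : ℝ) (G : Set (Cube d)) (f : Rd d → ℝ) (x : Rd d) : ℝ≥0∞ :=
  ∑' R : G, (R : Cube d).set.indicator (fun _ => S.var ρ (((R : Cube d).dilate 3).indicator f) x) x

lemma localVar_eq_var_indicator (hG : G.PairwiseDisjoint Cube.set) (hR : R ∈ G) (hx : x ∈ R.set) :
    S.localVar ρ G f x = S.var ρ ((R.dilate 3).indicator f) x :=
  tsum_indicator_eq_of_mem hG (fun R _ => S.var ρ ((R.dilate 3).indicator f) x) hR hx

lemma localVar_eq_zero (hx : ∀ R ∈ G, x ∉ R.set) : S.localVar ρ G f x = 0 :=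
  ENNReal.tsum_eq_zero.2 fun R => indicator_of_notMem (hx R R.2) _

lemma var_le_var_indicator_add (hρ : 1 ≤ ρ) (hf : Integrable f) {A : Set (Rd d)}
    (hA : MeasurableSet A) :
    S.var ρ f x ≤ S.var ρ (A.indicator f) x + S.var ρ (Aᶜ.indicator f) x := by
  simpa only [indicator_self_add_compl] using
    S.var_add_le (x := x) hρ (hf.indicator hA) (hf.indicator hA.compl)

lemma var_indicator_le_var_add (hρ : 1 ≤ ρ) (hf : Integrable f) {A : Set (Rd d)}
    (hA : MeasurableSet A) :
    S.var ρ (A.indicator f) x ≤ S.var ρ f x + S.var ρ (Aᶜ.indicator f) x := by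
  rw [← sub_eq_iff_eq_add.2 (indicator_self_add_compl A f).symm]
  exact S.var_sub_le hρ hf (hf.indicator hA.compl)

lemma var_le_localVar_add_and_localVar_le_var_add (hρ : 1 ≤ ρ) (hf : Integrable f)
    {U : Set (Rd d)} (hU : ∀ (R : Cube d), ∀ x ∈ R.set, x ∉ U → ∀ ξ ∈ R.set,
      S.var ρ ((R.dilate 3)ᶜ.indicator f) ξ ≤ c)
    (hG : G.PairwiseDisjoint Cube.set) (hGU : ∀ R ∈ G, ∃ x ∈ R.set, x ∉ U)
    (hxU : x ∈ U → ∃ R ∈ G, x ∈ R.set) :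
    S.var ρ f x ≤ S.localVar ρ G f x + c ∧ S.localVar ρ G f x ≤ S.var ρ f x + c := by
  by_cases hx : ∃ R ∈ G, x ∈ R.set
  · obtain ⟨R, hR, hxR⟩ := hx
    obtain ⟨x', hx'R, hx'U⟩ := hGU R hR
    have tail_le := hU R x' hx'R hx'U x hxR
    rw [S.localVar_eq_var_indicator hG hR hxR]
    exact ⟨(S.var_le_var_indicator_add hρ hf (R.measurableSet_dilate 3)).trans (by gcongr),
      (S.var_indicator_le_var_add hρ hf (R.measurableSet_dilate 3)).trans (by gcongr)⟩
  · rw [S.localVar_eq_zero fun R hR hxR => hx ⟨R, hR, hxR⟩, zero_add]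
    exact ⟨S.var_le_of_forall_var_indicator_compl_dilate_le (one_pos.trans_le hρ) hf
      fun R hR => hU R x hR (fun h => hx (hxU h)) x hR, zero_le⟩

end CZO

/-! ### Stopping cubes -/

section Stopping

variable {d : ℕ} {Q₀ R : Cube d} {U : Set (Rd d)} {G : Set (Cube d)} {x : Rd d}

/-- The maximal dyadic subcubes of `Q₀` which `U` fills to a proportion greater than `2^(-d-1)`.
The parent of a stopping cube `Q` is not one, so `U` cannot contain `Q`. -/
def stoppingCubes (Q₀ : Cube d) (U : Set (Rd d)) : Set (Cube d) :=
  maximalDyadic Q₀ fun R => R.vol < 2 ^ (d + 1) * volume (R.set ∩ U)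

lemma vol_lt_mul_volume_inter_of_subset (h : R.set ⊆ U) :
    R.vol < 2 ^ (d + 1) * volume (R.set ∩ U) := by
  rw [inter_eq_left.2 h, R.volume_set]
  calc R.vol = 1 * R.vol := (one_mul _).symm
    _ < 2 ^ (d + 1) * R.vol := by
        rw [ENNReal.mul_lt_mul_iff_left R.vol_pos.ne' R.vol_ne_top]
        exact_mod_cast Nat.one_lt_two_pow d.succ_ne_zero

lemma pairwiseDisjoint_stoppingCubes : (stoppingCubes Q₀ U).PairwiseDisjoint Cube.set :=
  pairwiseDisjoint_maximalDyadic

lemma tsum_vol_stoppingCubes_le :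
    ∑' Q : stoppingCubes Q₀ U, (Q : Cube d).vol ≤ 2 ^ (d + 1) * volume U := by
  have countable_stoppingCubes : (stoppingCubes Q₀ U).Countable := countable_maximalDyadic
  calc ∑' Q : stoppingCubes Q₀ U, (Q : Cube d).vol
      ≤ ∑' Q : stoppingCubes Q₀ U, 2 ^ (d + 1) * volume.restrict U (Q : Cube d).set :=
        ENNReal.tsum_le_tsum fun Q => by
          rw [Measure.restrict_apply (Q : Cube d).measurableSet_set]
          exact Q.2.2.1.le
    _ = 2 ^ (d + 1) * volume.restrict U (⋃ Q ∈ stoppingCubes Q₀ U, Q.set) := by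
        rw [ENNReal.tsum_mul_left, measure_biUnion countable_stoppingCubes
          pairwiseDisjoint_stoppingCubes fun Q _ => Q.measurableSet_set]
    _ ≤ 2 ^ (d + 1) * volume U := by
        rw [← Measure.restrict_apply_univ U]
        gcongr
        exact subset_univ _

lemma exists_mem_stoppingCubes [NeZero d] (hU : IsOpen U) (hx : x ∈ Q₀.set) (hxU : x ∈ U) :
    ∃ Q ∈ stoppingCubes Q₀ U, x ∈ Q.set := by
  obtain ⟨R, hR, hxR, hRU⟩ := exists_isDyadicSubcube_subset_of_isOpen hU hxU hx
  obtain ⟨Q, hQ, hRQ⟩ := exists_mem_maximalDyadic_of_bad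
    (bad := fun R => R.vol < 2 ^ (d + 1) * volume (R.set ∩ U)) hR
    (vol_lt_mul_volume_inter_of_subset hRU)
  exact ⟨Q, hQ, hRQ hxR⟩

lemma not_subset_of_mem_stoppingCubes (hU : 2 ^ (d + 1) * volume U ≤ Q₀.vol)
    (hR : R ∈ stoppingCubes Q₀ U) : ¬R.set ⊆ U := by
  intro hRU
  obtain ⟨P, -, hP, hRP, vol_eq⟩ := exists_parent_of_mem_maximalDyadic
    (bad := fun R => R.vol < 2 ^ (d + 1) * volume (R.set ∩ U))
    (not_lt.2 (le_trans (by gcongr; exact inter_subset_right) hU)) hR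
  refine hP ?_
  calc P.vol = 2 ^ d * R.vol := vol_eq
    _ < 2 ^ (d + 1) * R.vol := by
        rw [ENNReal.mul_lt_mul_iff_left R.vol_pos.ne' R.vol_ne_top]
        exact_mod_cast Nat.pow_lt_pow_succ one_lt_two
    _ ≤ 2 ^ (d + 1) * volume (P.set ∩ U) := by
        rw [← R.volume_set]
        gcongr
        exact subset_inter hRP hRU

lemma exists_notMem_of_covers_stoppingCubes [NeZero d] (hU : 2 ^ (d + 1) * volume U ≤ Q₀.vol)
    (hG : ∀ R ∈ G, IsDyadicSubcube Q₀ R) (hdisj : G.PairwiseDisjoint Cube.set)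
    (hcov : ∀ Q ∈ stoppingCubes Q₀ U, ∃ R ∈ G, Q.set ⊆ R.set) (hR : R ∈ G) :
    ∃ x ∈ R.set, x ∉ U := by
  refine not_subset.1 fun hRU => ?_
  obtain ⟨Q, hQ, hRQ⟩ := exists_mem_maximalDyadic_of_bad
    (bad := fun R => R.vol < 2 ^ (d + 1) * volume (R.set ∩ U)) (hG R hR)
    (vol_lt_mul_volume_inter_of_subset hRU)
  obtain ⟨R', hR', hQR'⟩ := hcov Q hQ
  obtain rfl : R = R' := hdisj.elim_set hR hR' _ R.center_mem (hQR' (hRQ R.center_mem))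
  obtain rfl : R = Q := (hG R hR).eq_of_subset_of_l_eq hQ.1
    ((Cube.l_le_of_set_subset hRQ).antisymm (Cube.l_le_of_set_subset hQR')) hRQ
  exact not_subset_of_mem_stoppingCubes hU hQ hRU

end Stopping

/-! ### Sparse domination -/

section SparseDomination

variable {d : ℕ} {Q₀ : Cube d} {f : Rd d → ℝ}

lemma avg3_nonneg : 0 ≤ avg3 Q₀ f :=
  div_nonneg (integral_nonneg fun _ => abs_nonneg _) (pow_nonneg (by linarith [Q₀.hl]) d)

lemma lintegral_enorm_eq_avg3_mul_vol (hf : Integrable f) (hf0 : ∀ x ∉ Q₀.set, f x = 0) :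
    ∫⁻ y, ‖f y‖ₑ = ENNReal.ofReal (3 ^ d * avg3 Q₀ f) * Q₀.vol := by
  have := Q₀.hl
  have set_subset : Q₀.set ⊆ Q₀.dilate 3 := fun y hy i => by constructor <;> linarith [hy i]
  have setIntegral_eq : ∫ y in Q₀.dilate 3, |f y| = ∫ y, |f y| :=
    setIntegral_eq_integral_of_forall_compl_eq_zero fun y hy => by
      rw [hf0 y fun h => hy (set_subset h), abs_zero]
  have avg3_eq : 3 ^ d * avg3 Q₀ f * Q₀.l ^ d = ∫ y, |f y| := by
    rw [avg3, setIntegral_eq, mul_pow]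
    field_simp
  rw [Cube.vol, ← ENNReal.ofReal_mul (mul_nonneg (by positivity) avg3_nonneg), avg3_eq,
    ← ofReal_integral_norm_eq_lintegral_enorm hf]
  rfl

lemma integrable_of_forall_abs_le {M : ℝ} (hf : Measurable f) (hM : ∀ x, |f x| ≤ M)
    (hf0 : ∀ x ∉ Q₀.set, f x = 0) : Integrable f := by
  rw [← integrableOn_iff_integrable_of_support_subset (s := Q₀.set)
    fun x hx => by_contra fun hxQ => hx (hf0 x hxQ)]
  exact Measure.integrableOn_of_bounded (Q₀.volume_set ▸ Q₀.vol_ne_top) hf.aestronglyMeasurable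
    (.of_forall hM)

theorem variation_sparse_domination_general [NeZero d] (S : CZO d) {ρ q ε : ℝ} (hρ : 2 ≤ ρ)
    (hq : 0 < q) (hbdd : S.VarBdd ρ q) (hε : 0 < ε) :
    ∃ C : ℝ, 0 < C ∧ ∀ (Q₀ : Cube d) (f : Rd d → ℝ), Measurable f → Integrable f →
      (∀ x ∉ Q₀.set, f x = 0) →
      ∃ F : Set (Cube d), (∀ Q ∈ F, IsDyadicSubcube Q₀ Q) ∧ F.PairwiseDisjoint Cube.set ∧
        ∑' Q : F, (Q : Cube d).vol ≤ ENNReal.ofReal ε * Q₀.vol ∧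
        ∀ G : Set (Cube d), (∀ R ∈ G, IsDyadicSubcube Q₀ R) → G.PairwiseDisjoint Cube.set →
          (∀ Q ∈ F, ∃ R ∈ G, Q.set ⊆ R.set) → ∀ x ∈ Q₀.set,
            S.var ρ f x ≤ S.localVar ρ G f x + ENNReal.ofReal (C * avg3 Q₀ f) ∧
            S.localVar ρ G f x ≤ S.var ρ f x + ENNReal.ofReal (C * avg3 Q₀ f) := by
  set δ : ℝ≥0∞ := min (ENNReal.ofReal ε) 1 / 2 ^ (d + 1)
  have hδ : δ ≠ 0 := ENNReal.div_ne_zero.2 ⟨by simp [hε], by finiteness⟩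
  have hδ' : δ ≠ ∞ := ENNReal.div_ne_top (by simp) (by positivity)
  have mul_δ : 2 ^ (d + 1) * δ = min (ENNReal.ofReal ε) 1 :=
    ENNReal.mul_div_cancel (by positivity) (by finiteness)
  obtain ⟨C, hC, exists_U⟩ :=
    S.exists_isOpen_forall_var_indicator_compl_dilate_le hρ hq hbdd hδ hδ'
  refine ⟨(C.toReal + 1) * 3 ^ d, by positivity, fun Q₀ f hf hfi hf0 => ?_⟩
  obtain ⟨U, hU, volume_U, tail_le⟩ := exists_U Q₀ f _ hf hfi hf0 ENNReal.ofReal_ne_top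
    (lintegral_enorm_eq_avg3_mul_vol hfi hf0).le
  have mul_volume_U : 2 ^ (d + 1) * volume U ≤ min (ENNReal.ofReal ε) 1 * Q₀.vol := by
    rw [← mul_δ, mul_assoc]
    gcongr
  have constant_le : C * ENNReal.ofReal (3 ^ d * avg3 Q₀ f) ≤
      ENNReal.ofReal ((C.toReal + 1) * 3 ^ d * avg3 Q₀ f) := by
    rw [mul_assoc, ENNReal.ofReal_mul (p := C.toReal + 1) (by positivity)]
    gcongr
    exact (ENNReal.le_ofReal_iff_toReal_le hC (by positivity)).2 (by linarith)
  refine ⟨stoppingCubes Q₀ U, fun Q hQ => hQ.1, pairwiseDisjoint_stoppingCubes,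
    tsum_vol_stoppingCubes_le.trans (mul_volume_U.trans (by gcongr; exact min_le_left _ _)),
    fun G hG hdisj hcov x hx => ?_⟩
  refine S.var_le_localVar_add_and_localVar_le_var_add (one_le_two.trans hρ) hfi
    (fun R x hx hxU ξ hξ => (tail_le R x hx hxU ξ hξ).trans constant_le) hdisj
    (fun R hR => exists_notMem_of_covers_stoppingCubes
      (mul_volume_U.trans (mul_le_of_le_one_left' (min_le_right _ _))) hG hdisj hcov hR)
    fun hxU => ?_
  obtain ⟨Q, hQ, hxQ⟩ := exists_mem_stoppingCubes hU hx hxU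
  obtain ⟨R, hR, hQR⟩ := hcov Q hQ
  exact ⟨R, hR, hQR hxQ⟩

end SparseDomination

/-- Sparse domination of the variation operator: for `f ∈ L^∞` supported in
a cube `Q₀` there is a family `F` of pairwise disjoint dyadic subcubes of `Q₀` of total
measure at most `ε|Q₀|` such that `V_ρ(T_* f)` is dominated, up to `C⟨|f|⟩_{3Q₀}`, by
`Σ_{Q∈F} V_ρ(T_*(fχ_{3Q})) χ_Q`, and similarly for any disjoint dyadic cover of `F`. -/
theorem variation_sparse_domination
    (d : ℕ) (hd : 0 < d) (S : CZO d) (ρ q : ℝ) (hρ : 2 < ρ) (hq : 1 < q)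
    (hbdd : S.VarBdd ρ q) (ε : ℝ) (hε0 : 0 < ε) (hε1 : ε < 1) :
    ∃ C : ℝ, 0 < C ∧ ∀ (Q₀ : Cube d) (f : Rd d → ℝ), Measurable f →
      (∃ M : ℝ, ∀ x, |f x| ≤ M) → (∀ x, x ∉ Q₀.set → f x = 0) →
      ∃ F : Set (Cube d), (∀ Q ∈ F, IsDyadicSubcube Q₀ Q) ∧
        F.PairwiseDisjoint Cube.set ∧
        (∑' Q : F, (Q : Cube d).vol) ≤ ENNReal.ofReal ε * Q₀.vol ∧
        (∀ᵐ x ∂(volume : Measure (Rd d)), x ∈ Q₀.set →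
          (S.var ρ f x ≤
              (∑' Q : F, Set.indicator (Q : Cube d).set
                (fun _ => S.var ρ (((Q : Cube d).dilate 3).indicator f) x) x) +
                ENNReal.ofReal (C * avg3 Q₀ f)) ∧
          ((∑' Q : F, Set.indicator (Q : Cube d).set
                (fun _ => S.var ρ (((Q : Cube d).dilate 3).indicator f) x) x) ≤
              S.var ρ f x + ENNReal.ofReal (C * avg3 Q₀ f))) ∧
        (∀ G : Set (Cube d), (∀ R ∈ G, IsDyadicSubcube Q₀ R) →
          G.PairwiseDisjoint Cube.set →
          (∀ Q ∈ F, ∃ R ∈ G, (Q : Cube d).set ⊆ (R : Cube d).set) →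
          ∀ᵐ x ∂(volume : Measure (Rd d)), x ∈ Q₀.set →
            (S.var ρ f x ≤
                (∑' R : G, Set.indicator (R : Cube d).set
                  (fun _ => S.var ρ (((R : Cube d).dilate 3).indicator f) x) x) +
                  ENNReal.ofReal (C * avg3 Q₀ f)) ∧
            ((∑' R : G, Set.indicator (R : Cube d).set
                  (fun _ => S.var ρ (((R : Cube d).dilate 3).indicator f) x) x) ≤
                S.var ρ f x + ENNReal.ofReal (C * avg3 Q₀ f))) := by
  have : NeZero d := ⟨hd.ne'⟩
  obtain ⟨C, hC, h⟩ := variation_sparse_domination_general S hρ.le (one_pos.trans hq) hbdd hε0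
  refine ⟨C, hC, fun Q₀ f hf ⟨_, hM⟩ hf0 => ?_⟩
  obtain ⟨F, dyadic, disjoint, vol_le, bound⟩ :=
    h Q₀ f hf (integrable_of_forall_abs_le hf hM hf0) hf0
  exact ⟨F, dyadic, disjoint, vol_le,
    .of_forall (bound F dyadic disjoint fun Q hQ => ⟨Q, hQ, Subset.rfl⟩),
    fun G hG hG' hcov => .of_forall (bound G hG hG' hcov)⟩
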